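/- arXiv:2207.06575 — 4 statements merged into one kernel-verified Lean document; each statement's English description precedes it below -/
import Mathlib

section
/- Let p be a prime with p ≠ 3, and let F be a finite extension of ℚ_p that contains a primitive cube root of unity. Then the number ν(F,S₃) of Galois extensions of F (inside a fixed algebraic closure of F) whose Galois group is isomorphic to the symmetric group S₃ equals 0. -/
/-- `nu F G` is the number of intermediate fields `K` of a fixed algebraic closure of `F`
such that `K/F` is a finite Galois extension with Galois group isomorphic to `G`. -/
noncomputable def nu (F : Type*) [Field F] (G : Type*) [Group G] : ℕ :=
  Nat.card {K : IntermediateField F (AlgebraicClosure F) //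
    FiniteDimensional F K ∧ IsGalois F K ∧ Nonempty ((K ≃ₐ[F] K) ≃* G)}

/-!
Let `K / F` be a finite extension of nonarchimedean local fields and let `τ`, `σ` be automorphisms
of it with `τ σ = σ τ ^ (m + 1)`, where `m` is coprime to the order `n` of `τ`, `n` is nonzero in
the residue field and `F` contains a primitive `n`-th root of unity `ζ` (in `S₃`: a `3`-cycle, a
transposition and `m = 1`). Then `τ = 1`. To see this, let `E` be the fixed field of `τ`.

* If `u` is a unit of `E`, then `σ u / u` is an `n`-th power: if `q` is the size of the residue
  field, the residue of `u ^ ((q - 1) / n)` is a power of that of `ζ`, so it is fixed by `σ`. Hence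
  `σ u / u` is an `n`-th power in the residue field, and Hensel's lemma lifts the root.
* By Kummer theory there is `α ≠ 0` with `τ α = ζ α`. Then `a = α ^ n` and `c = σ α / α ^ (m + 1)`
  lie in `E`, and `σ a = a ^ (m + 1) c ^ n`. As `σ` preserves the norm, `a ^ m c ^ n` is a unit, and
  applying the previous point to it shows that `a ^ (m ^ 2)` is an `n`-th power in `E`. By
  coprimality so is `a`, hence `α ∈ E` and `ζ = 1`.
-/

open IsLocalRing

section Cyclic

variable {G : Type*} [CommGroup G] [IsCyclic G] [Finite G]

lemma exists_pow_eq_of_pow_card_div_eq_one {n : ℕ} (hn : n ∣ Nat.card G) {x : G}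
    (hx : x ^ (Nat.card G / n) = 1) : ∃ y, y ^ n = x := by
  have hle : (powMonoidHom n : G →* G).range ≤ (powMonoidHom (Nat.card G / n)).ker := by
    rintro _ ⟨y, rfl⟩
    simp [MonoidHom.mem_ker, ← pow_mul, Nat.mul_div_cancel' hn]
  have heq := Subgroup.eq_of_le_of_card_ge hle (by
    rw [IsCyclic.card_powMonoidHom_ker, IsCyclic.card_powMonoidHom_range,
      Nat.gcd_eq_right hn, Nat.gcd_eq_right (Nat.div_dvd_of_dvd hn)])
  exact heq.ge hx

end Cyclic

section Compact

variable {R : Type*} [CommRing R] [TopologicalSpace R] [IsTopologicalRing R] [CompactSpace R]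
  [T2Space R] [IsLocalRing R] [IsNoetherianRing R]

variable (R) in
lemma isAdicComplete_maximalIdeal_of_compactSpace : IsAdicComplete (maximalIdeal R) R where
  prec' f hf := by
    let S (i : ℕ) : Set R := {x | f i - x ∈ maximalIdeal R ^ i}
    have hS (i) : IsClosed (S i) :=
      (IsNoetherianRing.isClosed_ideal (maximalIdeal R ^ i)).preimage (by fun_prop)
    have hanti (i) : S (i + 1) ⊆ S i := fun x hx => by
      have hstep : f i - f (i + 1) ∈ maximalIdeal R ^ i := by
        simpa using SModEq.sub_mem.1 (hf i.le_succ)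
      simpa [S] using add_mem hstep (Ideal.pow_le_pow_right i.le_succ hx)
    obtain ⟨x, hx⟩ := (hS 0).isCompact.nonempty_iInter_of_sequence_nonempty_isCompact_isClosed S
      hanti (fun i => ⟨f i, by simp [S]⟩) hS
    exact ⟨x, fun i => by simpa [S, SModEq.sub_mem] using Set.mem_iInter.1 hx i⟩

variable (R) in
lemma henselianLocalRing_of_compactSpace : HenselianLocalRing R where
  is_henselian f hf a h₁ h₂ :=
    have := isAdicComplete_maximalIdeal_of_compactSpace R
    HenselianRing.is_henselian f hf a h₁ (h₂.map _)

end Compact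

open Polynomial in
lemma exists_pow_eq_of_residue_pow_eq {R : Type*} [CommRing R] [HenselianLocalRing R] {n : ℕ}
    (hn : IsUnit (n : R)) {u : R} (hu : IsUnit u) {v : ResidueField R}
    (hv : v ^ n = residue R u) : ∃ y, y ^ n = u := by
  have hn0 : n ≠ 0 := by rintro rfl; simp at hn
  obtain ⟨v, rfl⟩ := residue_surjective v
  have hv' : IsUnit v := by
    rw [← isUnit_map_iff (residue R), ← isUnit_pow_iff hn0, hv]
    exact hu.map _
  obtain ⟨y, hy, -⟩ := HenselianLocalRing.is_henselian (X ^ n - C u) (monic_X_pow_sub_C u hn0) v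
    (by rw [← residue_eq_zero_iff]; simp [hv]) (by simpa [derivative_X_pow, hn] using hv'.pow _)
  exact ⟨y, by simpa [sub_eq_zero] using hy⟩

open Polynomial in
lemma isPrimitiveRoot_residue {R : Type*} [CommRing R] [IsLocalRing R] {n : ℕ}
    (hn : IsUnit (n : R)) {ζ : R} (hζ : IsPrimitiveRoot ζ n) :
    IsPrimitiveRoot (residue R ζ) n where
  pow_eq_one := by rw [← map_pow, hζ.pow_eq_one, map_one]
  dvd_of_pow_eq_one l hl := by
    refine hζ.dvd_of_pow_eq_one l (Eq.symm ?_)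
    refine eq_of_eval_eq_zero_of_not_isUnit_sub (f := X ^ n - 1) (by simp) ?_ ?_
      (by simpa [derivative_X_pow])
    · simp [pow_right_comm ζ l n, hζ.pow_eq_one]
    · rw [← isUnit_map_iff (residue R)]
      simp [hl]

lemma exists_pow_eq_map_div_self {R : Type*} [CommRing R] [HenselianLocalRing R]
    [Finite (ResidueField R)] {n : ℕ} (hn : IsUnit (n : R)) {ζ : R} (hζ : IsPrimitiveRoot ζ n)
    (σ : R →+* R) [IsLocalHom σ] (hσ : σ ζ = ζ) (u : Rˣ) :
    ∃ y : R, y ^ n = ↑(Units.map (σ : R →* R) u / u) := by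
  let k := ResidueField R
  let N := Nat.card kˣ
  have hζk : IsPrimitiveRoot (residue R ζ) n := isPrimitiveRoot_residue hn hζ
  have : NeZero n := ⟨by rintro rfl; simp at hn⟩
  have hnN : n ∣ N := by
    obtain ⟨w, hw⟩ := hζk.isUnit NeZero.out
    rw [← hw, IsPrimitiveRoot.coe_units_iff] at hζk
    exact hζk.eq_orderOf ▸ orderOf_dvd_natCard w
  let ρ : Rˣ →* kˣ := Units.map (residue R)
  have hχ : ρ (Units.map (σ : R →* R) u) ^ (N / n) = ρ u ^ (N / n) := by
    have hroot : (residue R u ^ (N / n)) ^ n = 1 := by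
      rw [← pow_mul, Nat.div_mul_cancel hnN]
      exact congrArg Units.val (pow_card_eq_one' (x := ρ u))
    obtain ⟨i, -, hi⟩ := hζk.eq_pow_of_pow_eq_one hroot
    ext
    calc residue R (σ u) ^ (N / n) = ResidueField.map σ (residue R u ^ (N / n)) := by simp
      _ = residue R u ^ (N / n) := by rw [← hi]; simp [hσ]
  obtain ⟨v, hv⟩ := exists_pow_eq_of_pow_card_div_eq_one hnN
    (x := ρ (Units.map (σ : R →* R) u / u)) (by rw [map_div, div_pow, hχ, div_self'])
  exact exists_pow_eq_of_residue_pow_eq hn (Units.isUnit _) (congrArg Units.val hv)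

open scoped NormedField Valued

section Normed

variable {E : Type*} [NontriviallyNormedField E] [IsUltrametricDist E] [ProperSpace E]

instance : CompactSpace 𝒪[E] := by
  have : (𝒪[E] : Set E) = Metric.closedBall 0 1 := by
    ext x
    simp [Valued.integer.mem_iff]
  exact isCompact_iff_compactSpace.1 (this ▸ isCompact_closedBall 0 1)

instance : IsPrincipalIdealRing 𝒪[E] := Valued.integer.isPrincipalIdealRing_of_compactSpace

instance : HenselianLocalRing 𝒪[E] := henselianLocalRing_of_compactSpace 𝒪[E]

lemma exists_apply_eq_mul_pow_of_norm_eq_one {n : ℕ} (hn : ‖(n : E)‖ = 1) {ζ : E}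
    (hζ : IsPrimitiveRoot ζ n) {σ : E →+* E} (hσ : ∀ x, ‖σ x‖ = ‖x‖) (hσζ : σ ζ = ζ) {u : E}
    (hu : ‖u‖ = 1) : ∃ y, σ u = u * y ^ n := by
  let σ₀ : 𝒪[E] →+* 𝒪[E] := σ.restrict 𝒪[E] 𝒪[E] fun x hx => by
    rwa [Valued.integer.mem_iff, hσ, ← Valued.integer.mem_iff]
  have hσ₀ (x : 𝒪[E]) : (σ₀ x : E) = σ x := rfl
  have : IsLocalHom σ₀ := ⟨fun x hx => by
    simpa [Valued.integer.isUnit_iff_norm_eq_one, hσ₀, hσ] using hx⟩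
  obtain ⟨v, rfl⟩ : ∃ v : 𝒪[E]ˣ, (v : E) = u := by
    have hu' : u ∈ 𝒪[E] := Valued.integer.mem_iff.2 hu.le
    obtain ⟨v, hv⟩ : IsUnit (⟨u, hu'⟩ : 𝒪[E]) := Valued.integer.isUnit_iff_norm_eq_one.2 hu
    exact ⟨v, congrArg Subtype.val hv⟩
  have hn' : IsUnit (n : 𝒪[E]) := Valued.integer.isUnit_iff_norm_eq_one.2 hn
  have : NeZero n := ⟨by rintro rfl; simp at hn⟩
  have hζ₀ : ζ ∈ 𝒪[E] := Valued.integer.mem_iff.2 (hζ.isOfFinOrder NeZero.out).norm_eq_one.le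
  have hζ' : IsPrimitiveRoot (⟨ζ, hζ₀⟩ : 𝒪[E]) n :=
    hζ.of_map_of_injective (f := (𝒪[E]).subtype) Subtype.val_injective
  obtain ⟨y, hy⟩ := exists_pow_eq_map_div_self hn' hζ' σ₀ (Subtype.ext hσζ) v
  refine ⟨y, ?_⟩
  rw [div_eq_inv_mul, Units.val_mul, Units.eq_inv_mul_iff_mul_eq] at hy
  exact congrArg Subtype.val hy.symm

lemma mem_range_pow_of_apply_eq_pow_mul_pow {n : ℕ} (hn : ‖(n : E)‖ = 1) {ζ : E}
    (hζ : IsPrimitiveRoot ζ n) {σ : E →+* E} (hσ : ∀ x, ‖σ x‖ = ‖x‖) (hσζ : σ ζ = ζ) {m : ℕ}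
    (hmn : m.Coprime n) {a c : E} (ha : a ≠ 0) (hac : σ a = a ^ (m + 1) * c ^ n) :
    a ∈ Set.range (· ^ n : E → E) := by
  have hc : c ^ n ≠ 0 := right_ne_zero_of_mul (hac ▸ (map_ne_zero σ).2 ha)
  have hunit : ‖a ^ m * c ^ n‖ = 1 := by
    refine mul_left_cancel₀ (norm_ne_zero_iff.2 ha) ?_
    rw [← norm_mul, ← mul_assoc, ← pow_succ', ← hac, hσ, mul_one]
  obtain ⟨y, hy⟩ := exists_apply_eq_mul_pow_of_norm_eq_one hn hζ hσ hσζ hunit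
  rw [← pow_mem_range_pow_of_coprime (hmn.mul_left hmn)]
  have hn0 : n ≠ 0 := by rintro rfl; simp at hn
  have hc0 : c ≠ 0 := (pow_ne_zero_iff hn0).1 hc
  have hσc : σ c ≠ 0 := (map_ne_zero σ).2 hc0
  refine ⟨y * c / (c ^ m * σ c), ?_⟩
  have hcross : a ^ m * (a ^ (m * m) * (c ^ m * σ c) ^ n) = a ^ m * (y * c) ^ n := by
    rw [map_mul, map_pow, map_pow, hac] at hy
    linear_combination hy
  refine (div_pow _ _ n).trans ((div_eq_iff ?_).2 ?_)
  · exact pow_ne_zero n (mul_ne_zero (pow_ne_zero m hc0) hσc)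
  · exact (mul_left_cancel₀ (pow_ne_zero m ha) hcross).symm

end Normed

section Spectral

variable {k E : Type*} [NontriviallyNormedField k] [IsUltrametricDist k] [ProperSpace k] [Field E]
  [Algebra k E] [FiniteDimensional k E]

lemma mem_range_pow_of_algHom_apply_eq_pow_mul_pow {n : ℕ} (hn : ‖(n : k)‖ = 1) {ζ : E}
    (hζ : IsPrimitiveRoot ζ n) {σ : E →ₐ[k] E} (hσζ : σ ζ = ζ) {m : ℕ} (hmn : m.Coprime n)
    {a c : E} (ha : a ≠ 0) (hac : σ a = a ^ (m + 1) * c ^ n) :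
    a ∈ Set.range (· ^ n : E → E) := by
  let : NontriviallyNormedField E := spectralNorm.nontriviallyNormedField k E
  let : NormedSpace k E := spectralNorm.normedSpace k E
  have : IsUltrametricDist E := IsUltrametricDist.isUltrametricDist_of_isNonarchimedean_norm
    (isNonarchimedean_spectralNorm (K := k) (L := E))
  have : ProperSpace E := FiniteDimensional.proper k E
  have hnE : ‖(n : E)‖ = 1 := by
    rw [← map_natCast (algebraMap k E)]
    exact (spectralNorm_extends (n : k)).trans hn
  have hσ (x : E) : ‖(σ : E →+* E) x‖ = ‖x‖ :=
    congrArg spectralValue (minpoly.algHom_eq σ σ.injective x)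
  exact mem_range_pow_of_apply_eq_pow_mul_pow hnE hζ hσ hσζ hmn ha hac

end Spectral

section Kummer

variable {F K : Type*} [Field F] [Field K] [Algebra F K]

lemma exists_ne_zero_apply_eq_smul_of_pow_orderOf_eq_one [FiniteDimensional F K]
    (τ : K ≃ₐ[F] K) {ζ : F} (hζ : ζ ^ orderOf τ = 1) : ∃ α : K, α ≠ 0 ∧ τ α = ζ • α := by
  have hroot : (minpoly F τ.toLinearMap).IsRoot ζ := by
    simp [minpoly_algEquiv_toLinearMap τ (isOfFinOrder_of_finite τ), hζ]
  obtain ⟨α, hα⟩ := (Module.End.hasEigenvalue_of_isRoot hroot).exists_hasEigenvector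
  exact ⟨α, hα.2, hα.apply_eq_smul⟩

lemma mem_of_pow_eq_coe_pow {n : ℕ} [NeZero n] {ζ : F} (hζ : IsPrimitiveRoot ζ n)
    {E : IntermediateField F K} {x : K} {y : E} (h : x ^ n = (y : K) ^ n) : x ∈ E := by
  rcases eq_or_ne y 0 with rfl | hy
  · have hx : x = 0 := by simpa [zero_pow (NeZero.ne n), NeZero.ne n] using h
    exact hx ▸ E.zero_mem
  · have hy' : (y : K) ≠ 0 := by simpa using hy
    obtain ⟨i, -, hi⟩ := (hζ.map_of_injective (algebraMap F K).injective).eq_pow_of_pow_eq_one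
      (ξ := x / y) (by rw [div_pow, h, div_self (pow_ne_zero n hy')])
    rw [← div_mul_cancel₀ x hy', ← hi]
    exact mul_mem (pow_mem (E.algebraMap_mem ζ) i) y.2

lemma mem_fixedField_zpowers_iff {τ : K ≃ₐ[F] K} {x : K} :
    x ∈ IntermediateField.fixedField (Subgroup.zpowers τ) ↔ τ x = x := by
  rw [IntermediateField.mem_fixedField_iff]
  exact ⟨fun h => h τ (Subgroup.mem_zpowers τ), fun h f hf =>
    (Subgroup.zpowers_le (H := MulAction.stabilizer (K ≃ₐ[F] K) x)).2 h hf⟩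

lemma pow_apply_eq_pow_smul {τ : K ≃ₐ[F] K} {ζ : F} {α : K} (hα : τ α = ζ • α) (i : ℕ) :
    (τ ^ i) α = ζ ^ i • α := by
  induction i with
  | zero => simp
  | succ i ih => rw [pow_succ, AlgEquiv.mul_apply, hα, map_smul, ih, smul_smul, pow_succ']

lemma apply_div_pow_mem_fixedField_zpowers {τ σ : K ≃ₐ[F] K} {m : ℕ} (hτσ : τ * σ = σ * τ ^ m)
    {ζ : F} (hζ : ζ ≠ 0) {α : K} (hα : τ α = ζ • α) :
    σ α / α ^ m ∈ IntermediateField.fixedField (Subgroup.zpowers τ) := by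
  have hσα : τ (σ α) = ζ ^ m • σ α := by
    rw [← AlgEquiv.mul_apply, hτσ, AlgEquiv.mul_apply, pow_apply_eq_pow_smul hα, map_smul]
  rw [mem_fixedField_zpowers_iff, map_div₀, map_pow, hσα, hα, smul_pow, Algebra.smul_def,
    Algebra.smul_def, mul_div_mul_left]
  simpa using pow_ne_zero m hζ

lemma apply_mem_fixedField_zpowers {τ σ : K ≃ₐ[F] K} {m : ℕ} (hτσ : τ * σ = σ * τ ^ m) {x : K}
    (hx : x ∈ IntermediateField.fixedField (Subgroup.zpowers τ)) :
    σ x ∈ IntermediateField.fixedField (Subgroup.zpowers τ) := by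
  rw [mem_fixedField_zpowers_iff] at hx ⊢
  have hpow := pow_apply_eq_pow_smul (ζ := (1 : F)) (hx.trans (one_smul F x).symm) m
  rw [← AlgEquiv.mul_apply, hτσ, AlgEquiv.mul_apply, hpow, one_pow, one_smul]

end Kummer

section Local

variable {k F K : Type*} [NontriviallyNormedField k] [IsUltrametricDist k] [ProperSpace k]
  [Field F] [Field K] [Algebra k F] [Algebra F K] [Algebra k K] [IsScalarTower k F K]
  [FiniteDimensional k F] [FiniteDimensional F K]

variable (k) in
lemma mem_of_algEquiv_apply_eq_pow_mul_pow {n : ℕ} (hn : ‖(n : k)‖ = 1) {ζ : F}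
    (hζ : IsPrimitiveRoot ζ n) {E : IntermediateField F K} {σ : K ≃ₐ[F] K}
    (hσ : ∀ x ∈ E, σ x ∈ E) {m : ℕ} (hmn : m.Coprime n) {α c : K} (hα : α ≠ 0)
    (hαE : α ^ n ∈ E) (hc : c ∈ E) (hαc : σ α = α ^ (m + 1) * c) : α ∈ E := by
  have : NeZero n := ⟨by rintro rfl; simp at hn⟩
  have : FiniteDimensional k E := FiniteDimensional.trans k F E
  let σE : E →ₐ[F] E :=
    ((σ : K →ₐ[F] K).comp E.val).codRestrict E.toSubalgebra fun x => hσ x x.2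
  have hσE : σE ⟨α ^ n, hαE⟩ = ⟨α ^ n, hαE⟩ ^ (m + 1) * ⟨c, hc⟩ ^ n := Subtype.ext <|
    calc σ (α ^ n) = (α ^ (m + 1) * c) ^ n := by rw [map_pow, hαc]
      _ = (α ^ n) ^ (m + 1) * c ^ n := by rw [mul_pow, pow_right_comm]
  obtain ⟨y, hy⟩ := mem_range_pow_of_algHom_apply_eq_pow_mul_pow hn
    (hζ.map_of_injective (algebraMap F E).injective) (σ := σE.restrictScalars k)
    (σE.commutes ζ) hmn (fun h => pow_ne_zero n hα (congrArg Subtype.val h)) hσE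
  exact mem_of_pow_eq_coe_pow hζ (congrArg Subtype.val hy).symm

variable (k) in
lemma orderOf_eq_one_of_mul_eq_mul_pow {τ σ : K ≃ₐ[F] K} {m : ℕ} (hτσ : τ * σ = σ * τ ^ (m + 1))
    (hm : m.Coprime (orderOf τ)) (hn : ‖(orderOf τ : k)‖ = 1) {ζ : F}
    (hζ : IsPrimitiveRoot ζ (orderOf τ)) : orderOf τ = 1 := by
  obtain ⟨α, hα0, hα⟩ := exists_ne_zero_apply_eq_smul_of_pow_orderOf_eq_one τ hζ.pow_eq_one
  have hζ0 : ζ ≠ 0 := hζ.ne_zero (orderOf_pos τ).ne'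
  have hαn : α ^ orderOf τ ∈ IntermediateField.fixedField (Subgroup.zpowers τ) := by
    rw [mem_fixedField_zpowers_iff, map_pow, hα, smul_pow, hζ.pow_eq_one, one_smul]
  have hαE := mem_of_algEquiv_apply_eq_pow_mul_pow k hn hζ
    (fun _ => apply_mem_fixedField_zpowers hτσ) hm hα0 hαn
    (apply_div_pow_mem_fixedField_zpowers hτσ hζ0 hα) (mul_div_cancel₀ _ (pow_ne_zero _ hα0)).symm
  rw [mem_fixedField_zpowers_iff, hα] at hαE
  have hζ1 : ζ = 1 := smul_left_injective F hα0 (hαE.trans (one_smul F α).symm)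
  rw [hζ.eq_orderOf, hζ1, orderOf_one]

end Local

theorem stmt0_general (k : Type*) [NontriviallyNormedField k] [IsUltrametricDist k] [ProperSpace k]
    (F : Type*) [Field F] [Algebra k F] [FiniteDimensional k F] {G : Type*} [Group G] {r s : G}
    {m n : ℕ} (hr : orderOf r = n) (hn1 : n ≠ 1) (hrs : r * s = s * r ^ (m + 1))
    (hmn : m.Coprime n) (hn : ‖(n : k)‖ = 1) (hζ : ∃ ζ : F, IsPrimitiveRoot ζ n) :
    nu F G = 0 := by
  obtain ⟨ζ, hζ⟩ := hζ
  have : IsEmpty {K : IntermediateField F (AlgebraicClosure F) //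
      FiniteDimensional F K ∧ IsGalois F K ∧ Nonempty ((K ≃ₐ[F] K) ≃* G)} := by
    refine ⟨fun ⟨K, _, _, ⟨e⟩⟩ => hn1 ?_⟩
    obtain rfl : orderOf (e.symm r) = n := (e.symm.orderOf_eq r).trans hr
    exact orderOf_eq_one_of_mul_eq_mul_pow k (σ := e.symm s)
      (by rw [← map_mul, hrs, map_mul, map_pow]) hmn hn hζ
  exact Nat.card_of_isEmpty

lemma orderOf_finRotate_three : orderOf (finRotate 3) = 3 :=
  orderOf_eq_prime (by decide) (by decide)

lemma finRotate_three_mul_swap :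
    finRotate 3 * Equiv.swap 0 1 = Equiv.swap 0 1 * finRotate 3 ^ (1 + 1) := by
  decide

theorem stmt0 (p : ℕ) [Fact p.Prime] (hp : p ≠ 3)
    (F : Type*) [Field F] [Algebra ℚ_[p] F] [FiniteDimensional ℚ_[p] F]
    (hμ3 : ∃ ζ : F, IsPrimitiveRoot ζ 3) :
    nu F (Equiv.Perm (Fin 3)) = 0 := by
  have h3 := Padic.norm_natCast_eq_one_iff.2 ((Nat.coprime_primes Fact.out Nat.prime_three).2 hp)
  exact stmt0_general ℚ_[p] F orderOf_finRotate_three (by decide) finRotate_three_mul_swap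
    (Nat.coprime_one_left 3) h3 hμ3
end

section
/- Let p be a prime with p ≠ 3, and let F be a finite extension of ℚ_p that does not contain a primitive cube root of unity. Then the number ν(F,S₃) of Galois extensions of F (inside a fixed algebraic closure of F) whose Galois group is isomorphic to the symmetric group S₃ equals 1. -/
/-!
An `S₃`-extension `K` of `F` contains a cubic subfield `E` that is not normal over `F`. A root of
unity of `E` generates a normal subextension, hence lies in `F`; since every nonzero residue class
of `E` contains a root of unity (Teichmüller), `E` and `F` have the same residue field. So the
value group grows, and `E` contains an element whose cube has the norm of a uniformizer `ϖ` of `F`.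
The two differ by a unit of `E`, which is a cube by Hensel's lemma: `3` is a unit, and `E` contains
no primitive cube root of unity `ζ`, as `[F(ζ) : F] = 2` does not divide `3`. Hence `ϖ` is a cube
in `E`, and `K`, being normal, contains the splitting field of `X ^ 3 - ϖ`. That splitting field
does not depend on `K` and has group `S₃` itself, so comparing degrees gives uniqueness, and it is
also the one extension that exists.
-/

open Polynomial IntermediateField Module

section Henselian

open IsLocalRing

variable {O : Type*} [CommRing O] [IsLocalRing O] [HenselianRing O (maximalIdeal O)] {n : ℕ}

theorem exists_pow_eq_of_residue_pow_eq_s1 (hn : IsUnit (n : O)) (u : Oˣ) (x : (ResidueField O)ˣ)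
    (hx : x ^ n = Units.map (residue O).toMonoidHom u) :
    ∃ w : Oˣ, w ^ n = u ∧ Units.map (residue O).toMonoidHom w = x := by
  have hn0 : n ≠ 0 := by
    rintro rfl
    simp at hn
  obtain ⟨y, rfl⟩ := surjective_units_map_of_local_ringHom (residue O) residue_surjective
    inferInstance x
  have hroot : (X ^ n - C (u : O)).eval (y : O) ∈ maximalIdeal O := by
    have := congrArg Units.val hx
    rw [← residue_eq_zero_iff, eval_sub, eval_pow, eval_X, eval_C, map_sub, map_pow, sub_eq_zero]
    exact this
  have hderiv : IsUnit ((X ^ n - C (u : O)).derivative.eval (y : O)) := by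
    simpa [derivative_X_pow] using hn.mul (y.isUnit.pow (n - 1))
  obtain ⟨w, hw, hwy⟩ := HenselianRing.is_henselian _ (monic_X_pow_sub_C _ hn0) _ hroot
    (hderiv.map _)
  have hwu : w ^ n = u := by simpa [sub_eq_zero] using hw
  refine ⟨((isUnit_pow_iff hn0).1 (hwu ▸ u.isUnit)).unit, Units.ext hwu, Units.ext ?_⟩
  rw [← residue_eq_zero_iff, map_sub, sub_eq_zero] at hwy
  exact hwy

theorem pow_surjective_units [Finite (ResidueField O)] (hn : IsUnit (n : O))
    (hμ : ∀ w : Oˣ, w ^ n = 1 → w = 1) : Function.Surjective fun u : Oˣ ↦ u ^ n := by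
  have hinj : Function.Injective (powMonoidHom n : (ResidueField O)ˣ →* (ResidueField O)ˣ) := by
    refine (injective_iff_map_eq_one _).2 fun x hx ↦ ?_
    obtain ⟨w, hw, rfl⟩ := exists_pow_eq_of_residue_pow_eq_s1 hn 1 x (hx.trans (map_one _).symm)
    rw [hμ w hw, map_one]
  intro u
  obtain ⟨x, hx⟩ := Finite.surjective_of_injective hinj (Units.map (residue O).toMonoidHom u)
  obtain ⟨w, hw, -⟩ := exists_pow_eq_of_residue_pow_eq_s1 hn u x hx
  exact ⟨w, hw⟩

theorem exists_pow_card_sub_one_eq_one_of_residueField [Finite (ResidueField O)]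
    (x : (ResidueField O)ˣ) : ∃ w : Oˣ, w ^ (Nat.card (ResidueField O) - 1) = 1 ∧
      Units.map (residue O).toMonoidHom w = x := by
  have : Fintype (ResidueField O) := Fintype.ofFinite _
  refine exists_pow_eq_of_residue_pow_eq_s1 ?_ 1 x ?_
  · rw [← residue_ne_zero_iff_isUnit, map_natCast, Nat.card_eq_fintype_card,
      Nat.cast_sub Fintype.card_pos, Nat.cast_card_eq_zero]
    simp
  · rw [map_one, Nat.card_eq_fintype_card, Units.ext_iff, Units.val_pow_eq_pow_val,
      FiniteField.pow_card_sub_one_eq_one _ x.ne_zero, Units.val_one]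

end Henselian

section Uniformizer

variable {K : Type*} [NormedField K]

/-- A uniformizer of a discretely valued field, described through the norm: it generates the
value group and has norm smaller than `1`. -/
structure IsUniformizer (ϖ : K) : Prop where
  ne_zero : ϖ ≠ 0
  norm_lt_one : ‖ϖ‖ < 1
  exists_norm_eq_zpow : ∀ x : K, x ≠ 0 → ∃ k : ℤ, ‖x‖ = ‖ϖ‖ ^ k

theorem IsUniformizer.pow_ne {ϖ : K} (hϖ : IsUniformizer ϖ) {n : ℕ} (hn : 1 < n) (c : K) :
    c ^ n ≠ ϖ := by
  rintro rfl
  have hc : c ≠ 0 := (pow_ne_zero_iff (by omega)).1 hϖ.ne_zero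
  obtain ⟨k, hk⟩ := hϖ.exists_norm_eq_zpow c hc
  have hpow : ‖c ^ n‖ ^ (k * n) = ‖c ^ n‖ ^ (1 : ℤ) := by
    rw [zpow_mul, ← hk, zpow_natCast, zpow_one, norm_pow]
  have hkn := zpow_right_injective₀ (norm_pos_iff.2 hϖ.ne_zero) hϖ.norm_lt_one.ne hpow
  have := Int.eq_one_or_neg_one_of_mul_eq_one' hkn
  omega

end Uniformizer

section LocalField

open scoped Valued NormedField
open Valued.integer

variable (K : Type*) [NontriviallyNormedField K] [IsUltrametricDist K] [LocallyCompactSpace K]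

theorem compactSpace_integer : CompactSpace 𝒪[K] := by
  have : ProperSpace K := .of_locallyCompactSpace K
  have hball : ((𝒪[K] : Subring K) : Set K) = Metric.closedBall 0 1 := by
    ext x
    simp [Valued.integer.mem_iff]
  exact isCompact_iff_compactSpace.1 (hball ▸ isCompact_closedBall 0 1)

theorem isDiscreteValuationRing_integer : IsDiscreteValuationRing 𝒪[K] := by
  have := compactSpace_integer K
  have : (Valued.v : Valuation K NNReal).IsNontrivial :=
    inferInstanceAs (NormedField.valuation (K := K)).IsNontrivial
  exact isDiscreteValuationRing_of_compactSpace

theorem isAdic_maximalIdeal_integer : IsAdic 𝓂[K] := by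
  have := compactSpace_integer K
  have := isDiscreteValuationRing_integer K
  obtain ⟨ϖ, hϖ⟩ := IsDiscreteValuationRing.exists_irreducible 𝒪[K]
  refine isAdic_iff.2 ⟨IsLocalRing.isOpen_maximalIdeal_pow 𝒪[K], fun s hs ↦ ?_⟩
  obtain ⟨ε, hε, hεs⟩ := Metric.nhds_basis_closedBall.mem_iff.1 hs
  obtain ⟨n, hn⟩ := exists_pow_lt_of_lt_one hε (norm_irreducible_lt_one hϖ)
  refine ⟨n, subset_trans ?_ hεs⟩
  rw [hϖ.maximalIdeal_pow_eq_closedBall_pow]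
  exact Metric.closedBall_subset_closedBall hn.le

theorem henselianRing_integer : HenselianRing 𝒪[K] 𝓂[K] := by
  have := compactSpace_integer K
  have : IsAdicComplete 𝓂[K] 𝒪[K] :=
    (isAdic_maximalIdeal_integer K).isAdicComplete_iff.2 ⟨inferInstance, inferInstance⟩
  infer_instance

theorem exists_isUniformizer : ∃ ϖ : K, IsUniformizer ϖ := by
  have := isDiscreteValuationRing_integer K
  obtain ⟨ϖ, hϖ⟩ := IsDiscreteValuationRing.exists_irreducible 𝒪[K]
  have hint : ∀ x : K, x ≠ 0 → ‖x‖ ≤ 1 → ∃ n : ℕ, ‖x‖ = ‖(ϖ : K)‖ ^ n := by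
    intro x hx0 hx1
    obtain ⟨n, u, hu⟩ := IsDiscreteValuationRing.eq_unit_mul_pow_irreducible
      (x := (⟨x, mem_iff.2 hx1⟩ : 𝒪[K])) (Subtype.coe_ne_coe.1 hx0) hϖ
    refine ⟨n, ?_⟩
    rw [show x = u * (ϖ : K) ^ n from congrArg Subtype.val hu, norm_mul, norm_coe_unit, one_mul,
      norm_pow]
  refine ⟨ϖ, norm_pos_iff.1 (norm_irreducible_pos hϖ), norm_irreducible_lt_one hϖ, fun x hx ↦ ?_⟩
  rcases le_total ‖x‖ 1 with hx1 | hx1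
  · obtain ⟨n, hn⟩ := hint x hx hx1
    exact ⟨n, by simpa using hn⟩
  · obtain ⟨n, hn⟩ := hint x⁻¹ (inv_ne_zero hx) (by simpa using inv_le_one_of_one_le₀ hx1)
    exact ⟨-n, by simp [← hn]⟩

variable {K}

theorem exists_pow_eq_of_norm_eq_one {n : ℕ} (hn : ‖(n : K)‖ = 1)
    (hμ : ∀ z : K, z ^ n = 1 → z = 1) {x : K} (hx : ‖x‖ = 1) : ∃ w : K, w ^ n = x := by
  have := compactSpace_integer K
  have := isDiscreteValuationRing_integer K
  have := henselianRing_integer K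
  lift x to 𝒪[K] using mem_iff.2 hx.le
  have hu : IsUnit x := isUnit_iff_norm_eq_one.2 hx
  have hinj : Function.Injective fun u : 𝒪[K]ˣ ↦ ((u : 𝒪[K]) : K) :=
    Subtype.val_injective.comp Units.val_injective
  obtain ⟨w, hw⟩ := pow_surjective_units (n := n) (isUnit_iff_norm_eq_one.2 hn)
    (fun w hw ↦ hinj (hμ w (congrArg (fun u : 𝒪[K]ˣ ↦ ((u : 𝒪[K]) : K)) hw))) hu.unit
  exact ⟨w, congrArg (fun u : 𝒪[K]ˣ ↦ ((u : 𝒪[K]) : K)) hw⟩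

theorem exists_isOfFinOrder_norm_sub_lt_one {x : K} (hx : ‖x‖ = 1) :
    ∃ ω : K, IsOfFinOrder ω ∧ ‖x - ω‖ < 1 := by
  have := compactSpace_integer K
  have := isDiscreteValuationRing_integer K
  have := henselianRing_integer K
  lift x to 𝒪[K] using mem_iff.2 hx.le
  have hu : IsUnit x := isUnit_iff_norm_eq_one.2 hx
  obtain ⟨w, hw, hwu⟩ := exists_pow_card_sub_one_eq_one_of_residueField
    (Units.map (IsLocalRing.residue 𝒪[K]).toMonoidHom hu.unit)
  refine ⟨w, isOfFinOrder_iff_pow_eq_one.2 ⟨_, Nat.sub_pos_of_lt Finite.one_lt_card,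
    congrArg (fun u : 𝒪[K]ˣ ↦ ((u : 𝒪[K]) : K)) hw⟩, ?_⟩
  have hmem : x - w ∈ 𝓂[K] := by
    rw [← IsLocalRing.residue_eq_zero_iff, map_sub, sub_eq_zero]
    exact (congrArg Units.val hwu).symm
  rw [IsLocalRing.mem_maximalIdeal, mem_nonunits_iff, isUnit_iff_norm_eq_one] at hmem
  exact lt_of_le_of_ne (norm_le_one (x - w : 𝒪[K])) hmem

end LocalField

section Extension

variable {F E : Type*} [NontriviallyNormedField F] [NontriviallyNormedField E] [NormedAlgebra F E]

/- A best approximation `y` in `F` to an element `x` outside `F` could be improved: scale `x - y` to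
norm `1` and approximate it modulo the maximal ideal. -/
theorem surjective_algebraMap_of_immediate [CompleteSpace F] [LocallyCompactSpace E]
    (hval : ∀ x : E, x ≠ 0 → ∃ c : F, ‖c‖ = ‖x‖)
    (hres : ∀ x : E, ‖x‖ = 1 → ∃ z : F, ‖x - algebraMap F E z‖ < 1) :
    Function.Surjective (algebraMap F E) := by
  have : ProperSpace E := .of_locallyCompactSpace E
  have hclosed : IsClosed (Set.range (algebraMap F E)) :=
    (algebraMap_isometry F E).isClosedEmbedding.isClosed_range
  intro x
  obtain ⟨_, ⟨y, rfl⟩, hy⟩ := hclosed.exists_infDist_eq_dist (Set.range_nonempty _) x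
  by_contra hx
  have hxy : x - algebraMap F E y ≠ 0 := fun h ↦ hx ⟨y, (sub_eq_zero.1 h).symm⟩
  obtain ⟨c, hc⟩ := hval _ hxy
  have hc' : ‖algebraMap F E c‖ = ‖x - algebraMap F E y‖ := by rw [norm_algebraMap', hc]
  have hc0 : algebraMap F E c ≠ 0 := norm_ne_zero_iff.1 (hc' ▸ norm_ne_zero_iff.2 hxy)
  obtain ⟨z, hz⟩ := hres ((x - algebraMap F E y) / algebraMap F E c)
    (by rw [norm_div, hc', div_self (norm_ne_zero_iff.2 hxy)])
  have hcloser : dist x (algebraMap F E (y + c * z)) < dist x (algebraMap F E y) :=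
    calc dist x (algebraMap F E (y + c * z))
        = ‖algebraMap F E c * ((x - algebraMap F E y) / algebraMap F E c - algebraMap F E z)‖ := by
          rw [mul_sub, mul_div_cancel₀ _ hc0, map_add, map_mul, dist_eq_norm, sub_sub]
      _ < ‖algebraMap F E c‖ := by
          rw [norm_mul]
          exact mul_lt_of_lt_one_right (norm_pos_iff.2 hc0) hz
      _ = dist x (algebraMap F E y) := by rw [hc', dist_eq_norm]
  exact (hy ▸ Metric.infDist_le_dist_of_mem (Set.mem_range_self (y + c * z))).not_gt hcloser

theorem exists_norm_eq_norm_pow_finrank [IsUltrametricDist F] [CompleteSpace F]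
    [FiniteDimensional F E] (x : E) : ∃ c : F, ‖c‖ = ‖x‖ ^ finrank F E := by
  obtain ⟨k, hk⟩ := minpoly.degree_dvd (K := F) (Algebra.IsIntegral.isIntegral x)
  have hdeg : (minpoly F x).natDegree ≠ 0 :=
    (minpoly.natDegree_pos (Algebra.IsIntegral.isIntegral x)).ne'
  refine ⟨(minpoly F x).coeff 0 ^ k, ?_⟩
  rw [norm_pow, hk, pow_mul, NormedAlgebra.norm_eq_spectralNorm F x,
    spectralNorm.spectralNorm_eq_norm_coeff_zero_rpow,
    one_div, Real.rpow_inv_natCast_pow (norm_nonneg _) hdeg]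

end Extension

section RootsOfUnity

variable {F E : Type*} [Field F] [Field E] [Algebra F E]

theorem normal_adjoin_of_isPrimitiveRoot [Algebra.IsIntegral F E] {ζ : E} {n : ℕ} [NeZero n]
    (hζ : IsPrimitiveRoot ζ n) : Normal F F⟮ζ⟯ := by
  have := hζ.intermediateField_adjoin_isCyclotomicExtension F
  have := IsCyclotomicExtension.isGalois {n} F F⟮ζ⟯
  infer_instance

theorem mem_range_algebraMap_of_isOfFinOrder
    (hprime : (finrank F E).Prime) (hE : ¬ Normal F E) {ω : E} (hω : IsOfFinOrder ω) :
    ω ∈ (algebraMap F E).range := by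
  have : FiniteDimensional F E := .of_finrank_pos hprime.pos
  have := isSimpleOrder_of_finrank_prime F E hprime
  have : NeZero (orderOf ω) := ⟨hω.orderOf_pos.ne'⟩
  rcases eq_bot_or_eq_top F⟮ω⟯ with h | h
  · exact mem_bot.1 (h ▸ mem_adjoin_simple_self F ω)
  · have := normal_adjoin_of_isPrimitiveRoot (F := F) (.orderOf ω)
    rw [h] at this
    exact absurd (Normal.of_algEquiv topEquiv) hE

end RootsOfUnity

section NonNormalPrimeDegree

variable {F E : Type*} [NontriviallyNormedField F] [LocallyCompactSpace F]
  [NontriviallyNormedField E] [IsUltrametricDist E] [LocallyCompactSpace E] [NormedAlgebra F E]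

theorem exists_norm_ne_of_not_normal (hprime : (finrank F E).Prime)
    (hE : ¬ Normal F E) : ∃ x : E, x ≠ 0 ∧ ∀ c : F, ‖c‖ ≠ ‖x‖ := by
  by_contra! hval
  have : ProperSpace F := .of_locallyCompactSpace F
  have hres : ∀ x : E, ‖x‖ = 1 → ∃ z : F, ‖x - algebraMap F E z‖ < 1 := by
    intro x hx
    obtain ⟨ω, hω, hxω⟩ := exists_isOfFinOrder_norm_sub_lt_one hx
    obtain ⟨z, rfl⟩ := mem_range_algebraMap_of_isOfFinOrder hprime hE hω
    exact ⟨z, hxω⟩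
  have hbij : Function.Bijective (algebraMap F E) :=
    ⟨(algebraMap F E).injective, surjective_algebraMap_of_immediate hval hres⟩
  exact hE (Normal.of_algEquiv (AlgEquiv.ofBijective (Algebra.ofId F E) hbij))

variable [IsUltrametricDist F]

theorem IsUniformizer.exists_norm_pow_eq {ϖ : F} (hϖ : IsUniformizer ϖ)
    (hprime : (finrank F E).Prime) (hE : ¬ Normal F E) :
    ∃ y : E, ‖y‖ ^ finrank F E = ‖ϖ‖ := by
  have : FiniteDimensional F E := .of_finrank_pos hprime.pos
  have : ProperSpace F := .of_locallyCompactSpace F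
  obtain ⟨x, hx0, hx⟩ := exists_norm_ne_of_not_normal hprime hE
  obtain ⟨c, hc⟩ := exists_norm_eq_norm_pow_finrank (F := F) x
  have hc0 : c ≠ 0 := norm_ne_zero_iff.1 (hc ▸ pow_ne_zero _ (norm_ne_zero_iff.2 hx0))
  obtain ⟨k, hk⟩ := hϖ.exists_norm_eq_zpow c hc0
  set ℓ := finrank F E
  have hxk : ‖x‖ ^ (ℓ : ℤ) = ‖ϖ‖ ^ k := by rw [← hk, hc, zpow_natCast]
  have hndvd : ¬ (ℓ : ℤ) ∣ k := by
    rintro ⟨j, rfl⟩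
    refine hx (ϖ ^ j) ((pow_left_inj₀ (norm_nonneg _) (norm_nonneg _) hprime.ne_zero).1 ?_)
    rw [norm_zpow, ← zpow_natCast, ← zpow_mul, mul_comm j, ← hxk, zpow_natCast]
  obtain ⟨a, b, hab⟩ := (Nat.prime_iff_prime_int.1 hprime).coprime_iff_not_dvd.2 hndvd
  refine ⟨algebraMap F E ϖ ^ a * x ^ b, ?_⟩
  have hϖ0 : ‖ϖ‖ ≠ 0 := norm_ne_zero_iff.2 hϖ.ne_zero
  calc ‖algebraMap F E ϖ ^ a * x ^ b‖ ^ ℓ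
      = ‖ϖ‖ ^ (a * ℓ) * (‖x‖ ^ (ℓ : ℤ)) ^ b := by
        rw [norm_mul, norm_zpow, norm_zpow, norm_algebraMap', mul_pow, ← zpow_natCast,
          ← zpow_natCast, ← zpow_mul, ← zpow_mul, ← zpow_mul, mul_comm b]
    _ = ‖ϖ‖ := by rw [hxk, ← zpow_mul, ← zpow_add₀ hϖ0, mul_comm k, hab, zpow_one]

theorem IsUniformizer.exists_pow_finrank_eq {ϖ : F} (hϖ : IsUniformizer ϖ)
    (hprime : (finrank F E).Prime) (hnorm : ‖(finrank F E : E)‖ = 1)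
    (hμ : ∀ z : E, z ^ finrank F E = 1 → z = 1) (hE : ¬ Normal F E) :
    ∃ y : E, y ^ finrank F E = algebraMap F E ϖ := by
  obtain ⟨y, hy⟩ := hϖ.exists_norm_pow_eq hprime hE
  have hϖ0 : ‖ϖ‖ ≠ 0 := norm_ne_zero_iff.2 hϖ.ne_zero
  have hy0 : y ^ finrank F E ≠ 0 := norm_ne_zero_iff.1 (by rwa [norm_pow, hy])
  obtain ⟨w, hw⟩ := exists_pow_eq_of_norm_eq_one hnorm hμ
    (x := algebraMap F E ϖ / y ^ finrank F E)
    (by rw [norm_div, norm_pow, norm_algebraMap', hy, div_self hϖ0])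
  exact ⟨w * y, by rw [mul_pow, hw, div_mul_cancel₀ _ hy0]⟩

end NonNormalPrimeDegree

section CubeRoots

theorem isPrimitiveRoot_of_pow_eq_one_of_prime {M : Type*} [CommMonoid M] {ℓ : ℕ}
    (hℓ : ℓ.Prime) {z : M} (hz : z ^ ℓ = 1) (hz1 : z ≠ 1) : IsPrimitiveRoot z ℓ := by
  have : Fact ℓ.Prime := ⟨hℓ⟩
  exact orderOf_eq_prime hz hz1 ▸ .orderOf z

variable {F E : Type*} [Field F] [Field E] [Algebra F E]

theorem finrank_adjoin_eq_two_of_isPrimitiveRoot_three (hμ : ¬ ∃ ζ : F, IsPrimitiveRoot ζ 3)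
    {ζ : E} (hζ : IsPrimitiveRoot ζ 3) : finrank F F⟮ζ⟯ = 2 := by
  have hint : IsIntegral F ζ := hζ.isIntegral (by norm_num) |>.tower_top
  rw [adjoin.finrank hint]
  apply le_antisymm
  · have hroot : aeval ζ (cyclotomic 3 F) = 0 := by
      rw [← eval_map_algebraMap, map_cyclotomic]
      exact hζ.isRoot_cyclotomic (by norm_num)
    calc (minpoly F ζ).natDegree
        ≤ (cyclotomic 3 F).natDegree :=
          natDegree_le_of_dvd (minpoly.dvd F ζ hroot) (cyclotomic_ne_zero 3 F)
      _ = 2 := by rw [natDegree_cyclotomic, Nat.totient_prime Nat.prime_three]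
  · rw [minpoly.two_le_natDegree_iff hint]
    rintro ⟨z, rfl⟩
    exact hμ ⟨z, hζ.of_map_of_injective (algebraMap F E).injective⟩

theorem eq_one_of_pow_three_eq_one_of_odd_finrank (hμ : ¬ ∃ ζ : F, IsPrimitiveRoot ζ 3)
    (hodd : Odd (finrank F E)) {z : E} (hz : z ^ 3 = 1) : z = 1 := by
  by_contra hz1
  have hζ := isPrimitiveRoot_of_pow_eq_one_of_prime Nat.prime_three hz hz1
  have htwo : 2 ∣ finrank F E := finrank_adjoin_eq_two_of_isPrimitiveRoot_three hμ hζ ▸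
    ⟨_, (finrank_mul_finrank F F⟮z⟯ E).symm⟩
  exact Nat.not_even_iff_odd.2 hodd (even_iff_two_dvd.2 htwo)

end CubeRoots

section SplittingField

variable {F K : Type*} [Field F] [Field K] [Algebra F K]

theorem nonempty_algEquiv_mulEquiv_perm {f : F[X]} [IsSplittingField F K f] (hsep : f.Separable)
    {n : ℕ} (hdeg : f.natDegree = n) (hdvd : n.factorial ∣ finrank F K) :
    Nonempty ((K ≃ₐ[F] K) ≃* Equiv.Perm (Fin n)) := by
  have hsplits : (f.map (algebraMap F K)).Splits := IsSplittingField.splits K f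
  have : FiniteDimensional F K := IsSplittingField.finiteDimensional K f
  have : IsGalois F K := .of_separable_splitting_field hsep
  have : Fact (f.map (algebraMap F K)).Splits := ⟨hsplits⟩
  have hroots : Fintype.card (f.rootSet K) = n :=
    (card_rootSet_eq_natDegree hsep hsplits).trans hdeg
  let eGal : f.Gal ≃* (K ≃ₐ[F] K) := (AlgEquiv.autCongr (IsSplittingField.algEquiv K f)).symm
  have hcardGal : Nat.card f.Gal = finrank F K :=
    (Nat.card_congr eGal.toEquiv).trans (IsGalois.card_aut_eq_finrank F K)
  have hcardPerm : Nat.card (Equiv.Perm (f.rootSet K)) = n.factorial := by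
    rw [Nat.card_perm, Nat.card_eq_fintype_card, hroots]
  have hinj := Gal.galActionHom_injective f K
  have hcard : Nat.card f.Gal = Nat.card (Equiv.Perm (f.rootSet K)) :=
    le_antisymm (Nat.card_le_card_of_injective _ hinj)
      (Nat.le_of_dvd Nat.card_pos (by rwa [hcardPerm, hcardGal]))
  exact ⟨eGal.symm.trans ((MulEquiv.ofBijective _
    ((Nat.bijective_iff_injective_and_card _).2 ⟨hinj, hcard⟩)).trans
    (Equiv.permCongrHom (Fintype.equivFinOfCardEq hroots)))⟩

theorem six_dvd_finrank_of_isSplittingField_X_pow_three_sub_C (h3 : (3 : F) ≠ 0)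
    (hμ : ¬ ∃ ζ : F, IsPrimitiveRoot ζ 3) {a : F} (ha : ∀ b : F, b ^ 3 ≠ a)
    [IsSplittingField F K (X ^ 3 - C a)] : 6 ∣ finrank F K := by
  have : FiniteDimensional F K := IsSplittingField.finiteDimensional K (X ^ 3 - C a)
  have ha0 : a ≠ 0 := fun h ↦ ha 0 (by simp [h])
  have hirr : Irreducible (X ^ 3 - C a) := X_pow_sub_C_irreducible_of_prime Nat.prime_three ha
  have hroots : Fintype.card ((X ^ 3 - C a).rootSet K) = 3 := by
    rw [card_rootSet_eq_natDegree (separable_X_pow_sub_C a (mod_cast h3) ha0)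
      (IsSplittingField.splits K _), natDegree_X_pow_sub_C]
  obtain ⟨⟨r, hr⟩, ⟨s, hs⟩, hrs⟩ :=
    Fintype.exists_pair_of_one_lt_card (α := (X ^ 3 - C a).rootSet K) (by omega)
  have hpow (x : K) (hx : x ∈ (X ^ 3 - C a).rootSet K) : x ^ 3 = algebraMap F K a := by
    simpa [sub_eq_zero] using aeval_eq_zero_of_mem_rootSet hx
  replace hr := hpow r hr
  replace hs := hpow s hs
  have hr0 : r ^ 3 ≠ 0 := by simpa [hr] using ha0
  have hζ : IsPrimitiveRoot (s / r) 3 := by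
    refine isPrimitiveRoot_of_pow_eq_one_of_prime Nat.prime_three ?_ fun h ↦ hrs ?_
    · rw [div_pow, hs, ← hr, div_self hr0]
    · exact Subtype.ext (eq_of_div_eq_one h).symm
  have htwo : 2 ∣ finrank F K := finrank_adjoin_eq_two_of_isPrimitiveRoot_three hμ hζ ▸
    ⟨_, (finrank_mul_finrank F F⟮s / r⟯ K).symm⟩
  have hthree : 3 ∣ finrank F K := by
    have := minpoly.degree_dvd (K := F) (Algebra.IsIntegral.isIntegral r)
    rwa [← minpoly.eq_of_irreducible_of_monic hirr (by simp [hr])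
      (monic_X_pow_sub_C a three_ne_zero), natDegree_X_pow_sub_C] at this
  exact Nat.Coprime.mul_dvd_of_dvd_of_dvd (by norm_num) htwo hthree

theorem adjoin_rootSet_le_of_normal {Ω : Type*} [Field Ω] [Algebra F Ω] (K : IntermediateField F Ω)
    [Normal F K] {f : F[X]} (hf : Irreducible f) (hmonic : f.Monic) {y : K} (hy : aeval y f = 0) :
    adjoin F (f.rootSet Ω) ≤ K := by
  have hsplits : (f.map (algebraMap F K)).Splits :=
    minpoly.eq_of_irreducible_of_monic hf hy hmonic ▸ Normal.splits inferInstance y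
  rw [adjoin_le_iff, ← hsplits.image_rootSet K.val]
  rintro _ ⟨x, -, rfl⟩
  exact x.2

end SplittingField

section SymmetricGaloisGroup

theorem not_normal_stabilizer_perm {α : Type*} (hα : 2 < Nat.card α) (a : α) :
    ¬ (MulAction.stabilizer (Equiv.Perm α) a).Normal := by
  classical
  intro hnormal
  have : Finite α := Nat.finite_of_card_ne_zero (by omega)
  have : Fintype α := Fintype.ofFinite α
  obtain ⟨b, hb, c, hc, hbc⟩ : ∃ b ≠ a, ∃ c ≠ a, b ≠ c := by
    have : 1 < (Finset.univ.erase a).card := by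
      rw [Finset.card_erase_of_mem (Finset.mem_univ a), Finset.card_univ,
        ← Nat.card_eq_fintype_card]
      omega
    simpa using Finset.one_lt_card.1 this
  have hmem : Equiv.swap b c ∈ MulAction.stabilizer (Equiv.Perm α) a :=
    Equiv.swap_apply_of_ne_of_ne hb.symm hc.symm
  have hconj : (Equiv.swap a b * Equiv.swap b c * (Equiv.swap a b)⁻¹) a = a :=
    hnormal.conj_mem _ hmem (Equiv.swap a b)
  simp [Equiv.swap_apply_of_ne_of_ne hc hbc.symm, hc] at hconj

variable {F K : Type*} [Field F] [Field K] [Algebra F K]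

theorem exists_finrank_eq_card_not_normal [FiniteDimensional F K] [IsGalois F K] {α : Type*}
    (e : (K ≃ₐ[F] K) ≃* Equiv.Perm α) (hα : 2 < Nat.card α) :
    ∃ E : IntermediateField F K, finrank F E = Nat.card α ∧ ¬ Normal F E := by
  have : Finite α := Nat.finite_of_card_ne_zero (by omega)
  have : Nonempty α := Finite.card_pos_iff.1 (by omega)
  let a : α := Classical.arbitrary α
  let H := (MulAction.stabilizer (Equiv.Perm α) a).comap e.toMonoidHom
  have hfix : (fixedField H).fixingSubgroup = H := fixingSubgroup_fixedField H
  refine ⟨fixedField H, ?_, fun hnormal ↦ not_normal_stabilizer_perm hα a ?_⟩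
  · rw [finrank_eq_fixingSubgroup_index, hfix,
      Subgroup.index_comap_of_surjective _ e.surjective, MulAction.index_stabilizer_of_transitive]
  · have : IsGalois F (fixedField H) := ⟨⟩
    have hH : H.Normal := hfix ▸ (InfiniteGalois.normal_iff_isGalois _).2 this
    have hmap := hH.map e.toMonoidHom e.surjective
    rwa [Subgroup.map_comap_eq_self_of_surjective e.surjective] at hmap

end SymmetricGaloisGroup

section Counting

theorem nu_perm_fin_three_eq_one.{u} {F : Type u} [Field F] (h3 : (3 : F) ≠ 0)
    (hμ : ¬ ∃ ζ : F, IsPrimitiveRoot ζ 3) {a : F} (ha : ∀ b : F, b ^ 3 ≠ a)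
    (hcubic : ∀ (E : Type u) [Field E] [Algebra F E], finrank F E = 3 → ¬ Normal F E →
      ∃ y : E, y ^ 3 = algebraMap F E a) :
    nu F (Equiv.Perm (Fin 3)) = 1 := by
  have ha0 : a ≠ 0 := fun h ↦ ha 0 (by simp [h])
  have hirr : Irreducible (X ^ 3 - C a) := X_pow_sub_C_irreducible_of_prime Nat.prime_three ha
  have hsep : (X ^ 3 - C a).Separable := separable_X_pow_sub_C a (mod_cast h3) ha0
  let M := adjoin F ((X ^ 3 - C a).rootSet (AlgebraicClosure F))
  have : IsSplittingField F M (X ^ 3 - C a) :=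
    adjoin_rootSet_isSplittingField (IsAlgClosed.splits _)
  obtain ⟨eM⟩ : Nonempty ((M ≃ₐ[F] M) ≃* Equiv.Perm (Fin 3)) :=
    nonempty_algEquiv_mulEquiv_perm hsep natDegree_X_pow_sub_C
      (six_dvd_finrank_of_isSplittingField_X_pow_three_sub_C h3 hμ ha)
  have hMfin : FiniteDimensional F M := IsSplittingField.finiteDimensional M (X ^ 3 - C a)
  have hMgal : IsGalois F M := .of_separable_splitting_field hsep
  refine Nat.card_eq_one_iff_exists.2 ⟨⟨M, hMfin, hMgal, ⟨eM⟩⟩, ?_⟩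
  rintro ⟨K, hKfin, hKgal, ⟨eK⟩⟩
  obtain ⟨E, hE3, hE⟩ := exists_finrank_eq_card_not_normal eK (by simp)
  obtain ⟨y, hy⟩ := hcubic E (by simpa using hE3) hE
  have hMK : M ≤ K := adjoin_rootSet_le_of_normal K hirr (monic_X_pow_sub_C a three_ne_zero)
    (y := (y : K)) (by
      have := congrArg (algebraMap E K) hy
      simpa [sub_eq_zero] using this)
  have hfinrank : finrank F M = finrank F K := by
    rw [← IsGalois.card_aut_eq_finrank F M, ← IsGalois.card_aut_eq_finrank F K]
    exact Nat.card_congr (eM.trans eK.symm).toEquiv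
  exact Subtype.ext (eq_of_le_of_finrank_eq hMK hfinrank).symm

end Counting

section LocalFieldCounting

theorem exists_pow_three_eq_of_not_normal {F E : Type*} [NontriviallyNormedField F]
    [IsUltrametricDist F] [LocallyCompactSpace F] [Field E] [Algebra F E] (h3 : ‖(3 : F)‖ = 1)
    (hμ : ¬ ∃ ζ : F, IsPrimitiveRoot ζ 3) {ϖ : F} (hϖ : IsUniformizer ϖ)
    (hdeg : finrank F E = 3) (hE : ¬ Normal F E) : ∃ y : E, y ^ 3 = algebraMap F E ϖ := by
  have : FiniteDimensional F E := .of_finrank_pos (by omega)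
  have : ProperSpace F := .of_locallyCompactSpace F
  let _ : NontriviallyNormedField E := spectralNorm.nontriviallyNormedField F E
  let _ : NormedAlgebra F E := spectralNorm.normedAlgebra F E
  have : IsUltrametricDist E :=
    IsUltrametricDist.isUltrametricDist_of_isNonarchimedean_norm isNonarchimedean_spectralNorm
  have : ProperSpace E := FiniteDimensional.proper F E
  have hnorm : ‖(3 : E)‖ = 1 := by rw [← map_ofNat (algebraMap F E) 3, norm_algebraMap', h3]
  have hμE : ∀ z : E, z ^ 3 = 1 → z = 1 := fun z ↦
    eq_one_of_pow_three_eq_one_of_odd_finrank hμ (hdeg ▸ by decide)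
  simpa only [hdeg] using hϖ.exists_pow_finrank_eq (E := E) (hdeg ▸ Nat.prime_three)
    (by rw [hdeg]; exact_mod_cast hnorm) (by rwa [hdeg]) hE

theorem nu_perm_fin_three_eq_one_of_norm_three_eq_one {F : Type*} [NontriviallyNormedField F]
    [IsUltrametricDist F] [LocallyCompactSpace F] (h3 : ‖(3 : F)‖ = 1)
    (hμ : ¬ ∃ ζ : F, IsPrimitiveRoot ζ 3) : nu F (Equiv.Perm (Fin 3)) = 1 := by
  obtain ⟨ϖ, hϖ⟩ := exists_isUniformizer F
  exact nu_perm_fin_three_eq_one (norm_ne_zero_iff.1 (h3 ▸ one_ne_zero)) hμ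
    (hϖ.pow_ne (by norm_num)) fun _ _ _ ↦ exists_pow_three_eq_of_not_normal h3 hμ hϖ

end LocalFieldCounting

theorem stmt1_general (k : Type*) [NontriviallyNormedField k] [IsUltrametricDist k]
    [LocallyCompactSpace k] (h3 : ‖(3 : k)‖ = 1)
    (F : Type*) [Field F] [Algebra k F] [FiniteDimensional k F]
    (hμ3 : ¬ ∃ ζ : F, IsPrimitiveRoot ζ 3) :
    nu F (Equiv.Perm (Fin 3)) = 1 := by
  have : ProperSpace k := .of_locallyCompactSpace k
  let _ : NontriviallyNormedField F := spectralNorm.nontriviallyNormedField k F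
  let _ : NormedAlgebra k F := spectralNorm.normedAlgebra k F
  have : IsUltrametricDist F :=
    IsUltrametricDist.isUltrametricDist_of_isNonarchimedean_norm isNonarchimedean_spectralNorm
  have : ProperSpace F := FiniteDimensional.proper k F
  refine nu_perm_fin_three_eq_one_of_norm_three_eq_one ?_ hμ3
  rw [← map_ofNat (algebraMap k F) 3, norm_algebraMap', h3]

theorem stmt1 (p : ℕ) [Fact p.Prime] (hp : p ≠ 3)
    (F : Type*) [Field F] [Algebra ℚ_[p] F] [FiniteDimensional ℚ_[p] F]
    (hμ3 : ¬ ∃ ζ : F, IsPrimitiveRoot ζ 3) :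
    nu F (Equiv.Perm (Fin 3)) = 1 :=
  stmt1_general ℚ_[p] (Padic.norm_natCast_eq_one_iff.2
    ((Nat.coprime_primes Fact.out Nat.prime_three).2 hp)) F hμ3
end

section
/- Let F be a finite extension of ℚ₃ of degree m that does not contain a primitive cube root of unity. Then ν(F,S₃) = (5·3^m − 3)/2, i.e. ν(F,S₃) = 3^m + (3^{m+1} − 3)/2. -/
/-!
By the Galois correspondence, `ν(F, S₃)` times `|Aut S₃| = 6` is the number of continuous
surjections `ρ : Gal(Ω/F) → S₃`. Sort these by the quadratic character `ε = sign ∘ ρ`, and let `ψ`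
be the character through which `Gal(Ω/F)` acts on `μ₃`; it is nontrivial since `μ₃ ⊄ F`.
Identifying `S₃` with the affine group of `μ₃`, the homomorphisms with sign `ε` are the actions on
`μ₃` by affine maps of linear part `ε`. Let `Gal(Ω/F)` act on `Ωˣ` by `g • u = (g u) ^ χ(g)`, where
`χ = ε ψ`. As in Kummer theory, Lagrange resolvents show that each of these actions is the action
on the set of cube roots of some invariant element, so that their number is three times the index
of the cubes in the group of invariants of the twisted action on `Ωˣ`.

If `χ = 1`, that is `ε = ψ`, this group is `Fˣ`. Otherwise, let `E` be the quadratic extension of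
`F` cut out by `χ`. Since `3` is odd, the index of the cubes is multiplicative in the decomposition
of `Eˣ`, up to `2`-torsion, into `Fˣ` and the twisted invariants. The formula
`(Eˣ : Eˣⁿ) = n · p ^ (v_p(n) [E : ℚ_p]) · |μₙ(E)|` for a finite extension `E` of `ℚ_p` then gives
the indices `3 ^ (m + 1)` and `3 ^ m` in the two cases, and also shows that `F` has three
nontrivial quadratic characters, one of them `ψ`. Since for each of these three characters exactly
three of the homomorphisms fail to be surjective,
`6 ν(F, S₃) = (3 ^ (m + 2) - 3) + 2 (3 ^ (m + 1) - 3)`.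
-/

section PowIndex

variable {A B : Type*} [CommGroup A] [CommGroup B]

/-- The index `(A : Aⁿ)` of the subgroup of `n`-th powers of an abelian group; it is `0` when this
index is infinite. -/
noncomputable def powIndex (A : Type*) [CommGroup A] (n : ℕ) : ℕ :=
  (powMonoidHom n : A →* A).range.index

theorem powIndex_congr (f : A ≃* B) (n : ℕ) : powIndex A n = powIndex B n := by
  have range_eq : (powMonoidHom n : A →* A).range =
      (powMonoidHom n : B →* B).range.comap (f : A →* B) := by
    ext a
    constructor
    · rintro ⟨b, rfl⟩
      exact ⟨f b, (map_pow f b n).symm⟩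
    · rintro ⟨b, hb⟩
      refine ⟨f.symm b, f.injective ?_⟩
      simpa using hb
  rw [powIndex, range_eq, Subgroup.index_comap_of_surjective _ f.surjective, powIndex]

theorem powIndex_prod (n : ℕ) : powIndex (A × B) n = powIndex A n * powIndex B n := by
  rw [powIndex, powIndex, powIndex, ← Subgroup.index_prod]
  congr 1
  ext ⟨a, b⟩
  constructor
  · rintro ⟨⟨x, y⟩, h⟩
    exact ⟨⟨x, congrArg Prod.fst h⟩, ⟨y, congrArg Prod.snd h⟩⟩
  · rintro ⟨⟨x, hx⟩, ⟨y, hy⟩⟩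
    exact ⟨(x, y), Prod.ext hx hy⟩

theorem powIndex_multiplicative_int (n : ℕ) : powIndex (Multiplicative ℤ) n = n := by
  have range_eq : (powMonoidHom n : Multiplicative ℤ →* Multiplicative ℤ).range =
      AddSubgroup.toSubgroup (AddSubgroup.zmultiples (n : ℤ)) := by
    ext x
    change _ ↔ x.toAdd ∈ AddSubgroup.zmultiples (n : ℤ)
    rw [Int.mem_zmultiples_iff]
    constructor
    · rintro ⟨y, rfl⟩
      exact ⟨y.toAdd, by simp⟩
    · rintro ⟨y, hy⟩
      exact ⟨Multiplicative.ofAdd y, Multiplicative.toAdd.injective (by simp [hy])⟩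
  rw [powIndex, range_eq, AddSubgroup.index_toSubgroup, Int.index_zmultiples, Int.natAbs_natCast]

theorem relIndex_map_powMonoidHom (S : Subgroup A) (n : ℕ) :
    (S.map (powMonoidHom n)).relIndex S = powIndex S n := by
  have map_eq : S.map (powMonoidHom n) = (powMonoidHom n : S →* S).range.map S.subtype := by
    rw [MonoidHom.map_range, ← S.range_subtype, MonoidHom.map_range, S.range_subtype]
    rfl
  have map_top : S = (⊤ : Subgroup S).map S.subtype := by
    rw [← MonoidHom.range_eq_map, S.range_subtype]
  calc (S.map (powMonoidHom n)).relIndex S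
      = ((powMonoidHom n : S →* S).range.map S.subtype).relIndex ((⊤ : Subgroup S).map S.subtype) :=
        congrArg₂ _ map_eq map_top
    _ = powIndex S n := by
        rw [Subgroup.relIndex_map_map_of_injective _ _ S.subtype_injective,
          Subgroup.relIndex_top_right, powIndex]

/-- Both sides compute `(A : Bⁿ)`. The Herbrand quotient is thus unchanged by finite index. -/
theorem powIndex_mul_card_inf_ker (S : Subgroup A) (hS : S.index ≠ 0) (n : ℕ) :
    powIndex A n * Nat.card (S ⊓ (powMonoidHom n : A →* A).ker : Subgroup A) =
      powIndex S n * Nat.card (powMonoidHom n : A →* A).ker := by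
  set f : A →* A := powMonoidHom n
  have map_le : S.map f ≤ S := by
    rintro _ ⟨b, hb, rfl⟩
    exact S.pow_mem hb n
  have index_map : (S.map f).index = (S ⊔ f.ker).index * powIndex A n := S.index_map f
  have index_map' : powIndex S n * S.index = (S.map f).index := by
    rw [← Subgroup.relIndex_mul_index map_le, relIndex_map_powMonoidHom]
  have index_sup : S.relIndex f.ker * (S ⊔ f.ker).index = S.index := by
    rw [← Subgroup.relIndex_sup_left, Subgroup.relIndex_mul_index le_sup_left]
  have card_ker : Nat.card (S ⊓ f.ker : Subgroup A) * S.relIndex f.ker = Nat.card f.ker := by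
    rw [← Subgroup.relIndex_bot_left, ← Subgroup.relIndex_bot_left, ← Subgroup.inf_relIndex_right S,
      Subgroup.relIndex_mul_relIndex _ _ _ bot_le inf_le_right]
  have index_sup_ne_zero : (S ⊔ f.ker).index ≠ 0 := right_ne_zero_of_mul (index_sup ▸ hS)
  apply mul_right_cancel₀ index_sup_ne_zero
  calc powIndex A n * Nat.card (S ⊓ f.ker : Subgroup A) * (S ⊔ f.ker).index
      = Nat.card (S ⊓ f.ker : Subgroup A) * (S.map f).index := by rw [index_map]; ring
    _ = powIndex S n * (Nat.card (S ⊓ f.ker : Subgroup A) * S.relIndex f.ker) *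
          (S ⊔ f.ker).index := by rw [← index_map', ← index_sup]; ring
    _ = powIndex S n * Nat.card f.ker * (S ⊔ f.ker).index := by rw [card_ker]

theorem relIndex_comap_powMonoidHom {n : ℕ}
    (hn : Function.Surjective (powMonoidHom n : A →* A)) (S : Subgroup A) :
    S.relIndex (S.comap (powMonoidHom n)) =
      powIndex S n * S.relIndex (powMonoidHom n : A →* A).ker := by
  set f : A →* A := powMonoidHom n
  have map_le : S.map f ≤ S := by
    rintro _ ⟨b, hb, rfl⟩
    exact S.pow_mem hb n
  have relIndex_sup : (S ⊔ f.ker).relIndex (S.comap f) = powIndex S n := by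
    rw [← Subgroup.comap_map_eq, Subgroup.relIndex_comap,
      Subgroup.map_comap_eq_self_of_surjective hn, relIndex_map_powMonoidHom]
  rw [← Subgroup.relIndex_mul_relIndex S (S ⊔ f.ker) (S.comap f) le_sup_left
    (sup_le (Subgroup.map_le_iff_le_comap.1 map_le) (f.ker_le_comap S)), relIndex_sup,
    Subgroup.relIndex_sup_left, mul_comm]

theorem mem_range_powMonoidHom_of_coprime {a : A} {k n : ℕ} (hkn : k.Coprime n)
    (ha : a ^ k ∈ (powMonoidHom n : A →* A).range) : a ∈ (powMonoidHom n : A →* A).range := by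
  obtain ⟨u, v, huv⟩ := Nat.isCoprime_iff_coprime.2 hkn
  have a_eq : a = (a ^ k) ^ u * (a ^ n) ^ v := by
    rw [← zpow_natCast, ← zpow_mul, ← zpow_natCast, ← zpow_mul, ← zpow_add, mul_comm, mul_comm _ v,
      huv, zpow_one]
  rw [a_eq]
  exact mul_mem (zpow_mem ha u) (zpow_mem (MonoidHom.mem_range.2 ⟨a, rfl⟩) v)

theorem mem_range_powMonoidHom_of_mul_eq {n : ℕ} (hn : Odd n) {S T : Subgroup A}
    (hsup : ∀ a, a ^ 2 ∈ S ⊔ T) (hinf : ∀ a ∈ S ⊓ T, a ^ 2 = 1) {s : S} {t : T} {a : A}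
    (hst : (s * t : A) = a ^ n) : s ∈ (powMonoidHom n : S →* S).range := by
  obtain ⟨x, hx, y, hy, hxy⟩ := Subgroup.mem_sup.1 (hsup a)
  have sq_mul : (s ^ 2 * t ^ 2 : A) = x ^ n * y ^ n := by
    rw [← mul_pow, hst, ← mul_pow, hxy, ← pow_mul, ← pow_mul, mul_comm]
  have sq_div : (s ^ 2 / x ^ n : A) = y ^ n / t ^ 2 := by
    rw [div_eq_div_iff_mul_eq_mul, sq_mul, mul_comm]
  have sq_div_sq : (s ^ 2 / x ^ n : A) ^ 2 = 1 :=
    hinf _ (Subgroup.mem_inf.2 ⟨div_mem (pow_mem s.2 2) (pow_mem hx n),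
      sq_div ▸ div_mem (pow_mem hy n) (pow_mem t.2 2)⟩)
  have coprime : Nat.Coprime (2 * 2) n :=
    (Nat.coprime_two_left.2 hn).mul_left (Nat.coprime_two_left.2 hn)
  refine mem_range_powMonoidHom_of_coprime coprime ⟨⟨x, hx⟩ ^ 2, Subtype.ext ?_⟩
  change ((x ^ 2) ^ n : A) = s ^ (2 * 2)
  rw [div_pow, div_eq_one] at sq_div_sq
  rw [pow_mul, sq_div_sq, pow_right_comm]

theorem powIndex_eq_mul_of_sq_mem_sup {n : ℕ} (hn : Odd n) (S T : Subgroup A)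
    (hsup : ∀ a, a ^ 2 ∈ S ⊔ T) (hinf : ∀ a ∈ S ⊓ T, a ^ 2 = 1) :
    powIndex A n = powIndex S n * powIndex T n := by
  set P : Subgroup A := (powMonoidHom n).range
  set f : S × T →* A := S.subtype.coprod T.subtype
  have sup_P : P ⊔ f.range = ⊤ := by
    have range_f : S ⊔ T ≤ f.range :=
      sup_le (fun s hs => ⟨(⟨s, hs⟩, 1), by simp [f]⟩) fun t ht => ⟨(1, ⟨t, ht⟩), by simp [f]⟩
    refine eq_top_iff.2 fun a _ => ?_
    obtain ⟨k, rfl⟩ := hn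
    have a_eq : a = a⁻¹ ^ (2 * k + 1) * (a ^ 2) ^ (k + 1) := by group
    rw [a_eq]
    exact Subgroup.mul_mem_sup ⟨a⁻¹, rfl⟩ (range_f (pow_mem (hsup a) _))
  have comap_P : P.comap f = (powMonoidHom n : S × T →* S × T).range := by
    ext ⟨s, t⟩
    constructor
    · rintro ⟨a, ha⟩
      obtain ⟨x, hx⟩ := mem_range_powMonoidHom_of_mul_eq hn hsup hinf (s := s) (t := t) ha.symm
      obtain ⟨y, hy⟩ := mem_range_powMonoidHom_of_mul_eq hn (sup_comm S T ▸ hsup)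
        (inf_comm S T ▸ hinf) (s := t) (t := s) ((mul_comm _ _).trans ha.symm)
      exact ⟨(x, y), Prod.ext hx hy⟩
    · rintro ⟨x, hx⟩
      exact ⟨f x, by rw [← hx]; exact (map_pow f x _).symm⟩
  rw [← powIndex_prod, powIndex, powIndex, ← comap_P, Subgroup.index_comap,
    ← Subgroup.relIndex_sup_left, sup_P, Subgroup.relIndex_top_right]

end PowIndex

open scoped NNReal

section PrincipalUnits

variable {K : Type*} [NormedField K] [IsUltrametricDist K]

variable (K) in
/-- The group of units of norm one at distance at most `r` from `1`: the principal units of level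
`r`. Recording `‖x‖ = 1`, which is automatic for `r < 1`, makes this a group for every `r`. -/
def principalUnits (r : ℝ≥0) : Subgroup Kˣ where
  carrier := {x | ‖(x : K)‖ = 1 ∧ ‖(x : K) - 1‖ ≤ r}
  one_mem' := by simp
  mul_mem' := by
    rintro x y ⟨hx, hx'⟩ ⟨hy, hy'⟩
    have mul_sub_one : ((x * y : Kˣ) : K) - 1 = x * (y - 1) + (x - 1) := by push_cast; ring
    refine ⟨by rw [Units.val_mul, norm_mul, hx, hy, one_mul], ?_⟩
    rw [mul_sub_one]
    refine (IsUltrametricDist.norm_add_le_max _ _).trans (max_le ?_ hx')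
    rwa [norm_mul, hx, one_mul]
  inv_mem' := by
    rintro x ⟨hx, hx'⟩
    have inv_sub_one : ((x⁻¹ : Kˣ) : K) - 1 = -(x⁻¹ * (x - 1)) := by
      rw [mul_sub, Units.inv_mul]; ring
    have norm_inv : ‖((x⁻¹ : Kˣ) : K)‖ = 1 := by
      rw [Units.val_inv_eq_inv_val, _root_.norm_inv, hx, inv_one]
    refine ⟨norm_inv, ?_⟩
    rwa [inv_sub_one, norm_neg, norm_mul, norm_inv, one_mul]

theorem norm_eq_of_norm_sub_lt {x y : K} (h : ‖x - y‖ < ‖y‖) : ‖x‖ = ‖y‖ := by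
  rw [← sub_add_cancel x y, IsUltrametricDist.norm_add_eq_max_of_norm_ne_norm h.ne,
    max_eq_right h.le]

theorem exists_mem_principalUnits_of_norm_sub_one_le {r : ℝ≥0} (hr : r < 1) {x : K}
    (hx : ‖x - 1‖ ≤ r) : ∃ u ∈ principalUnits K r, (u : K) = x := by
  have norm_eq : ‖x‖ = 1 := by
    rw [norm_eq_of_norm_sub_lt (y := (1 : K)), norm_one]
    rw [norm_one]
    exact hx.trans_lt (by exact_mod_cast hr)
  exact ⟨Units.mk0 x (norm_ne_zero_iff.1 (norm_eq ▸ one_ne_zero)), ⟨norm_eq, hx⟩, rfl⟩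

theorem exists_pow_sub_pow_eq_mul {r : ℝ≥0} {x y : Kˣ} (hx : x ∈ principalUnits K r)
    (hy : y ∈ principalUnits K r) (n : ℕ) :
    ∃ s : K, (x ^ n - y ^ n : K) = s * (x - y) ∧ ‖s - n‖ ≤ r := by
  refine ⟨∑ i ∈ Finset.range n, x ^ i * y ^ (n - 1 - i), (geom_sum₂_mul _ _ _).symm, ?_⟩
  have sum_sub : (∑ i ∈ Finset.range n, (x : K) ^ i * y ^ (n - 1 - i)) - n =
      ∑ i ∈ Finset.range n, ((x : K) ^ i * y ^ (n - 1 - i) - 1) := by simp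
  rw [sum_sub]
  refine IsUltrametricDist.norm_sum_le_of_forall_le_of_nonneg r.2 fun i _ => ?_
  have mem : x ^ i * y ^ (n - 1 - i) ∈ principalUnits K r :=
    mul_mem (pow_mem hx _) (pow_mem hy _)
  simpa using mem.2

theorem norm_pow_sub_one {n : ℕ} {r : ℝ≥0} (hr : r < ‖(n : K)‖₊) {x : Kˣ}
    (hx : x ∈ principalUnits K r) : ‖(x ^ n - 1 : K)‖ = ‖(n : K)‖ * ‖(x - 1 : K)‖ := by
  obtain ⟨s, hs, hsn⟩ := exists_pow_sub_pow_eq_mul hx (one_mem _) n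
  rw [Units.val_one, one_pow] at hs
  rw [hs, norm_mul, norm_eq_of_norm_sub_lt (hsn.trans_lt hr)]

theorem exists_fixedPoint_of_norm_sub_le [CompleteSpace K] {k r : ℝ≥0} (hk : k < 1) (c : K)
    {g : K → K} (hgc : ‖g c - c‖ ≤ r)
    (hg : ∀ x y, ‖x - c‖ ≤ r → ‖y - c‖ ≤ r → ‖g x - g y‖ ≤ k * ‖x - y‖) :
    ∃ x, ‖x - c‖ ≤ r ∧ g x = x := by
  set ball : Set K := {x | ‖x - c‖ ≤ r}
  have center_mem : c ∈ ball := by simp [ball]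
  have mapsTo : Set.MapsTo g ball ball := fun x hx => by
    have hle : k * ‖x - c‖ ≤ r := (mul_le_of_le_one_left (norm_nonneg _) hk.le).trans hx
    change ‖g x - c‖ ≤ r
    rw [← sub_add_sub_cancel (g x) (g c)]
    exact (IsUltrametricDist.norm_add_le_max _ _).trans
      (max_le ((hg x c hx center_mem).trans hle) hgc)
  have contracting : ContractingWith k (mapsTo.restrict g ball ball) := by
    refine ⟨hk, LipschitzWith.of_dist_le_mul fun x y => ?_⟩
    rw [Subtype.dist_eq, Subtype.dist_eq, dist_eq_norm, dist_eq_norm]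
    exact hg x y x.2 y.2
  have complete : IsComplete ball := (isClosed_le (by fun_prop) continuous_const).isComplete
  obtain ⟨x, hx, hfix, -⟩ :=
    contracting.exists_fixedPoint' complete mapsTo center_mem (edist_ne_top _ _)
  exact ⟨x, hx, hfix⟩

theorem exists_pow_eq_of_mem_principalUnits [CompleteSpace K] {n : ℕ} {r : ℝ≥0}
    (hr : r < ‖(n : K)‖₊) {w : Kˣ} (hw : w ∈ principalUnits K (‖(n : K)‖₊ * r)) :
    ∃ x ∈ principalUnits K r, x ^ n = w := by
  have hr1 : r < 1 := hr.trans_le (IsUltrametricDist.nnnorm_natCast_le_one K n)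
  have hn0 : 0 < ‖(n : K)‖₊ := r.2.trans_lt hr
  have hn : (n : K) ≠ 0 := norm_pos_iff.1 hn0
  -- The root is the fixed point of `x ↦ x - (xⁿ - w) / n`, which contracts the ball around `1`.
  have norm_newton_sub_le (x y : K) (hx : ‖x - 1‖ ≤ r) (hy : ‖y - 1‖ ≤ r) :
      ‖(x - (x ^ n - w) / n) - (y - (y ^ n - w) / n)‖ ≤ (r / ‖(n : K)‖₊ : ℝ≥0) * ‖x - y‖ := by
    obtain ⟨u, hu, rfl⟩ := exists_mem_principalUnits_of_norm_sub_one_le hr1 hx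
    obtain ⟨v, hv, rfl⟩ := exists_mem_principalUnits_of_norm_sub_one_le hr1 hy
    obtain ⟨s, hs, hsn⟩ := exists_pow_sub_pow_eq_mul hu hv n
    calc ‖(u - (u ^ n - w) / n - (v - (v ^ n - w) / n) : K)‖
        = ‖(u - v - (u ^ n - v ^ n) / n : K)‖ := by congr 1; ring
      _ = ‖-((s - n) / n * (u - v))‖ := by rw [hs]; congr 1; field_simp; ring
      _ = ‖s - n‖ / ‖(n : K)‖ * ‖(u - v : K)‖ := by rw [norm_neg, norm_mul, norm_div]
      _ ≤ r / ‖(n : K)‖ * ‖(u - v : K)‖ := by gcongr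
  have norm_newton_one_le : ‖(1 - ((1 : K) ^ n - w) / n) - 1‖ ≤ r := by
    have newton_one : (1 - ((1 : K) ^ n - w) / n) - 1 = (w - 1) / n := by ring
    rw [newton_one, norm_div, div_le_iff₀' (show 0 < ‖(n : K)‖ from hn0)]
    exact hw.2
  obtain ⟨x, hx, hfix⟩ := exists_fixedPoint_of_norm_sub_le ((div_lt_one hn0).2 hr) 1
    norm_newton_one_le norm_newton_sub_le
  obtain ⟨u, hu, rfl⟩ := exists_mem_principalUnits_of_norm_sub_one_le hr1 hx
  have div_eq_zero : ((u : K) ^ n - w) / n = 0 := sub_eq_self.1 hfix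
  exact ⟨u, hu, Units.ext (sub_eq_zero.1 ((div_eq_zero_iff.1 div_eq_zero).resolve_right hn))⟩

theorem eq_one_of_mem_principalUnits {n : ℕ} {r : ℝ≥0} (hr : r < ‖(n : K)‖₊) {x : Kˣ}
    (hx : x ∈ principalUnits K r) (hxn : x ^ n = 1) : x = 1 := by
  have hn : ‖(n : K)‖ ≠ 0 := (r.2.trans_lt hr).ne'
  have norm_eq := norm_pow_sub_one hr hx
  rw [← Units.val_pow_eq_pow_val, hxn, Units.val_one, sub_self, norm_zero, zero_eq_mul,
    or_iff_right hn, norm_eq_zero, sub_eq_zero] at norm_eq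
  exact Units.ext norm_eq

theorem powIndex_principalUnits [CompleteSpace K] {n : ℕ} {r : ℝ≥0} (hr : r < ‖(n : K)‖₊) :
    powIndex (principalUnits K r) n =
      (principalUnits K (‖(n : K)‖₊ * r)).relIndex (principalUnits K r) := by
  rw [powIndex, Subgroup.relIndex]
  congr 1
  ext x
  rw [Subgroup.mem_subgroupOf]
  constructor
  · rintro ⟨y, rfl⟩
    refine ⟨(y ^ n).2.1, (norm_pow_sub_one hr y.2).trans_le ?_⟩
    rw [NNReal.coe_mul, coe_nnnorm]
    gcongr
    exact y.2.2
  · intro hx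
    obtain ⟨y, hy, hyx⟩ := exists_pow_eq_of_mem_principalUnits hr hx
    exact ⟨⟨y, hy⟩, Subtype.ext hyx⟩

end PrincipalUnits

section UnitGroup

variable {K : Type*} [NormedField K]

theorem isCompact_setOf_norm_mem_Icc [ProperSpace K] {ε : ℝ} (hε : 0 < ε) (R : ℝ) :
    IsCompact {x : Kˣ | ‖(x : K)‖ ∈ Set.Icc ε R} := by
  have image_eq : Units.val '' {x : Kˣ | ‖(x : K)‖ ∈ Set.Icc ε R} =
      {x : K | ε ≤ ‖x‖} ∩ Metric.closedBall 0 R := by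
    ext x
    constructor
    · rintro ⟨u, hu, rfl⟩
      exact ⟨hu.1, mem_closedBall_zero_iff.2 hu.2⟩
    · intro hx
      exact ⟨Units.mk0 x (norm_pos_iff.1 (hε.trans_le hx.1)),
        ⟨hx.1, mem_closedBall_zero_iff.1 hx.2⟩, rfl⟩
  rw [Units.isEmbedding_val₀.isCompact_iff, image_eq]
  exact (isCompact_closedBall 0 R).inter_left (isClosed_le continuous_const continuous_norm)

theorem exists_norm_mul_zpow_mem_Icc {t : Kˣ} (ht : ‖(t : K)‖ < 1) (x : Kˣ) :
    ∃ k : ℤ, ‖((x * t ^ k : Kˣ) : K)‖ ∈ Set.Icc ‖(t : K)‖ 1 := by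
  have norm_t_pos : 0 < ‖(t : K)‖ := norm_pos_iff.2 t.ne_zero
  obtain ⟨k, le_norm_x, norm_x_lt⟩ := exists_mem_Ico_zpow (norm_pos_iff.2 x.ne_zero)
    ((one_lt_inv₀ norm_t_pos).2 ht)
  rw [inv_zpow, inv_le_iff_one_le_mul₀ (zpow_pos norm_t_pos _)] at le_norm_x
  rw [inv_zpow, lt_inv_comm₀ (norm_pos_iff.2 x.ne_zero) (zpow_pos norm_t_pos _)] at norm_x_lt
  refine ⟨k + 1, ?_⟩
  rw [Units.val_mul, Units.val_zpow_eq_zpow_val, norm_mul, norm_zpow]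
  constructor
  · rw [zpow_add_one₀ norm_t_pos.ne', ← mul_assoc]
    exact le_mul_of_one_le_left norm_t_pos.le le_norm_x
  · calc ‖(x : K)‖ * ‖(t : K)‖ ^ (k + 1) ≤ ‖(x : K)‖ * ‖(x : K)‖⁻¹ := by gcongr
      _ = 1 := mul_inv_cancel₀ (norm_ne_zero_iff.2 x.ne_zero)

theorem index_ne_zero_of_isOpen [ProperSpace K] {H : Subgroup Kˣ} (hH : IsOpen (H : Set Kˣ))
    {t : Kˣ} (ht : t ∈ H) (ht1 : ‖(t : K)‖ < 1) : H.index ≠ 0 := by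
  have annulus_compact := isCompact_setOf_norm_mem_Icc (K := K) (norm_pos_iff.2 t.ne_zero) 1
  have image_eq_univ : ((↑) : Kˣ → Kˣ ⧸ H) '' {x | ‖(x : K)‖ ∈ Set.Icc ‖(t : K)‖ 1} = Set.univ := by
    refine Set.eq_univ_of_forall fun q => ?_
    obtain ⟨x, rfl⟩ := QuotientGroup.mk_surjective q
    obtain ⟨k, hk⟩ := exists_norm_mul_zpow_mem_Icc ht1 x
    exact ⟨_, hk, QuotientGroup.mk_mul_of_mem x (zpow_mem ht k)⟩
  have : CompactSpace (Kˣ ⧸ H) :=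
    ⟨image_eq_univ ▸ annulus_compact.image QuotientGroup.continuous_mk⟩
  have : DiscreteTopology (Kˣ ⧸ H) := QuotientGroup.discreteTopology hH
  have : Finite (Kˣ ⧸ H) := finite_of_compact_of_discrete
  exact Subgroup.index_ne_zero_of_finite

theorem eq_zero_of_norm_zpow_eq_one {t : Kˣ} (ht : ‖(t : K)‖ < 1) {k : ℤ}
    (h : ‖(t : K)‖ ^ k = 1) : k = 0 :=
  (zpow_eq_one_iff_right₀ (norm_nonneg _) ht.ne).1 h

variable [IsUltrametricDist K]

theorem norm_zpow_mul_of_mem_principalUnits {r : ℝ≥0} {u : Kˣ}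
    (hu : u ∈ principalUnits K r) (t : Kˣ) (k : ℤ) :
    ‖((t ^ k * u : Kˣ) : K)‖ = ‖(t : K)‖ ^ k := by
  rw [Units.val_mul, norm_mul, Units.val_zpow_eq_zpow_val, norm_zpow, hu.1, mul_one]

theorem isOpen_principalUnits {r : ℝ≥0} (hr : 0 < r) :
    IsOpen (principalUnits K r : Set Kˣ) := by
  refine Subgroup.isOpen_of_mem_nhds _ (g := 1) ?_
  have cont : Continuous fun x : Kˣ => ‖(x : K) - 1‖ := by fun_prop
  have mem_nhds : {x : Kˣ | ‖(x : K) - 1‖ < min (r : ℝ) 1} ∈ nhds 1 :=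
    (isOpen_lt cont continuous_const).mem_nhds (by simp [hr])
  filter_upwards [mem_nhds] with x hx
  have norm_sub_one : ‖(x : K) - 1‖ < ‖(1 : K)‖ := by simpa using hx.trans_le (min_le_right _ _)
  exact ⟨(norm_eq_of_norm_sub_lt norm_sub_one).trans norm_one, hx.le.trans (min_le_left _ _)⟩

theorem powIndex_zpowers_sup_principalUnits {t : Kˣ} (ht : ‖(t : K)‖ < 1) (r : ℝ≥0) (n : ℕ) :
    powIndex (Subgroup.zpowers t ⊔ principalUnits K r : Subgroup Kˣ) n =
      n * powIndex (principalUnits K r) n := by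
  set f : Multiplicative ℤ × principalUnits K r →* Kˣ :=
    (zpowersHom Kˣ t).coprod (principalUnits K r).subtype
  have f_injective : Function.Injective f := by
    refine (injective_iff_map_eq_one f).2 ?_
    rintro ⟨k, u⟩ (hku : t ^ k.toAdd * (u : Kˣ) = 1)
    have hk : k.toAdd = 0 := eq_zero_of_norm_zpow_eq_one ht <| by
      rw [← norm_zpow_mul_of_mem_principalUnits u.2, hku, Units.val_one, norm_one]
    rw [hk, zpow_zero, one_mul] at hku
    exact Prod.ext (Multiplicative.toAdd.injective hk) (Subtype.ext hku)
  have f_range : f.range = Subgroup.zpowers t ⊔ principalUnits K r := by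
    ext x
    rw [Subgroup.mem_sup]
    constructor
    · rintro ⟨⟨k, u⟩, rfl⟩
      exact ⟨_, ⟨k.toAdd, rfl⟩, u, u.2, rfl⟩
    · rintro ⟨_, ⟨k, rfl⟩, u, hu, rfl⟩
      exact ⟨(Multiplicative.ofAdd k, ⟨u, hu⟩), rfl⟩
  rw [← f_range, ← powIndex_congr (MonoidHom.ofInjective f_injective), powIndex_prod,
    powIndex_multiplicative_int]

theorem zpowers_sup_principalUnits_inf_ker {t : Kˣ} (ht : ‖(t : K)‖ < 1) {r : ℝ≥0} {n : ℕ}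
    (hr : r < ‖(n : K)‖₊) :
    (Subgroup.zpowers t ⊔ principalUnits K r) ⊓ (powMonoidHom n : Kˣ →* Kˣ).ker = ⊥ := by
  have hn : n ≠ 0 := by
    rintro rfl
    simp at hr
  refine eq_bot_iff.2 ?_
  rintro x ⟨hx, hxn : x ^ n = 1⟩
  obtain ⟨_, ⟨k, rfl⟩, u, hu, rfl⟩ := Subgroup.mem_sup.1 hx
  have norm_eq_one : ‖((t ^ k * u : Kˣ) : K)‖ = 1 := by
    refine (pow_eq_one_iff_of_nonneg (norm_nonneg _) hn).1 ?_
    rw [← norm_pow, ← Units.val_pow_eq_pow_val, hxn, Units.val_one, norm_one]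
  obtain rfl : k = 0 := eq_zero_of_norm_zpow_eq_one ht <|
    (norm_zpow_mul_of_mem_principalUnits hu t k).symm.trans norm_eq_one
  simp only [zpow_zero, one_mul] at hxn ⊢
  exact eq_one_of_mem_principalUnits hr hu hxn

theorem powIndex_units_eq_mul_powIndex_principalUnits [ProperSpace K] {t : Kˣ}
    (ht : ‖(t : K)‖ < 1) {r : ℝ≥0} (hr : 0 < r) {n : ℕ} (hrn : r < ‖(n : K)‖₊) :
    powIndex Kˣ n = n * powIndex (principalUnits K r) n * Nat.card (rootsOfUnity n K) := by
  set S : Subgroup Kˣ := Subgroup.zpowers t ⊔ principalUnits K r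
  have S_index : S.index ≠ 0 :=
    index_ne_zero_of_isOpen (Subgroup.isOpen_mono le_sup_right (isOpen_principalUnits hr))
      (Subgroup.mem_sup_left (Subgroup.mem_zpowers t)) ht
  have herbrand := powIndex_mul_card_inf_ker S S_index n
  rwa [zpowers_sup_principalUnits_inf_ker ht hrn, Subgroup.card_bot, mul_one,
    powIndex_zpowers_sup_principalUnits ht, ← rootsOfUnity_eq_ker] at herbrand

end UnitGroup

section PadicExtension

variable {p : ℕ} [Fact p.Prime] {E : Type*}

theorem exists_reduction_pow (M : Type*) [AddCommGroup M] [Module ℤ_[p] M] [Module.Free ℤ_[p] M]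
    [Module.Finite ℤ_[p] M] (v : ℕ) :
    ∃ c : M →+ (Fin (Module.finrank ℤ_[p] M) → ZMod (p ^ v)),
      Function.Surjective c ∧ ∀ x, c x = 0 ↔ ∃ y : M, (p : ℤ_[p]) ^ v • y = x := by
  set b := (Module.finBasis ℤ_[p] M).equivFun
  refine ⟨((PadicInt.toZModPow v).toAddMonoidHom.compLeft _).comp b.toLinearMap.toAddMonoidHom,
    (ZMod.ringHom_surjective (PadicInt.toZModPow v)).comp_left.comp b.surjective, fun x => ?_⟩
  have toZModPow_eq_zero (a : ℤ_[p]) :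
      PadicInt.toZModPow v a = 0 ↔ ∃ t, (p : ℤ_[p]) ^ v * t = a := by
    rw [← RingHom.mem_ker, PadicInt.ker_toZModPow, Ideal.mem_span_singleton, dvd_def]
    simp only [eq_comm]
  calc _ ↔ ∀ i, PadicInt.toZModPow v (b x i) = 0 := funext_iff
    _ ↔ ∃ t, (p : ℤ_[p]) ^ v • t = b x := by
      simp only [toZModPow_eq_zero, Classical.skolem, funext_iff, Pi.smul_apply, smul_eq_mul]
    _ ↔ ∃ y, (p : ℤ_[p]) ^ v • y = x := by
      simp only [b.surjective.exists, ← map_smul, b.injective.eq_iff]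

section NormedField

variable [NormedField E] [NormedAlgebra ℚ_[p] E]

theorem nnnorm_natCast_eq_pow {n : ℕ} (hn : n ≠ 0) :
    ‖(n : E)‖₊ = ‖(p : E) ^ padicValNat p n‖₊ := by
  rw [← map_natCast (algebraMap ℚ_[p] E), ← map_natCast (algebraMap ℚ_[p] E) p, ← map_pow,
    nnnorm_algebraMap', nnnorm_algebraMap', ← NNReal.coe_inj, coe_nnnorm, coe_nnnorm,
    Padic.norm_p_pow, Padic.norm_eq_zpow_neg_valuation (by exact_mod_cast hn),
    Padic.valuation_natCast]

theorem norm_prime_lt_one : ‖(p : E)‖ < 1 := by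
  rw [← map_natCast (algebraMap ℚ_[p] E), norm_algebraMap']
  exact Padic.norm_p_lt_one

theorem prime_ne_zero : (p : E) ≠ 0 := by
  have : CharZero E := charZero_of_injective_algebraMap (algebraMap ℚ_[p] E).injective
  exact_mod_cast (Fact.out : p.Prime).ne_zero

variable [FiniteDimensional ℚ_[p] E] [Algebra ℤ_[p] E] [IsScalarTower ℤ_[p] ℚ_[p] E]

theorem isIntegral_padicInt_iff_norm_le_one {x : E} : IsIntegral ℤ_[p] x ↔ ‖x‖ ≤ 1 := by
  have monic : (minpoly ℚ_[p] x).Monic := minpoly.monic (Algebra.IsIntegral.isIntegral x)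
  rw [NormedAlgebra.norm_eq_spectralNorm ℚ_[p], spectralNorm, spectralValue_le_one_iff monic]
  constructor
  · intro hx n
    rw [minpoly.isIntegrallyClosed_eq_field_fractions' ℚ_[p] hx, Polynomial.coeff_map]
    exact PadicInt.norm_le_one _
  · intro hcoeff
    have lifts : minpoly ℚ_[p] x ∈ Polynomial.lifts (algebraMap ℤ_[p] ℚ_[p]) :=
      (Polynomial.lifts_iff_coeff_lifts _).2 fun n => ⟨⟨_, hcoeff n⟩, rfl⟩
    obtain ⟨q, hq, -, q_monic⟩ := Polynomial.lifts_and_natDegree_eq_and_monic lifts monic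
    refine ⟨q, q_monic, ?_⟩
    change Polynomial.aeval x q = 0
    rw [← Polynomial.aeval_map_algebraMap ℚ_[p], hq, minpoly.aeval]

theorem exists_reduction_pow_integralClosure (v : ℕ) :
    ∃ c : integralClosure ℤ_[p] E →+ (Fin (Module.finrank ℚ_[p] E) → ZMod (p ^ v)),
      Function.Surjective c ∧ ∀ x, c x = 0 ↔ ‖(x : E)‖ ≤ ‖(p : E) ^ v‖ := by
  have : Module.IsTorsionFree ℤ_[p] E := by
    rw [Module.isTorsionFree_iff_algebraMap_injective, IsScalarTower.algebraMap_eq ℤ_[p] ℚ_[p]]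
    exact (algebraMap ℚ_[p] E).injective.comp (IsFractionRing.injective ℤ_[p] ℚ_[p])
  have : Module.Free ℤ_[p] (integralClosure ℤ_[p] E) :=
    IsIntegralClosure.module_free ℤ_[p] ℚ_[p] E _
  have : IsNoetherian ℤ_[p] (integralClosure ℤ_[p] E) :=
    IsIntegralClosure.isNoetherian ℤ_[p] ℚ_[p] E _
  obtain ⟨c, c_surj, c_eq_zero⟩ := exists_reduction_pow (p := p) (integralClosure ℤ_[p] E) v
  rw [← IsIntegralClosure.rank ℤ_[p] ℚ_[p] E (integralClosure ℤ_[p] E)]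
  refine ⟨c, c_surj, fun x => (c_eq_zero x).trans ?_⟩
  have coe_smul (y : integralClosure ℤ_[p] E) :
      (((p : ℤ_[p]) ^ v • y : integralClosure ℤ_[p] E) : E) = (p : E) ^ v * y := by
    rw [Subalgebra.coe_smul, Algebra.smul_def, map_pow, map_natCast]
  constructor
  · rintro ⟨y, rfl⟩
    rw [coe_smul, norm_mul]
    exact mul_le_of_le_one_right (norm_nonneg _) (isIntegral_padicInt_iff_norm_le_one.1 y.2)
  · intro hx
    have norm_div_le : ‖(x : E) / (p : E) ^ v‖ ≤ 1 := by
      rw [norm_div]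
      exact div_le_one_of_le₀ hx (norm_nonneg _)
    exact ⟨⟨_, isIntegral_padicInt_iff_norm_le_one.2 norm_div_le⟩,
      Subtype.ext ((coe_smul _).trans (mul_div_cancel₀ _ (pow_ne_zero v prime_ne_zero)))⟩

variable [IsUltrametricDist E]

theorem exists_eq_one_add_mul {t : E} (ht : t ≠ 0) {u : Eˣ} (hu : u ∈ principalUnits E ‖t‖₊) :
    ∃ x : integralClosure ℤ_[p] E, (u : E) = 1 + t * x := by
  have norm_div_le : ‖((u : E) - 1) / t‖ ≤ 1 := by
    rw [norm_div]
    exact div_le_one_of_le₀ hu.2 (norm_nonneg _)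
  refine ⟨⟨_, isIntegral_padicInt_iff_norm_le_one.2 norm_div_le⟩, ?_⟩
  rw [mul_div_cancel₀ _ ht, add_sub_cancel]

theorem exists_monoidHom_principalUnits {t : E} (ht : t ≠ 0) {H : Type*} [AddCommGroup H]
    (c : integralClosure ℤ_[p] E →+ H)
    (hc : ∀ x : integralClosure ℤ_[p] E, ‖(x : E)‖ ≤ ‖t‖ → c x = 0) :
    ∃ f : principalUnits E ‖t‖₊ →* Multiplicative H,
      ∀ (u : principalUnits E ‖t‖₊) (x : integralClosure ℤ_[p] E),
        ((u : Eˣ) : E) = 1 + t * x → f u = Multiplicative.ofAdd (c x) := by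
  choose digit digit_spec using fun u : principalUnits E ‖t‖₊ =>
    exists_eq_one_add_mul (p := p) ht u.2
  have digit_eq {u : principalUnits E ‖t‖₊} {x : integralClosure ℤ_[p] E}
      (hx : ((u : Eˣ) : E) = 1 + t * x) : digit u = x :=
    Subtype.ext (mul_left_cancel₀ ht (add_left_cancel ((digit_spec u).symm.trans hx)))
  have c_digit_mul (u v : principalUnits E ‖t‖₊) :
      c (digit (u * v)) = c (digit u) + c (digit v) := by
    have coe_sub : ((digit (u * v) - digit u - digit v : integralClosure ℤ_[p] E) : E) =
        t * (digit u * digit v : integralClosure ℤ_[p] E) := by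
      have coe_mul := digit_spec (u * v)
      rw [Subgroup.coe_mul, Units.val_mul, digit_spec u, digit_spec v] at coe_mul
      refine mul_left_cancel₀ ht ?_
      push_cast
      linear_combination -coe_mul
    have norm_le : ‖((digit (u * v) - digit u - digit v : integralClosure ℤ_[p] E) : E)‖ ≤ ‖t‖ := by
      rw [coe_sub, norm_mul]
      exact mul_le_of_le_one_right (norm_nonneg _)
        (isIntegral_padicInt_iff_norm_le_one.1 (digit u * digit v).2)
    have c_sub := hc _ norm_le
    rwa [map_sub, map_sub, sub_sub, sub_eq_zero] at c_sub
  exact ⟨MonoidHom.mk' (fun u => Multiplicative.ofAdd (c (digit u)))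
    fun u v => congrArg Multiplicative.ofAdd (c_digit_mul u v),
    fun u x hx => congrArg (fun y => Multiplicative.ofAdd (c y)) (digit_eq hx)⟩

theorem relIndex_principalUnits {v : ℕ} {t : E} (ht : t ≠ 0) (ht1 : ‖t‖ < 1)
    (htv : ‖t‖ ≤ ‖(p : E) ^ v‖) :
    (principalUnits E (‖(p : E) ^ v‖₊ * ‖t‖₊)).relIndex (principalUnits E ‖t‖₊) =
      p ^ (v * Module.finrank ℚ_[p] E) := by
  obtain ⟨c, c_surj, c_eq_zero⟩ := exists_reduction_pow_integralClosure (p := p) (E := E) v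
  obtain ⟨f, hf⟩ := exists_monoidHom_principalUnits ht c fun x hx => (c_eq_zero x).2 (hx.trans htv)
  have ker_f : f.ker = (principalUnits E (‖(p : E) ^ v‖₊ * ‖t‖₊)).subgroupOf _ := by
    ext u
    obtain ⟨x, hx⟩ := exists_eq_one_add_mul (p := p) ht u.2
    rw [MonoidHom.mem_ker, hf u x hx, ofAdd_eq_one, c_eq_zero, Subgroup.mem_subgroupOf]
    have norm_sub : ‖((u : Eˣ) : E) - 1‖ = ‖(x : E)‖ * ‖t‖ := by
      rw [hx, add_sub_cancel_left, norm_mul, mul_comm]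
    rw [← mul_le_mul_iff_left₀ (norm_pos_iff.2 ht), ← norm_sub]
    exact ⟨fun h => ⟨u.2.1, h⟩, fun h => h.2⟩
  have surj_f : Function.Surjective f := fun z => by
    obtain ⟨x, hx⟩ := c_surj z.toAdd
    obtain ⟨u, hu, hux⟩ := exists_mem_principalUnits_of_norm_sub_one_le (r := ‖t‖₊) ht1
      (x := 1 + t * x) (by
        rw [add_sub_cancel_left, norm_mul]
        exact mul_le_of_le_one_right (norm_nonneg _) (isIntegral_padicInt_iff_norm_le_one.1 x.2))
    exact ⟨⟨u, hu⟩, by rw [hf ⟨u, hu⟩ x hux, hx, ofAdd_toAdd]⟩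
  rw [Subgroup.relIndex, ← ker_f, Subgroup.index_ker, MonoidHom.range_eq_top.2 surj_f,
    Subgroup.card_top, Nat.card_congr Multiplicative.toAdd, Nat.card_fun]
  simp [pow_mul]

theorem powIndex_units_of_normedAlgebra {n : ℕ} (hn : n ≠ 0) :
    powIndex Eˣ n =
      n * p ^ (padicValNat p n * Module.finrank ℚ_[p] E) * Nat.card (rootsOfUnity n E) := by
  have : ProperSpace E := FiniteDimensional.proper ℚ_[p] E
  have p_ne_zero : (p : E) ≠ 0 := prime_ne_zero (p := p)
  have norm_p_lt : ‖(p : E)‖ < 1 := norm_prime_lt_one (p := p)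
  set v := padicValNat p n
  have norm_n : ‖(n : E)‖₊ = ‖(p : E) ^ v‖₊ := nnnorm_natCast_eq_pow hn
  set t : E := (p : E) ^ (v + 1)
  have t_ne_zero : t ≠ 0 := pow_ne_zero _ p_ne_zero
  have norm_t_lt_one : ‖t‖ < 1 := by
    rw [norm_pow]
    exact pow_lt_one₀ (norm_nonneg _) norm_p_lt v.succ_ne_zero
  have norm_t_lt : ‖t‖ < ‖(p : E) ^ v‖ := by
    rw [norm_pow, norm_pow]
    exact pow_lt_pow_right_of_lt_one₀ (norm_pos_iff.2 p_ne_zero) norm_p_lt v.lt_succ_self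
  have norm_t_lt_norm_n : ‖t‖₊ < ‖(n : E)‖₊ := norm_n ▸ norm_t_lt
  rw [powIndex_units_eq_mul_powIndex_principalUnits (t := Units.mk0 _ p_ne_zero) norm_p_lt
    (norm_pos_iff.2 t_ne_zero) norm_t_lt_norm_n, powIndex_principalUnits norm_t_lt_norm_n, norm_n,
    relIndex_principalUnits t_ne_zero norm_t_lt_one norm_t_lt.le]

end NormedField

theorem powIndex_units (p : ℕ) [Fact p.Prime] (E : Type*) [Field E] [Algebra ℚ_[p] E]
    [FiniteDimensional ℚ_[p] E] {n : ℕ} (hn : n ≠ 0) :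
    powIndex Eˣ n =
      n * p ^ (padicValNat p n * Module.finrank ℚ_[p] E) * Nat.card (rootsOfUnity n E) := by
  let := spectralNorm.normedField ℚ_[p] E
  let := spectralNorm.normedAlgebra ℚ_[p] E
  have : IsUltrametricDist E :=
    IsUltrametricDist.isUltrametricDist_of_isNonarchimedean_norm isNonarchimedean_spectralNorm
  let : Algebra ℤ_[p] E := Algebra.compHom E (algebraMap ℤ_[p] ℚ_[p])
  have : IsScalarTower ℤ_[p] ℚ_[p] E := IsScalarTower.of_algebraMap_eq fun _ => rfl
  exact powIndex_units_of_normedAlgebra hn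

end PadicExtension

section QuadraticCharacter

variable {G : Type*} [Group G] {χ ε : G →* ℤˣ}

theorem exists_apply_eq_neg_one (hχ : χ ≠ 1) : ∃ s, χ s = -1 :=
  (not_forall.1 fun h => hχ (MonoidHom.ext h)).imp fun s =>
    (Int.units_eq_one_or (χ s)).resolve_left

theorem exists_apply_eq_neg_one_and_apply_eq_neg_one (hχ : χ ≠ 1) (hε : ε ≠ 1) :
    ∃ s, χ s = -1 ∧ ε s = -1 := by
  obtain ⟨g, χ_g⟩ := exists_apply_eq_neg_one hχ
  obtain ⟨h, ε_h⟩ := exists_apply_eq_neg_one hε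
  rcases Int.units_eq_one_or (ε g) with ε_g | ε_g
  · rcases Int.units_eq_one_or (χ h) with χ_h | χ_h
    · exact ⟨g * h, by rw [map_mul, χ_g, χ_h, mul_one], by rw [map_mul, ε_g, ε_h, one_mul]⟩
    · exact ⟨h, χ_h, ε_h⟩
  · exact ⟨g, χ_g, ε_g⟩

theorem index_ker_of_ne_one (hχ : χ ≠ 1) : χ.ker.index = 2 := by
  obtain ⟨s, hs⟩ := exists_apply_eq_neg_one hχ
  have surjective : Function.Surjective χ := fun z => by
    rcases Int.units_eq_one_or z with rfl | rfl
    · exact ⟨1, map_one χ⟩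
    · exact ⟨s, hs⟩
  rw [Subgroup.index_ker, MonoidHom.range_eq_top.2 surjective, Subgroup.card_top,
    Nat.card_eq_fintype_card, Fintype.card_units_int]

end QuadraticCharacter

section TwistedAction

variable {G A : Type*} [Group G] [CommGroup A]

/-- The subgroup `A^G` of the elements of `A` fixed by an action of `G` by endomorphisms. -/
def invariants (φ : G →* Monoid.End A) : Subgroup A where
  carrier := {a | ∀ g, φ g a = a}
  one_mem' _ := map_one _
  mul_mem' ha hb g := by rw [map_mul, ha g, hb g]
  inv_mem' ha g := by rw [map_inv, ha g]

/-- The twist of an action of `G` on an abelian group by a quadratic character `χ`: the new action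
of `g` is the old one followed by `a ↦ a ^ χ g`. -/
def twist (φ : G →* Monoid.End A) (χ : G →* ℤˣ) : G →* Monoid.End A where
  toFun g := (zpowGroupHom (χ g : ℤ)).comp (φ g)
  map_one' := by
    ext a
    rw [map_one, map_one]
    exact zpow_one a
  map_mul' g h := by
    ext a
    change φ (g * h) a ^ (χ (g * h) : ℤ) = φ g (φ h a ^ (χ h : ℤ)) ^ (χ g : ℤ)
    rw [map_mul, map_mul, map_zpow, ← zpow_mul, Units.val_mul, mul_comm (χ h : ℤ)]
    rfl

theorem twist_apply (φ : G →* Monoid.End A) (χ : G →* ℤˣ) (g : G) (a : A) :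
    twist φ χ g a = φ g a ^ (χ g : ℤ) :=
  rfl

theorem twist_one (φ : G →* Monoid.End A) : twist φ 1 = φ := by
  ext g a
  exact zpow_one _

theorem invariants_le_invariants_comp (φ : G →* Monoid.End A) (H : Subgroup G) :
    invariants φ ≤ invariants (φ.comp H.subtype) :=
  fun _ ha g => ha g

theorem invariants_twist_le_invariants_comp_ker (φ : G →* Monoid.End A) (χ : G →* ℤˣ) :
    invariants (twist φ χ) ≤ invariants (φ.comp χ.ker.subtype) := fun a ha g => by
  have ha_g := ha g
  rwa [twist_apply, MonoidHom.mem_ker.1 g.2, Units.val_one, zpow_one] at ha_g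

theorem apply_eq_apply_of_mem_invariants_comp_ker {φ : G →* Monoid.End A} {χ : G →* ℤˣ} {a : A}
    (ha : a ∈ invariants (φ.comp χ.ker.subtype)) {g h : G} (hgh : χ g = χ h) : φ g a = φ h a := by
  have mem_ker : h⁻¹ * g ∈ χ.ker := by rw [MonoidHom.mem_ker, map_mul, map_inv, hgh, inv_mul_cancel]
  calc φ g a = φ (h * (h⁻¹ * g)) a := by rw [mul_inv_cancel_left]
    _ = φ h (φ (h⁻¹ * g) a) := by rw [map_mul]; rfl
    _ = φ h a := congrArg (φ h) (ha ⟨_, mem_ker⟩)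

theorem exists_mul_eq_sq_of_mem_invariants_comp_ker {φ : G →* Monoid.End A} {χ : G →* ℤˣ}
    (hχ : χ ≠ 1) {a : A} (ha : a ∈ invariants (φ.comp χ.ker.subtype)) :
    ∃ b ∈ invariants φ, ∃ c ∈ invariants (twist φ χ), b * c = a ^ 2 := by
  obtain ⟨s, χ_s⟩ := exists_apply_eq_neg_one hχ
  have apply_apply (g : G) : φ g (φ s a) = φ (g * s) a := by rw [map_mul]; rfl
  have apply_of_one {g : G} (hg : χ g = 1) : φ g a = a ∧ φ g (φ s a) = φ s a := by
    rw [apply_apply]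
    constructor
    · rw [apply_eq_apply_of_mem_invariants_comp_ker ha (hg.trans χ.map_one.symm), map_one]
      rfl
    · exact apply_eq_apply_of_mem_invariants_comp_ker ha (by rw [map_mul, hg, one_mul])
  have apply_of_neg_one {g : G} (hg : χ g = -1) : φ g a = φ s a ∧ φ g (φ s a) = a := by
    rw [apply_apply]
    refine ⟨apply_eq_apply_of_mem_invariants_comp_ker ha (hg.trans χ_s.symm), ?_⟩
    rw [apply_eq_apply_of_mem_invariants_comp_ker ha (h := 1) (by simp [hg, χ_s]), map_one]
    rfl
  refine ⟨a * φ s a, fun g => ?_, a / φ s a, fun g => ?_, ?_⟩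
  · rcases Int.units_eq_one_or (χ g) with hg | hg
    · rw [map_mul, (apply_of_one hg).1, (apply_of_one hg).2]
    · rw [map_mul, (apply_of_neg_one hg).1, (apply_of_neg_one hg).2, mul_comm]
  · rcases Int.units_eq_one_or (χ g) with hg | hg
    · rw [twist_apply, map_div, (apply_of_one hg).1, (apply_of_one hg).2, hg, Units.val_one,
        zpow_one]
    · rw [twist_apply, map_div, (apply_of_neg_one hg).1, (apply_of_neg_one hg).2, hg,
        Units.val_neg, Units.val_one, zpow_neg_one, inv_div]
  · rw [mul_mul_div_cancel, sq]

theorem sq_eq_one_of_mem_invariants_twist {φ : G →* Monoid.End A} {χ : G →* ℤˣ} (hχ : χ ≠ 1)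
    {a : A} (ha : a ∈ invariants φ) (ha' : a ∈ invariants (twist φ χ)) : a ^ 2 = 1 := by
  obtain ⟨s, χ_s⟩ := exists_apply_eq_neg_one hχ
  have inv_eq := ha' s
  rw [twist_apply, ha s, χ_s, Units.val_neg, Units.val_one,
    zpow_neg_one] at inv_eq
  rw [sq, mul_eq_one_iff_inv_eq, inv_eq]

theorem powIndex_invariants_comp_ker (φ : G →* Monoid.End A) {χ : G →* ℤˣ} (hχ : χ ≠ 1) {n : ℕ}
    (hn : Odd n) : powIndex (invariants (φ.comp χ.ker.subtype)) n =
      powIndex (invariants φ) n * powIndex (invariants (twist φ χ)) n := by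
  set N := invariants (φ.comp χ.ker.subtype)
  rw [← powIndex_congr (Subgroup.subgroupOfEquivOfLe
      (invariants_le_invariants_comp φ χ.ker)) n,
    ← powIndex_congr (Subgroup.subgroupOfEquivOfLe
      (invariants_twist_le_invariants_comp_ker φ χ)) n]
  refine powIndex_eq_mul_of_sq_mem_sup hn _ _ (fun a => ?_) fun a ha => ?_
  · obtain ⟨b, hb, c, hc, hbc⟩ := exists_mul_eq_sq_of_mem_invariants_comp_ker hχ a.2
    exact Subgroup.mem_sup.2 ⟨⟨b, invariants_le_invariants_comp φ χ.ker hb⟩, hb,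
      ⟨c, invariants_twist_le_invariants_comp_ker φ χ hc⟩, hc, Subtype.ext hbc⟩
  · exact Subtype.ext (sq_eq_one_of_mem_invariants_twist hχ ha.1 ha.2)

end TwistedAction

section Realizes

variable {G A : Type*} [Group G] [CommGroup A] {n : ℕ} {φ : G →* Monoid.End A}
  {e : AddChar (ZMod n) A}

variable (φ e) in
/-- The element `u` realizes the action `ρ` of `G` on `ZMod n` if, once `e` identifies `ZMod n` with
the `n`-torsion of `A`, the translate `e(·) * u`, which is then the set of `n`-th roots of `u ^ n`,
is permuted by `G` as prescribed by `ρ`. -/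
def Realizes (u : A) (ρ : G →* Equiv.Perm (ZMod n)) : Prop :=
  ∀ g i, φ g (e i * u) = e (ρ g i) * u

variable (φ e) in
/-- The action `ρ` of `G` on `ZMod n` is affine, with linear part the action of `G` on the
`n`-torsion of `A`, once `e` identifies the latter with `ZMod n`. -/
def IsAffine (ρ : G →* Equiv.Perm (ZMod n)) : Prop :=
  ∀ g i, e (ρ g i) = φ g (e i) * e (ρ g 0)

theorem Realizes.apply {u : A} {ρ : G →* Equiv.Perm (ZMod n)} (h : Realizes φ e u ρ) (g : G) :
    φ g u = e (ρ g 0) * u := by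
  rw [← h g 0, AddChar.map_zero_eq_one, one_mul]

theorem Realizes.isAffine {u : A} {ρ : G →* Equiv.Perm (ZMod n)} (h : Realizes φ e u ρ) :
    IsAffine φ e ρ := fun g i => by
  rw [← mul_left_inj u, ← h g i, map_mul, h.apply, mul_assoc]

theorem IsAffine.realizes {u : A} {ρ : G →* Equiv.Perm (ZMod n)} (hρ : IsAffine φ e ρ)
    (hu : ∀ g, φ g u = e (ρ g 0) * u) : Realizes φ e u ρ := fun g i => by
  rw [map_mul, hu g, hρ g i, mul_assoc]

theorem Realizes.unique (he : Function.Injective e) {u : A} {ρ σ : G →* Equiv.Perm (ZMod n)}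
    (hρ : Realizes φ e u ρ) (hσ : Realizes φ e u σ) : ρ = σ := by
  ext g i
  exact he (mul_right_cancel ((hρ g i).symm.trans (hσ g i)))

theorem Realizes.mul_mem_invariants_iff {u v : A} {ρ : G →* Equiv.Perm (ZMod n)}
    (hu : Realizes φ e u ρ) : u⁻¹ * v ∈ invariants φ ↔ Realizes φ e v ρ := by
  constructor
  · intro h g i
    rw [← mul_inv_cancel_left u v, ← mul_assoc (e i), map_mul, hu g i, h g, mul_assoc]
  · intro hv g
    rw [map_mul, map_inv, hu.apply, hv.apply, mul_inv, mul_mul_mul_comm, inv_mul_cancel, one_mul]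

theorem addChar_pow_eq_one (e : AddChar (ZMod n) A) (i : ZMod n) : e i ^ n = 1 := by
  rw [← AddChar.map_nsmul_eq_pow, nsmul_eq_mul, CharP.cast_eq_zero, zero_mul,
    AddChar.map_zero_eq_one]

theorem Realizes.pow_mem_invariants {u : A} {ρ : G →* Equiv.Perm (ZMod n)}
    (h : Realizes φ e u ρ) : u ^ n ∈ invariants φ := fun g => by
  rw [map_pow, h.apply, mul_pow, addChar_pow_eq_one, one_mul]

theorem exists_realizes_of_pow_mem_invariants (he : Function.Injective e)
    (he' : ∀ a, a ^ n = 1 → ∃ i, e i = a) {u : A} (hu : u ^ n ∈ invariants φ) :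
    ∃ ρ : G →* Equiv.Perm (ZMod n), Realizes φ e u ρ := by
  have exists_eq (g : G) (i : ZMod n) : ∃ j, e j = φ g (e i * u) / u := by
    refine he' _ ?_
    rw [div_pow, ← map_pow, mul_pow, addChar_pow_eq_one, one_mul, hu g, div_self']
  choose π hπ using exists_eq
  have π_spec (g : G) (i : ZMod n) : e (π g i) * u = φ g (e i * u) := by
    rw [hπ, div_mul_cancel]
  have π_one (i : ZMod n) : π 1 i = i := he (mul_right_cancel (b := u) (by
    rw [π_spec, map_one]; rfl))
  have π_mul (g h : G) (i : ZMod n) : π (g * h) i = π g (π h i) :=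
    he (mul_right_cancel (b := u) (by rw [π_spec, π_spec, π_spec, φ.map_mul]; rfl))
  let hom : G →* Function.End (ZMod n) :=
    { toFun := π, map_one' := funext π_one, map_mul' := fun g h => funext (π_mul g h) }
  exact ⟨hom.toHomPerm, fun g i => (π_spec g i).symm⟩

theorem card_realizes (he : Function.Injective e) (he' : ∀ a, a ^ n = 1 → ∃ i, e i = a)
    (hn : Function.Surjective (powMonoidHom n : A →* A)) :
    Nat.card {ρ : G →* Equiv.Perm (ZMod n) // ∃ u, Realizes φ e u ρ} =
      powIndex (invariants φ) n * (invariants φ).relIndex (powMonoidHom n : A →* A).ker := by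
  rw [← relIndex_comap_powMonoidHom hn]
  choose f hf using fun u : (invariants φ).comap (powMonoidHom n) =>
    exists_realizes_of_pow_mem_invariants he he' u.2
  let F (u : (invariants φ).comap (powMonoidHom n)) :
      {ρ : G →* Equiv.Perm (ZMod n) // ∃ u, Realizes φ e u ρ} := ⟨f u, u, hf u⟩
  have F_surjective : Function.Surjective F := by
    rintro ⟨ρ, u, hu⟩
    exact ⟨⟨u, hu.pow_mem_invariants⟩, Subtype.ext ((hf _).unique he hu)⟩
  have ker_F : QuotientGroup.leftRel ((invariants φ).subgroupOf _) = Setoid.ker F := by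
    ext u v
    rw [QuotientGroup.leftRel_apply, Subgroup.mem_subgroupOf, Setoid.ker_def]
    refine (hf u).mul_mem_invariants_iff.trans ⟨fun h => ?_, fun h => ?_⟩
    · exact Subtype.ext (h.unique he (hf v))
    · rw [show f u = f v from congrArg Subtype.val h]
      exact hf v
  calc _ = Nat.card (Quotient (Setoid.ker F)) :=
        (Nat.card_congr (Setoid.quotientKerEquivOfSurjective F F_surjective)).symm
    _ = _ := by rw [← ker_F]; rfl

end Realizes

section SurjectiveHom

theorem nonempty_equiv_mulAut {G Q H : Type*} [Group G] [Group Q] [Group H] {π : G →* Q}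
    (hπ : Function.Surjective π) (e₀ : Q ≃* H) :
    Nonempty ({ρ : G →* H // Function.Surjective ρ ∧ ρ.ker = π.ker} ≃ MulAut H) := by
  let f (e : MulAut H) : {ρ : G →* H // Function.Surjective ρ ∧ ρ.ker = π.ker} :=
    ⟨(e₀.trans e : Q →* H).comp π, (e₀.trans e).surjective.comp hπ,
      MonoidHom.ker_mulEquiv_comp π (e₀.trans e)⟩
  refine ⟨(Equiv.ofBijective f ⟨fun e e' h => ?_, ?_⟩).symm⟩
  · ext x
    obtain ⟨g, hg⟩ := hπ (e₀.symm x)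
    have := DFunLike.congr_fun (congrArg Subtype.val h) g
    simpa [f, hg] using this
  · rintro ⟨ρ, hρ, ker_eq⟩
    refine ⟨e₀.symm.trans ((QuotientGroup.liftEquiv π.ker hπ rfl).symm.trans
      (QuotientGroup.liftEquiv π.ker hρ ker_eq.symm)), Subtype.ext (MonoidHom.ext fun g => ?_)⟩
    have symm_apply : (QuotientGroup.liftEquiv π.ker hπ rfl).symm (π g) = (g : G ⧸ π.ker) :=
      (MulEquiv.symm_apply_eq _).2 rfl
    simp [f, symm_apply]

end SurjectiveHom

section GaloisGroup

variable {F Ω : Type*} [Field F] [Field Ω] [Algebra F Ω] [IsGalois F Ω]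

theorem fixingSubgroup_fixedField_of_isOpen {H : Subgroup Gal(Ω/F)}
    (hH : IsOpen (H : Set Gal(Ω/F))) : (IntermediateField.fixedField H).fixingSubgroup = H :=
  InfiniteGalois.fixingSubgroup_fixedField ⟨H, H.isClosed_of_isOpen hH⟩

theorem finiteDimensional_and_isGalois_fixedField {H : Subgroup Gal(Ω/F)} [hn : H.Normal]
    (hH : IsOpen (H : Set Gal(Ω/F))) :
    FiniteDimensional F (IntermediateField.fixedField H) ∧
      IsGalois F (IntermediateField.fixedField H) := by
  rw [← InfiniteGalois.isOpen_and_normal_iff_finite_and_isGalois,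
    fixingSubgroup_fixedField_of_isOpen hH]
  exact ⟨hH, hn⟩

/-- The isomorphism `Gal(Ω^N/F) ≃ Gal(Ω/F) / N` for an open normal subgroup `N`. -/
noncomputable def galFixedFieldEquiv {N : Subgroup Gal(Ω/F)} [N.Normal]
    (hN : IsOpen (N : Set Gal(Ω/F))) : Gal(Ω/F) ⧸ N ≃* Gal(IntermediateField.fixedField N/F) :=
  let N' : ClosedSubgroup Gal(Ω/F) := ⟨N, N.isClosed_of_isOpen hN⟩
  have : N'.Normal := ‹N.Normal›
  InfiniteGalois.normalAutEquivQuotient N'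

theorem finrank_fixedField {N : Subgroup Gal(Ω/F)} [N.Normal]
    (hN : IsOpen (N : Set Gal(Ω/F))) :
    Module.finrank F (IntermediateField.fixedField N) = N.index := by
  obtain ⟨_, _⟩ := finiteDimensional_and_isGalois_fixedField hN
  rw [← IsGalois.card_aut_eq_finrank, ← Nat.card_congr (galFixedFieldEquiv hN).toEquiv,
    Subgroup.index]

theorem isOpen_and_fixedField_eq_iff {H : Subgroup Gal(Ω/F)} {K : IntermediateField F Ω}
    [FiniteDimensional F K] :
    IsOpen (H : Set Gal(Ω/F)) ∧ IntermediateField.fixedField H = K ↔ H = K.fixingSubgroup := by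
  constructor
  · rintro ⟨hH, rfl⟩
    exact (fixingSubgroup_fixedField_of_isOpen hH).symm
  · rintro rfl
    exact ⟨K.fixingSubgroup_isOpen, InfiniteGalois.fixedField_fixingSubgroup K⟩

theorem card_surjective_isOpen_ker (H : Type*) [Group H] :
    Nat.card {ρ : Gal(Ω/F) →* H // Function.Surjective ρ ∧ IsOpen (ρ.ker : Set Gal(Ω/F))} =
      Nat.card {K : IntermediateField F Ω //
        FiniteDimensional F K ∧ IsGalois F K ∧ Nonempty (Gal(K/F) ≃* H)} *
      Nat.card (MulAut H) := by
  let f : {ρ : Gal(Ω/F) →* H // Function.Surjective ρ ∧ IsOpen (ρ.ker : Set Gal(Ω/F))} →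
      {K : IntermediateField F Ω //
        FiniteDimensional F K ∧ IsGalois F K ∧ Nonempty (Gal(K/F) ≃* H)} := fun ρ =>
    have h := finiteDimensional_and_isGalois_fixedField ρ.2.2
    ⟨IntermediateField.fixedField ρ.1.ker, h.1, h.2,
      ⟨(galFixedFieldEquiv ρ.2.2).symm.trans
        (QuotientGroup.quotientKerEquivOfSurjective ρ.1 ρ.2.1)⟩⟩
  have fiber_equiv K : Nonempty ({ρ // f ρ = K} ≃ MulAut H) := by
    obtain ⟨K, _, _, ⟨e⟩⟩ := K
    have mem_fiber (ρ : Gal(Ω/F) →* H) :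
        (∃ h : Function.Surjective ρ ∧ IsOpen (ρ.ker : Set Gal(Ω/F)),
          f ⟨ρ, h⟩ = ⟨K, ‹_›, ‹_›, ⟨e⟩⟩) ↔
        Function.Surjective ρ ∧ ρ.ker = (AlgEquiv.restrictNormalHom K (K₁ := Ω)).ker := by
      rw [IntermediateField.restrictNormalHom_ker, ← isOpen_and_fixedField_eq_iff]
      exact ⟨fun ⟨h, hK⟩ => ⟨h.1, h.2, congrArg Subtype.val hK⟩,
        fun ⟨hρ, open_ker, hK⟩ => ⟨⟨hρ, open_ker⟩, Subtype.ext hK⟩⟩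
    obtain ⟨equiv⟩ := nonempty_equiv_mulAut (AlgEquiv.restrictNormalHom_surjective Ω) e
    exact ⟨(Equiv.subtypeSubtypeEquivSubtypeExists _ _).trans
      ((Equiv.subtypeEquivRight mem_fiber).trans equiv)⟩
  rw [← Nat.card_prod, ← Nat.card_congr (Equiv.sigmaFiberEquiv f), Nat.card_congr
    ((Equiv.sigmaCongrRight fun K => (fiber_equiv K).some).trans (Equiv.sigmaEquivProd _ _))]

end GaloisGroup

section Kummer

variable {F Ω : Type*} [Field F] [Field Ω] [Algebra F Ω]

section Resolvent

variable [IsGalois F Ω]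

theorem exists_apply_restrictNormalHom_eq {H : Type*} [Group H] {ρ : Gal(Ω/F) →* H}
    (hρ : IsOpen (ρ.ker : Set Gal(Ω/F))) [Normal F (IntermediateField.fixedField ρ.ker)] :
    ∃ τ : Gal(IntermediateField.fixedField ρ.ker/F) →* H,
      ∀ g, τ (AlgEquiv.restrictNormalHom _ g) = ρ g := by
  refine ⟨(QuotientGroup.kerLift ρ).comp ((galFixedFieldEquiv hρ).symm : _ →* _), fun g => ?_⟩
  have symm_apply : (galFixedFieldEquiv hρ).symm (AlgEquiv.restrictNormalHom _ g) =
      (g : Gal(Ω/F) ⧸ ρ.ker) := (MulEquiv.symm_apply_eq _).2 rfl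
  change QuotientGroup.kerLift ρ ((galFixedFieldEquiv hρ).symm _) = _
  rw [symm_apply, QuotientGroup.kerLift_mk]

/-- Galois descent: the equivariant maps `X → Ω` span the space of all maps. -/
theorem exists_equivariant_sum_mul_ne_zero {X : Type*} [Fintype X]
    {ρ : Gal(Ω/F) →* Equiv.Perm X} (hρ : IsOpen (ρ.ker : Set Gal(Ω/F))) {c : X → Ω} (hc : c ≠ 0) :
    ∃ T : X → Ω, (∀ g x, g (T x) = T (ρ g x)) ∧ ∑ x, c x * T x ≠ 0 := by
  classical
  set K := IntermediateField.fixedField ρ.ker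
  obtain ⟨_, _⟩ : FiniteDimensional F K ∧ IsGalois F K :=
    finiteDimensional_and_isGalois_fixedField hρ
  obtain ⟨ρK, ρK_restrict⟩ : ∃ ρK : Gal(K/F) →* Equiv.Perm X,
      ∀ g, ρK (AlgEquiv.restrictNormalHom K g) = ρ g := exists_apply_restrictNormalHom_eq hρ
  obtain ⟨y, hy⟩ : ∃ y, c y ≠ 0 := Function.ne_iff.1 hc
  let T (a : K) (x : X) : Ω := ∑ σ : Gal(K/F), if ρK σ y = x then (σ a : Ω) else 0
  have T_equivariant (a : K) (g : Gal(Ω/F)) (x : X) : g (T a x) = T a (ρ g x) := by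
    rw [map_sum]
    refine Fintype.sum_equiv (Equiv.mulLeft (AlgEquiv.restrictNormalHom K g)) _ _ fun σ => ?_
    simp only [Equiv.coe_mulLeft, map_mul, ρK_restrict, Equiv.Perm.mul_apply,
      EmbeddingLike.apply_eq_iff_eq, apply_ite g, map_zero, AlgEquiv.mul_apply,
      AlgEquiv.restrictNormalHom_apply]
  have sum_eq (a : K) : ∑ x, c x * T a x = ∑ σ : Gal(K/F), c (ρK σ y) * (σ a : Ω) := by
    simp only [T, Finset.mul_sum, mul_ite, mul_zero]
    rw [Finset.sum_comm]
    simp only [Finset.sum_ite_eq, Finset.mem_univ, if_true]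
  by_contra! h
  let toHom (σ : Gal(K/F)) : K →* Ω := (algebraMap K Ω : K →* Ω).comp (σ : K →* K)
  have toHom_injective : Function.Injective toHom := fun σ τ hστ =>
    AlgEquiv.ext fun a => (algebraMap K Ω).injective (DFunLike.congr_fun hστ a)
  have independent := (linearIndependent_monoidHom K Ω).comp toHom toHom_injective
  refine hy (?_ : c y = 0)
  have coeff_eq_zero := Fintype.linearIndependent_iff.1 independent (fun σ => c (ρK σ y))
    (funext fun a => ?_) 1
  · rwa [map_one] at coeff_eq_zero
  · rw [Finset.sum_apply]
    exact (sum_eq a).symm.trans (h (T a) (T_equivariant a))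

end Resolvent

variable {n : ℕ}

variable (F Ω) in
/-- The action of the Galois group of `Ω/F` on the multiplicative group of `Ω`. -/
abbrev unitsAction : Gal(Ω/F) →* Monoid.End Ωˣ :=
  MulDistribMulAction.toMonoidEnd _ _

theorem coe_unitsAction (g : Gal(Ω/F)) (u : Ωˣ) : ((unitsAction F Ω g u : Ωˣ) : Ω) = g u :=
  rfl

variable {e : AddChar (ZMod n) Ωˣ} {χ : Gal(Ω/F) →* ℤˣ} {ρ : Gal(Ω/F) →* Equiv.Perm (ZMod n)}

/-- The Lagrange resolvent `∑ i, (e i) ^ (-z) * T i` of a family `T` indexed by `ZMod n`, for an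
integer `z` and a character `e` of `ZMod n`. -/
noncomputable def lagrangeResolvent [NeZero n] (e : AddChar (ZMod n) Ωˣ) (T : ZMod n → Ω) (z : ℤ) :
    Ω :=
  ∑ i, ((e i ^ (-z) : Ωˣ) : Ω) * T i

theorem apply_lagrangeResolvent [NeZero n] (hρ : IsAffine (twist (unitsAction F Ω) χ) e ρ)
    {T : ZMod n → Ω} (hT : ∀ g x, g (T x) = T (ρ g x)) (g : Gal(Ω/F)) (z : ℤ) :
    g (lagrangeResolvent e T z) =
      ((e (ρ g 0) ^ (χ g * z) : Ωˣ) : Ω) * lagrangeResolvent e T (χ g * z) := by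
  have χ_sq : (χ g * χ g : ℤ) = 1 := by
    rw [← Units.val_mul, Int.units_mul_self, Units.val_one]
  have apply_e (i : ZMod n) :
      unitsAction F Ω g (e i) = (e (ρ g i) * (e (ρ g 0))⁻¹) ^ (χ g : ℤ) := by
    rw [hρ g i, mul_inv_cancel_right, twist_apply, ← zpow_mul, χ_sq, zpow_one]
  rw [lagrangeResolvent, lagrangeResolvent, map_sum, Finset.mul_sum]
  refine Fintype.sum_equiv (ρ g) _ _ fun i => ?_
  rw [map_mul, hT, ← coe_unitsAction, map_zpow, apply_e, ← mul_assoc, ← Units.val_mul,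
    ← zpow_mul, mul_neg, mul_zpow, inv_zpow', neg_neg, mul_comm (e (ρ g i) ^ _)]

theorem lagrangeResolvent_eq_zero_iff_of_apply [NeZero n]
    (hρ : IsAffine (twist (unitsAction F Ω) χ) e ρ) {T : ZMod n → Ω}
    (hT : ∀ g x, g (T x) = T (ρ g x)) (g : Gal(Ω/F)) (z : ℤ) :
    lagrangeResolvent e T (χ g * z) = 0 ↔ lagrangeResolvent e T z = 0 := by
  rw [← map_eq_zero_iff g g.injective (x := lagrangeResolvent e T z), apply_lagrangeResolvent hρ hT,
    Units.mul_right_eq_zero]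

theorem exists_lagrangeResolvent_one_ne_zero [IsGalois F Ω] [NeZero n]
    (hρ : IsOpen (ρ.ker : Set Gal(Ω/F))) (e : AddChar (ZMod n) Ωˣ) :
    ∃ T : ZMod n → Ω, (∀ g x, g (T x) = T (ρ g x)) ∧ lagrangeResolvent e T 1 ≠ 0 :=
  exists_equivariant_sum_mul_ne_zero hρ (Function.ne_iff.2 ⟨0, Units.ne_zero _⟩)

theorem exists_realizes_unitsAction [IsGalois F Ω] [NeZero n]
    (hρ : IsOpen (ρ.ker : Set Gal(Ω/F))) (hρ' : IsAffine (twist (unitsAction F Ω) 1) e ρ) :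
    ∃ u, Realizes (twist (unitsAction F Ω) 1) e u ρ := by
  obtain ⟨T, hT, hT'⟩ := exists_lagrangeResolvent_one_ne_zero hρ e
  refine ⟨Units.mk0 _ hT', hρ'.realizes fun g => Units.ext ?_⟩
  rw [twist_one, coe_unitsAction, Units.val_mk0, apply_lagrangeResolvent hρ' hT,
    MonoidHom.one_apply, Units.val_one, one_mul, zpow_one, Units.val_mul, Units.val_mk0]

theorem exists_twist_apply_eq_sq_mul [IsGalois F Ω] [NeZero n] (hχ : χ ≠ 1)
    (hρ : IsOpen (ρ.ker : Set Gal(Ω/F))) (hρ' : IsAffine (twist (unitsAction F Ω) χ) e ρ) :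
    ∃ u, ∀ g, twist (unitsAction F Ω) χ g u = e (ρ g 0) ^ 2 * u := by
  obtain ⟨T, hT, resolvent_one_ne⟩ := exists_lagrangeResolvent_one_ne_zero hρ e
  obtain ⟨s, χ_s⟩ := exists_apply_eq_neg_one hχ
  have resolvent_ne (z : ℤˣ) : lagrangeResolvent e T z ≠ 0 := by
    rcases Int.units_eq_one_or z with rfl | rfl
    · exact resolvent_one_ne
    · rw [← χ_s, ← mul_one (χ s : ℤ)]
      exact (lagrangeResolvent_eq_zero_iff_of_apply hρ' hT s 1).not.2 resolvent_one_ne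
  let r (z : ℤˣ) : Ωˣ := Units.mk0 _ (resolvent_ne z)
  have apply_r (g : Gal(Ω/F)) (z : ℤˣ) :
      unitsAction F Ω g (r z) = e (ρ g 0) ^ (χ g * z : ℤ) * r (χ g * z) :=
    Units.ext (apply_lagrangeResolvent hρ' hT g z)
  -- Where `χ g = -1`, the action of `g` swaps `r 1` and `r (-1)` up to roots of unity.
  refine ⟨r 1 / r (-1), fun g => ?_⟩
  have mul_div_mul_eq (a : Ωˣ) : a * r 1 / (a⁻¹ * r (-1)) = a ^ 2 * (r 1 / r (-1)) := by
    rw [mul_div_mul_comm, div_inv_eq_mul, sq]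
  rw [twist_apply, map_div, apply_r, apply_r]
  rcases Int.units_eq_one_or (χ g) with hg | hg <;>
    simp [hg, mul_div_mul_eq]

theorem exists_realizes_twist_unitsAction [IsGalois F Ω] (hχ : χ ≠ 1) (hn : Odd n)
    (hρ : IsOpen (ρ.ker : Set Gal(Ω/F))) (hρ' : IsAffine (twist (unitsAction F Ω) χ) e ρ) :
    ∃ u, Realizes (twist (unitsAction F Ω) χ) e u ρ := by
  have : NeZero n := ⟨hn.pos.ne'⟩
  obtain ⟨u, hu⟩ := exists_twist_apply_eq_sq_mul hχ hρ hρ'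
  obtain ⟨k, hk⟩ := hn
  have e_pow (i : ZMod n) : (e i ^ 2) ^ (k + 1) = e i := by
    rw [← pow_mul, show 2 * (k + 1) = n + 1 by omega, pow_succ, addChar_pow_eq_one, one_mul]
  exact ⟨u ^ (k + 1), hρ'.realizes fun g => by rw [map_pow, hu, mul_pow, e_pow]⟩

theorem Realizes.isOpen_ker [Algebra.IsAlgebraic F Ω] [NeZero n] (he : Function.Injective e)
    (hχ : IsOpen (χ.ker : Set Gal(Ω/F))) {u : Ωˣ}
    (hu : Realizes (twist (unitsAction F Ω) χ) e u ρ) : IsOpen (ρ.ker : Set Gal(Ω/F)) := by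
  let N : Subgroup Gal(Ω/F) :=
    χ.ker ⊓ ⨅ i, MulAction.stabilizer Gal(Ω/F) ((e i * u : Ωˣ) : Ω)
  have N_le : N ≤ ρ.ker := fun g hg => by
    ext i
    have stabilizes : unitsAction F Ω g (e i * u) = e i * u :=
      Units.ext (Subgroup.mem_iInf.1 hg.2 i)
    have apply_eq := hu g i
    rw [twist_apply, MonoidHom.mem_ker.1 hg.1, Units.val_one, zpow_one, stabilizes] at apply_eq
    rw [he (mul_right_cancel apply_eq.symm), Equiv.Perm.one_apply]
  refine Subgroup.isOpen_mono N_le (hχ.inter ?_)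
  change IsOpen ((⨅ i, _ : Subgroup Gal(Ω/F)) : Set Gal(Ω/F))
  rw [Subgroup.coe_iInf]
  exact isOpen_iInter_of_finite fun i => stabilizer_isOpen_of_isIntegral _

theorem card_isAffine [IsAlgClosed Ω] [IsGalois F Ω] [NeZero n] (hn : χ ≠ 1 → Odd n)
    (hχ : IsOpen (χ.ker : Set Gal(Ω/F))) (he : Function.Injective e)
    (he' : ∀ a, a ^ n = 1 → ∃ i, e i = a) :
    Nat.card {ρ : Gal(Ω/F) →* Equiv.Perm (ZMod n) //
        IsOpen (ρ.ker : Set Gal(Ω/F)) ∧ IsAffine (twist (unitsAction F Ω) χ) e ρ} =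
      powIndex (invariants (twist (unitsAction F Ω) χ)) n *
        (invariants (twist (unitsAction F Ω) χ)).relIndex (powMonoidHom n : Ωˣ →* Ωˣ).ker := by
  have pow_surjective : Function.Surjective (powMonoidHom n : Ωˣ →* Ωˣ) := fun u => by
    obtain ⟨z, hz⟩ := IsAlgClosed.exists_pow_nat_eq (u : Ω) (NeZero.pos n)
    have z_ne : z ≠ 0 := by
      rintro rfl
      exact u.ne_zero (by rw [← hz, zero_pow (NeZero.ne n)])
    exact ⟨Units.mk0 z z_ne, Units.ext hz⟩
  rw [← card_realizes he he' pow_surjective]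
  refine Nat.card_congr (Equiv.subtypeEquivRight fun ρ => ⟨fun ⟨hρ, hρ'⟩ => ?_, ?_⟩)
  · by_cases hχ' : χ = 1
    · subst hχ'
      exact exists_realizes_unitsAction hρ hρ'
    · exact exists_realizes_twist_unitsAction hχ' (hn hχ') hρ hρ'
  · rintro ⟨u, hu⟩
    exact ⟨hu.isOpen_ker he hχ, hu.isAffine⟩

end Kummer

section RootsOfUnity

variable {F Ω : Type*} [Field F] [Field Ω] [Algebra F Ω]

theorem exists_addChar_injective [IsAlgClosed Ω] {n : ℕ} [NeZero (n : Ω)] :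
    ∃ e : AddChar (ZMod n) Ωˣ, Function.Injective e ∧ ∀ a : Ωˣ, a ^ n = 1 → ∃ i, e i = a := by
  have : NeZero n := .of_neZero_natCast Ω
  obtain ⟨ζ, hζ⟩ := HasEnoughRootsOfUnity.exists_primitiveRoot Ω n
  obtain ⟨u, rfl⟩ := hζ.isUnit (NeZero.ne n)
  have hu : IsPrimitiveRoot u n := IsPrimitiveRoot.coe_units_iff.1 hζ
  refine ⟨AddChar.zmodChar n hu.pow_eq_one, fun i j h => ?_, fun a ha => ?_⟩
  · rw [AddChar.zmodChar_apply, AddChar.zmodChar_apply] at h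
    exact ZMod.val_injective n (hu.pow_inj i.val_lt j.val_lt h)
  · obtain ⟨i, _, hi⟩ := hζ.eq_pow_of_pow_eq_one (congrArg Units.val ha)
    obtain rfl : u ^ i = a := Units.ext hi
    exact ⟨i, AddChar.zmodChar_apply' _ i⟩

theorem powIndex_eq_powIndex_units {E : Type*} [Field E] (f : E →+* Ω) {S : Subgroup Ωˣ}
    (hS : ∀ u : Ωˣ, u ∈ S ↔ (u : Ω) ∈ f.range) (n : ℕ) : powIndex S n = powIndex Eˣ n := by
  have f_injective : Function.Injective (Units.map (f : E →* Ω)) := Units.map_injective f.injective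
  have range_eq : (Units.map (f : E →* Ω)).range = S := by
    ext u
    rw [hS]
    refine ⟨fun ⟨x, hx⟩ => ⟨x, congrArg Units.val hx⟩, fun ⟨x, hx⟩ => ?_⟩
    have x_ne : x ≠ 0 := by
      rintro rfl
      exact u.ne_zero (by rw [← hx, map_zero])
    exact ⟨Units.mk0 x x_ne, Units.ext hx⟩
  rw [powIndex_congr (MonoidHom.ofInjective f_injective) n, range_eq]

theorem powIndex_invariants_unitsAction [IsGalois F Ω] (n : ℕ) :
    powIndex (invariants (unitsAction F Ω)) n = powIndex Fˣ n := by
  refine powIndex_eq_powIndex_units (algebraMap F Ω) (fun u => ?_) n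
  refine Iff.trans ?_ (InfiniteGalois.mem_range_algebraMap_iff_fixed (u : Ω)).symm
  exact forall_congr' fun _ => Units.ext_iff

theorem powIndex_invariants_unitsAction_comp_subtype (H : Subgroup Gal(Ω/F)) (n : ℕ) :
    powIndex (invariants ((unitsAction F Ω).comp H.subtype)) n =
      powIndex (IntermediateField.fixedField H)ˣ n := by
  refine powIndex_eq_powIndex_units (algebraMap (IntermediateField.fixedField H) Ω) (fun u => ?_) n
  exact ⟨fun h => ⟨⟨u, fun g => congrArg Units.val (h g)⟩, rfl⟩,
    fun ⟨x, hx⟩ g => Units.ext ((congrArg g.1 hx).symm.trans ((x.2 g).trans hx))⟩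

end RootsOfUnity

section PermZModThree

variable {G : Type*} [Group G]

/-- The action `z • i = j + z * (i - j)` of the signs on `ZMod 3` that fixes the point `j`. -/
def reflectionHom (j : ZMod 3) : ℤˣ →* Equiv.Perm (ZMod 3) :=
  (MulAut.conj (Equiv.addRight j)).toMonoidHom.comp (MulAction.toPermHom ℤˣ (ZMod 3))

theorem sign_reflectionHom : ∀ (j : ZMod 3) (z : ℤˣ), Equiv.Perm.sign (reflectionHom j z) = z := by
  decide

theorem reflectionHom_apply_self : ∀ (j : ZMod 3) (z : ℤˣ), reflectionHom j z j = j := by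
  decide

theorem exists_reflectionHom_eq :
    ∀ σ : Equiv.Perm (ZMod 3), Equiv.Perm.sign σ = -1 → ∃ j, reflectionHom j (-1) = σ := by
  decide

theorem reflectionHom_neg_one_injective : Function.Injective fun j => reflectionHom j (-1) := by
  decide

theorem conj_reflectionHom : ∀ (σ : Equiv.Perm (ZMod 3)) (j : ZMod 3),
    MulAut.conj σ (reflectionHom j (-1)) = reflectionHom (σ j) (-1) := by
  decide

theorem reflectionHom_comp_injective {ε : G →* ℤˣ} (hε : ε ≠ 1) :
    Function.Injective fun j => (reflectionHom j).comp ε := fun i j hij => by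
  obtain ⟨s, ε_s⟩ := exists_apply_eq_neg_one hε
  have apply_s := DFunLike.congr_fun hij s
  simp only [MonoidHom.comp_apply] at apply_s
  rw [ε_s] at apply_s
  exact reflectionHom_neg_one_injective apply_s

theorem not_surjective_reflectionHom_comp (j : ZMod 3) (ε : G →* ℤˣ) :
    ¬ Function.Surjective ((reflectionHom j).comp ε) := fun h => by
  have moves : ∀ j : ZMod 3, ∃ σ : Equiv.Perm (ZMod 3), σ j ≠ j := by decide
  obtain ⟨σ, hσ⟩ := moves j
  obtain ⟨g, rfl⟩ := h σ
  exact hσ (reflectionHom_apply_self j (ε g))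

theorem surjective_of_sign_eq_neg_one {ρ : G →* Equiv.Perm (ZMod 3)} {s g : G}
    (hs : Equiv.Perm.sign (ρ s) = -1) (hg : ρ g ≠ 1) (hgs : ρ g ≠ ρ s) :
    Function.Surjective ρ := fun π => by
  have eq_word : ∀ σ τ : Equiv.Perm (ZMod 3), Equiv.Perm.sign τ = -1 → σ ≠ 1 → σ ≠ τ →
      ∀ π, π ∈ [1, τ, σ, σ * τ, τ * σ, σ * σ, τ * σ * τ] := by
    decide
  have mem_map : π ∈ [1, s, g, g * s, s * g, g * g, s * g * s].map ρ := by
    simpa only [List.map_cons, List.map_nil, map_mul, map_one] using eq_word _ _ hs hg hgs π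
  obtain ⟨x, _, hx⟩ := List.mem_map.1 mem_map
  exact ⟨x, hx⟩

theorem exists_reflectionHom_comp_eq {ε : G →* ℤˣ} (hε : ε ≠ 1) {ρ : G →* Equiv.Perm (ZMod 3)}
    (hρ : ¬ Function.Surjective ρ) (sign_eq : Equiv.Perm.sign.comp ρ = ε) :
    ∃ j, (reflectionHom j).comp ε = ρ := by
  obtain ⟨s, ε_s⟩ := exists_apply_eq_neg_one hε
  have sign_apply (g : G) : Equiv.Perm.sign (ρ g) = ε g := DFunLike.congr_fun sign_eq g
  obtain ⟨j, hj⟩ := exists_reflectionHom_eq (ρ s) ((sign_apply s).trans ε_s)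
  refine ⟨j, MonoidHom.ext fun g => ?_⟩
  rw [MonoidHom.comp_apply]
  by_cases hg : ρ g = 1
  · rw [hg, ← sign_apply, hg, map_one, map_one]
  · have hgs : ρ g = ρ s := by
      by_contra hgs
      exact hρ (surjective_of_sign_eq_neg_one ((sign_apply s).trans ε_s) hg hgs)
    rw [← sign_apply, hgs, sign_apply, ε_s, hj]

theorem card_not_surjective_of_sign_comp_eq {ε : G →* ℤˣ} (hε : ε ≠ 1) :
    Nat.card {ρ : G →* Equiv.Perm (ZMod 3) //
      ¬ Function.Surjective ρ ∧ Equiv.Perm.sign.comp ρ = ε} = 3 := by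
  let f (j : ZMod 3) : {ρ : G →* Equiv.Perm (ZMod 3) //
      ¬ Function.Surjective ρ ∧ Equiv.Perm.sign.comp ρ = ε} :=
    ⟨(reflectionHom j).comp ε, not_surjective_reflectionHom_comp j ε,
      MonoidHom.ext fun g => sign_reflectionHom j (ε g)⟩
  have f_bijective : Function.Bijective f :=
    ⟨fun i j hij => reflectionHom_comp_injective hε (congrArg Subtype.val hij), fun ⟨ρ, hρ⟩ =>
      (exists_reflectionHom_comp_eq hε hρ.1 hρ.2).imp fun _ h => Subtype.ext h⟩
  rw [← Nat.card_congr (Equiv.ofBijective f f_bijective), Nat.card_zmod]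

theorem conj_perm_zmod_three_bijective :
    Function.Bijective (MulAut.conj : Equiv.Perm (ZMod 3) →* MulAut (Equiv.Perm (ZMod 3))) := by
  constructor
  · intro σ τ h
    ext j
    refine reflectionHom_neg_one_injective ?_
    beta_reduce
    rw [← conj_reflectionHom, h, conj_reflectionHom]
  · intro f
    have exists_eq (j : ZMod 3) : ∃ i, reflectionHom i (-1) = f (reflectionHom j (-1)) := by
      have of_involutive : ∀ σ : Equiv.Perm (ZMod 3), σ * σ = 1 → σ ≠ 1 →
          ∃ i, reflectionHom i (-1) = σ := by decide
      have involutive : ∀ j, reflectionHom j (-1) * reflectionHom j (-1) = 1 := by decide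
      have ne_one : ∀ j, reflectionHom j (-1) ≠ 1 := by decide
      refine of_involutive _ ?_ fun h => ne_one j ?_
      · rw [← map_mul, involutive, map_one]
      · rwa [map_eq_one_iff f f.injective] at h
    choose σ hσ using exists_eq
    have σ_injective : Function.Injective σ := fun i j hij =>
      reflectionHom_neg_one_injective (f.injective (by rw [← hσ, hij, hσ]))
    let σ' : Equiv.Perm (ZMod 3) :=
      Equiv.ofBijective σ (Finite.injective_iff_bijective.1 σ_injective)
    have conj_apply (j : ZMod 3) :
        MulAut.conj σ' (reflectionHom j (-1)) = f (reflectionHom j (-1)) := by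
      rw [conj_reflectionHom, ← hσ]
      rfl
    refine ⟨σ', MulEquiv.ext fun π => ?_⟩
    have eq_mul : ∀ π : Equiv.Perm (ZMod 3), ∃ i j, π = reflectionHom i (-1) ∨
        π = reflectionHom i (-1) * reflectionHom j (-1) := by decide
    obtain ⟨i, j, rfl | rfl⟩ := eq_mul π <;> simp only [map_mul, conj_apply]

theorem card_mulAut_perm_zmod_three : Nat.card (MulAut (Equiv.Perm (ZMod 3))) = 6 := by
  rw [← Nat.card_congr (Equiv.ofBijective _ conj_perm_zmod_three_bijective), Nat.card_perm,
    Nat.card_zmod]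
  rfl

end PermZModThree

theorem card_subtype_and_add_card_subtype_and_not {α : Type*} (p q : α → Prop) [Finite {x // p x}] :
    Nat.card {x // p x ∧ q x} + Nat.card {x // p x ∧ ¬ q x} = Nat.card {x // p x} := by
  classical
  rw [← Nat.card_congr (Equiv.sumCompl fun x : {x // p x} => q x), Nat.card_sum,
    Nat.card_congr (Equiv.subtypeSubtypeEquivSubtypeInter p q),
    Nat.card_congr (Equiv.subtypeSubtypeEquivSubtypeInter p fun x => ¬ q x)]

section Quadratic

variable {F Ω : Type*} [Field F] [Field Ω] [Algebra F Ω]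

theorem ker_powMonoidHom_two_le_invariants :
    (powMonoidHom 2 : Ωˣ →* Ωˣ).ker ≤ invariants (unitsAction F Ω) := fun u hu g => Units.ext <| by
  rw [coe_unitsAction]
  rcases sq_eq_one_iff.1 (congrArg Units.val hu : (u : Ω) ^ 2 = 1) with h | h
  · rw [h, map_one]
  · rw [h, map_neg, map_one]

variable (F Ω) in
/-- The quadratic characters `Gal(Ω/F) → {±1}`, i.e. those that are continuous. They classify the
quadratic extensions of `F` inside `Ω`, the trivial one corresponding to `F` itself. -/
def quadraticCharacters : Set (Gal(Ω/F) →* ℤˣ) :=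
  {χ | IsOpen (χ.ker : Set Gal(Ω/F))}

theorem card_quadraticCharacters [NeZero (2 : Ω)] [IsAlgClosed Ω] [IsGalois F Ω] :
    Nat.card (quadraticCharacters F Ω) = powIndex Fˣ 2 := by
  have : NeZero ((2 : ℕ) : Ω) := ⟨by rw [Nat.cast_two]; exact NeZero.ne 2⟩
  obtain ⟨e, he, he'⟩ := exists_addChar_injective (Ω := Ω) (n := 2)
  have isAffine (ρ : Gal(Ω/F) →* Equiv.Perm (ZMod 2)) :
      IsAffine (unitsAction F Ω) e ρ := fun g i => by
    have apply_eq_add : ∀ (σ : Equiv.Perm (ZMod 2)) i, σ i = i + σ 0 := by decide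
    rw [apply_eq_add, AddChar.map_add_eq_mul,
      ker_powMonoidHom_two_le_invariants (addChar_pow_eq_one e i) g]
  let sign : Equiv.Perm (ZMod 2) ≃* ℤˣ := MulEquiv.ofBijective Equiv.Perm.sign (by decide)
  have card_eq := card_isAffine (F := F) (χ := 1) (fun h => (h rfl).elim) (by simp) he he'
  rw [twist_one, Subgroup.relIndex_eq_one.2 ker_powMonoidHom_two_le_invariants, mul_one,
    powIndex_invariants_unitsAction] at card_eq
  rw [← card_eq]
  refine Nat.card_congr (Equiv.subtypeEquiv sign.symm.monoidHomCongrRightEquiv fun χ => ?_)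
  have ker_eq : (sign.symm.monoidHomCongrRightEquiv χ).ker = χ.ker :=
    MonoidHom.ker_mulEquiv_comp χ sign.symm
  rw [ker_eq, and_iff_left (isAffine _)]
  exact Iff.rfl

end Quadratic

section Cubic

variable {F Ω : Type*} [Field F] [Field Ω] [Algebra F Ω]

/-- The character `ψ : Gal(Ω/F) → {±1}` describes the action of the Galois group on the `n`-torsion
of `Ωˣ`, which the character `e` parametrizes. -/
def IsCyclotomic {n : ℕ} (e : AddChar (ZMod n) Ωˣ) (ψ : Gal(Ω/F) →* ℤˣ) : Prop :=
  ∀ g i, unitsAction F Ω g (e i) = e (ψ g • i)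

variable {e : AddChar (ZMod 3) Ωˣ} {ψ : Gal(Ω/F) →* ℤˣ}

theorem exists_isCyclotomic [IsGalois F Ω] (he : Function.Injective e)
    (he' : ∀ a : Ωˣ, a ^ 3 = 1 → ∃ i, e i = a) :
    ∃ ψ : Gal(Ω/F) →* ℤˣ, IsOpen (ψ.ker : Set Gal(Ω/F)) ∧ IsCyclotomic e ψ := by
  obtain ⟨ρ, hρ⟩ : ∃ ρ, Realizes (twist (unitsAction F Ω) 1) e 1 ρ :=
    exists_realizes_of_pow_mem_invariants he he' (by rw [one_pow]; exact one_mem _)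
  have apply_eq_smul : ∀ σ : Equiv.Perm (ZMod 3), σ 0 = 0 → ∀ i, σ i = Equiv.Perm.sign σ • i := by
    decide
  have ker_le : ρ.ker ≤ (Equiv.Perm.sign.comp ρ).ker := fun g hg => by
    rw [MonoidHom.mem_ker, MonoidHom.comp_apply, MonoidHom.mem_ker.1 hg, map_one]
  refine ⟨Equiv.Perm.sign.comp ρ, Subgroup.isOpen_mono ker_le
    (hρ.isOpen_ker he (by simp)), fun g i => ?_⟩
  have apply_zero : ρ g 0 = 0 := he <| by
    rw [AddChar.map_zero_eq_one, ← mul_one (e (ρ g 0)), ← hρ.apply, map_one]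
  rw [MonoidHom.comp_apply, ← apply_eq_smul _ apply_zero, ← mul_one (e (ρ g i)), ← hρ, mul_one,
    twist_one]

theorem IsCyclotomic.twist_apply {n : ℕ} {e : AddChar (ZMod n) Ωˣ} (hψ : IsCyclotomic e ψ)
    (ε : Gal(Ω/F) →* ℤˣ) (g : Gal(Ω/F)) (i : ZMod n) :
    twist (unitsAction F Ω) (ε * ψ) g (e i) = e (ε g • i) := by
  rw [_root_.twist_apply, hψ, ← AddChar.map_zsmul_eq_zpow, ← Units.smul_def, smul_smul,
    MonoidHom.mul_apply, mul_assoc, Int.units_mul_self, mul_one]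

theorem IsCyclotomic.isAffine_iff (hψ : IsCyclotomic e ψ) (he : Function.Injective e)
    {ε : Gal(Ω/F) →* ℤˣ} {ρ : Gal(Ω/F) →* Equiv.Perm (ZMod 3)} :
    IsAffine (twist (unitsAction F Ω) (ε * ψ)) e ρ ↔ Equiv.Perm.sign.comp ρ = ε := by
  have affine_iff_sign : ∀ (σ : Equiv.Perm (ZMod 3)) (s : ℤˣ),
      (∀ i, σ i = s • i + σ 0) ↔ Equiv.Perm.sign σ = s := by
    decide
  rw [MonoidHom.ext_iff]
  refine forall_congr' fun g => ?_
  rw [MonoidHom.comp_apply, ← affine_iff_sign]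
  refine forall_congr' fun i => ?_
  rw [hψ.twist_apply, ← AddChar.map_add_eq_mul, he.eq_iff]

theorem IsCyclotomic.relIndex_invariants {n : ℕ} (hn : Odd n) {e : AddChar (ZMod n) Ωˣ}
    (hψ : IsCyclotomic e ψ) (he : Function.Injective e) (he' : ∀ a : Ωˣ, a ^ n = 1 → ∃ i, e i = a)
    {ε : Gal(Ω/F) →* ℤˣ} (hε : ε ≠ 1) :
    (invariants (twist (unitsAction F Ω) (ε * ψ))).relIndex (powMonoidHom n : Ωˣ →* Ωˣ).ker =
      n := by
  obtain ⟨s, ε_s⟩ := exists_apply_eq_neg_one hε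
  have inf_eq_bot : invariants (twist (unitsAction F Ω) (ε * ψ)) ⊓
      (powMonoidHom n : Ωˣ →* Ωˣ).ker = ⊥ := by
    rw [eq_bot_iff]
    rintro a ⟨ha, ha_pow⟩
    obtain ⟨i, rfl⟩ := he' a ha_pow
    have smul_eq := ha s
    rw [hψ.twist_apply, he.eq_iff] at smul_eq
    rw [ε_s, Units.neg_smul, one_smul] at smul_eq
    rw [Subgroup.mem_bot, not_not.1 fun hi => ZMod.ne_neg_self hn hi smul_eq.symm,
      AddChar.map_zero_eq_one]
  let f (i : ZMod n) : (powMonoidHom n : Ωˣ →* Ωˣ).ker := ⟨e i, addChar_pow_eq_one e i⟩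
  have f_bijective : Function.Bijective f :=
    ⟨fun i j hij => he (congrArg Subtype.val hij),
      fun a => (he' a a.2).imp fun _ h => Subtype.ext h⟩
  rw [← Subgroup.inf_relIndex_right, inf_eq_bot, Subgroup.relIndex_bot_left,
    ← Nat.card_congr (Equiv.ofBijective f f_bijective), Nat.card_zmod]

theorem isOpen_ker_mul {ε ψ : Gal(Ω/F) →* ℤˣ} (hε : IsOpen (ε.ker : Set Gal(Ω/F)))
    (hψ : IsOpen (ψ.ker : Set Gal(Ω/F))) : IsOpen ((ε * ψ).ker : Set Gal(Ω/F)) := by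
  refine Subgroup.isOpen_mono (H₁ := ε.ker ⊓ ψ.ker) (fun g hg => ?_) (hε.inter hψ)
  rw [MonoidHom.mem_ker, MonoidHom.mul_apply, hg.1, hg.2, one_mul]

theorem isOpen_ker_of_not_surjective {ε : Gal(Ω/F) →* ℤˣ} (hε : ε ≠ 1)
    (hε' : IsOpen (ε.ker : Set Gal(Ω/F))) {ρ : Gal(Ω/F) →* Equiv.Perm (ZMod 3)}
    (hρ : ¬ Function.Surjective ρ) (sign_eq : Equiv.Perm.sign.comp ρ = ε) :
    IsOpen (ρ.ker : Set Gal(Ω/F)) := by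
  obtain ⟨j, rfl⟩ := exists_reflectionHom_comp_eq hε hρ sign_eq
  refine Subgroup.isOpen_mono (fun g hg => ?_) hε'
  rw [MonoidHom.mem_ker, MonoidHom.comp_apply, MonoidHom.mem_ker.1 hg, map_one]

theorem card_sign_comp_eq [IsAlgClosed Ω] [IsGalois F Ω] (hψ : IsCyclotomic e ψ)
    (hψ' : IsOpen (ψ.ker : Set Gal(Ω/F))) (he : Function.Injective e)
    (he' : ∀ a : Ωˣ, a ^ 3 = 1 → ∃ i, e i = a) {ε : Gal(Ω/F) →* ℤˣ} (hε : ε ≠ 1)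
    (hε' : IsOpen (ε.ker : Set Gal(Ω/F))) :
    Nat.card {ρ : Gal(Ω/F) →* Equiv.Perm (ZMod 3) //
        IsOpen (ρ.ker : Set Gal(Ω/F)) ∧ Equiv.Perm.sign.comp ρ = ε} =
      3 * powIndex (invariants (twist (unitsAction F Ω) (ε * ψ))) 3 := by
  have odd_three : Odd 3 := by decide
  have card_eq := card_isAffine (fun _ => odd_three) (isOpen_ker_mul hε' hψ') he he'
  rw [hψ.relIndex_invariants odd_three he he' hε, mul_comm _ 3] at card_eq
  rw [← card_eq]
  exact Nat.card_congr (Equiv.subtypeEquivRight fun ρ => by rw [hψ.isAffine_iff he])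

/-- The continuous surjections `Gal(Ω/F) → S₃` lifting a quadratic character `ε` along the sign.
They cut out the `S₃`-extensions whose quadratic subextension is the one cut out by `ε`. -/
def surjectiveLifts (ε : Gal(Ω/F) →* ℤˣ) : Set (Gal(Ω/F) →* Equiv.Perm (ZMod 3)) :=
  {ρ | (Function.Surjective ρ ∧ IsOpen (ρ.ker : Set Gal(Ω/F))) ∧ Equiv.Perm.sign.comp ρ = ε}

theorem surjectiveLifts_one : surjectiveLifts (1 : Gal(Ω/F) →* ℤˣ) = ∅ := by
  refine Set.eq_empty_of_forall_notMem fun ρ ⟨⟨hρ, _⟩, sign_comp⟩ => ?_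
  obtain ⟨g, hg⟩ := hρ (Equiv.swap 0 1)
  have sign_eq : Equiv.Perm.sign (ρ g) = 1 := DFunLike.congr_fun sign_comp g
  rw [hg] at sign_eq
  exact absurd sign_eq (by decide)

theorem card_surjective_eq_sum [Fintype (quadraticCharacters F Ω)]
    (finite : ∀ χ ∈ quadraticCharacters F Ω, Finite (surjectiveLifts χ)) :
    Nat.card {ρ : Gal(Ω/F) →* Equiv.Perm (ZMod 3) //
        Function.Surjective ρ ∧ IsOpen (ρ.ker : Set Gal(Ω/F))} =
      ∑ χ : quadraticCharacters F Ω, Nat.card (surjectiveLifts χ.1) := by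
  let f (ρ : {ρ : Gal(Ω/F) →* Equiv.Perm (ZMod 3) //
      Function.Surjective ρ ∧ IsOpen (ρ.ker : Set Gal(Ω/F))}) :
      quadraticCharacters F Ω :=
    ⟨Equiv.Perm.sign.comp ρ.1, Subgroup.isOpen_mono (fun g hg => by
      rw [MonoidHom.mem_ker, MonoidHom.comp_apply, MonoidHom.mem_ker.1 hg, map_one]) ρ.2.2⟩
  have fiber_equiv χ : {ρ // f ρ = χ} ≃ surjectiveLifts χ.1 :=
    (Equiv.subtypeEquivRight fun _ => Subtype.ext_iff).trans
      (Equiv.subtypeSubtypeEquivSubtypeInter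
        (fun ρ : Gal(Ω/F) →* _ => Function.Surjective ρ ∧ IsOpen (ρ.ker : Set Gal(Ω/F)))
        fun ρ => Equiv.Perm.sign.comp ρ = χ.1)
  have (χ : quadraticCharacters F Ω) : Finite (surjectiveLifts χ.1) := finite χ χ.2
  rw [← Nat.card_sigma, ← Nat.card_congr (Equiv.sigmaFiberEquiv f),
    Nat.card_congr (Equiv.sigmaCongrRight fiber_equiv)]

theorem card_surjective_eq_add_two_mul (card_eq_four : Nat.card (quadraticCharacters F Ω) = 4)
    (hψ : ψ ∈ quadraticCharacters F Ω) (hψ' : ψ ≠ 1) (hψ_card : Nat.card (surjectiveLifts ψ) ≠ 0)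
    {b : ℕ} (hb : b ≠ 0)
    (h : ∀ ε ∈ quadraticCharacters F Ω, ε ≠ 1 → ε ≠ ψ → Nat.card (surjectiveLifts ε) = b) :
    Nat.card {ρ : Gal(Ω/F) →* Equiv.Perm (ZMod 3) //
        Function.Surjective ρ ∧ IsOpen (ρ.ker : Set Gal(Ω/F))} =
      Nat.card (surjectiveLifts ψ) + 2 * b := by
  classical
  have := Nat.finite_of_card_ne_zero (card_eq_four.trans_ne four_ne_zero)
  have := Fintype.ofFinite (quadraticCharacters F Ω)
  have finite (χ) (hχ : χ ∈ quadraticCharacters F Ω) : Finite (surjectiveLifts χ) := by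
    by_cases h_one : χ = 1
    · rw [h_one, surjectiveLifts_one]
      infer_instance
    · by_cases h_eq : χ = ψ
      · exact h_eq ▸ Nat.finite_of_card_ne_zero hψ_card
      · exact Nat.finite_of_card_ne_zero ((h χ hχ h_one h_eq).trans_ne hb)
  let one' : quadraticCharacters F Ω := ⟨1, by simp [quadraticCharacters]⟩
  let ψ' : quadraticCharacters F Ω := ⟨ψ, hψ⟩
  have one_ne : one' ≠ ψ' := fun h => hψ' (congrArg Subtype.val h).symm
  have card_one : Nat.card (surjectiveLifts one'.1) = 0 := by
    rw [surjectiveLifts_one, Nat.card_of_isEmpty]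
  have card_of_mem_compl : ∀ χ ∈ ({one', ψ'} : Finset (quadraticCharacters F Ω))ᶜ,
      Nat.card (surjectiveLifts χ.1) = b := fun χ hχ => by
    rw [Finset.mem_compl, Finset.mem_insert, Finset.mem_singleton, not_or] at hχ
    exact h χ χ.2 (fun h => hχ.1 (Subtype.ext h)) fun h => hχ.2 (Subtype.ext h)
  rw [card_surjective_eq_sum finite, ← Finset.sum_add_sum_compl {one', ψ'},
    Finset.sum_pair one_ne, Finset.sum_const_nat card_of_mem_compl, Finset.card_compl,
    Finset.card_pair one_ne, ← Nat.card_eq_fintype_card, card_eq_four, card_one, zero_add]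

theorem card_surjectiveLifts_add_three [IsAlgClosed Ω] [IsGalois F Ω]
    (hψ : IsCyclotomic e ψ) (hψ' : IsOpen (ψ.ker : Set Gal(Ω/F))) (he : Function.Injective e)
    (he' : ∀ a : Ωˣ, a ^ 3 = 1 → ∃ i, e i = a) {ε : Gal(Ω/F) →* ℤˣ} (hε : ε ≠ 1)
    (hε' : IsOpen (ε.ker : Set Gal(Ω/F)))
    (index_ne_zero : powIndex (invariants (twist (unitsAction F Ω) (ε * ψ))) 3 ≠ 0) :
    Nat.card (surjectiveLifts ε) + 3 =
      3 * powIndex (invariants (twist (unitsAction F Ω) (ε * ψ))) 3 := by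
  have card_eq := card_sign_comp_eq hψ hψ' he he' hε hε'
  have := Nat.finite_of_card_ne_zero (card_eq.trans_ne (mul_ne_zero three_ne_zero index_ne_zero))
  refine Eq.trans ?_ ((card_subtype_and_add_card_subtype_and_not _
    fun ρ : Gal(Ω/F) →* Equiv.Perm (ZMod 3) => Function.Surjective ρ).trans card_eq)
  refine congrArg₂ (· + ·) ?_ ((card_not_surjective_of_sign_comp_eq hε).symm.trans ?_)
  · exact Nat.card_congr (Equiv.subtypeEquivRight fun ρ => by
      rw [surjectiveLifts, Set.mem_ofPred_eq]
      tauto)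
  · have := @isOpen_ker_of_not_surjective F Ω _ _ _ _ hε hε'
    exact Nat.card_congr (Equiv.subtypeEquivRight fun ρ => by tauto)

end Cubic

section PadicInvariants

theorem powIndex_units_of_forall_not_isPrimitiveRoot {p : ℕ} [Fact p.Prime] {E : Type*} [Field E]
    [Algebra ℚ_[p] E] [FiniteDimensional ℚ_[p] E] (hE : ¬ ∃ ζ : E, IsPrimitiveRoot ζ p) :
    powIndex Eˣ p = p ^ (Module.finrank ℚ_[p] E + 1) := by
  have p_prime : p.Prime := Fact.out
  have rootsOfUnity_eq_bot : rootsOfUnity p E = ⊥ := by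
    refine (Subgroup.eq_bot_iff_forall _).2 fun ζ hζ => of_not_not fun ζ_ne_one => hE ⟨ζ, ?_⟩
    rw [IsPrimitiveRoot.coe_units_iff, IsPrimitiveRoot.iff_orderOf]
    exact orderOf_eq_prime ((mem_rootsOfUnity p ζ).1 hζ) ζ_ne_one
  rw [powIndex_units p E p_prime.ne_zero, rootsOfUnity_eq_bot, Subgroup.card_bot,
    padicValNat_self, one_mul, mul_one, pow_succ']

theorem powIndex_units_two {p : ℕ} [Fact p.Prime] (hp : p ≠ 2) (E : Type*) [Field E]
    [Algebra ℚ_[p] E] [FiniteDimensional ℚ_[p] E] : powIndex Eˣ 2 = 4 := by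
  have : CharZero E := charZero_of_injective_algebraMap (algebraMap ℚ_[p] E).injective
  have card_rootsOfUnity : Nat.card (rootsOfUnity 2 E) = 2 :=
    (IsPrimitiveRoot.neg_one (R := E) 0 two_ne_zero.symm).card_rootsOfUnity
  have padicValNat_two : padicValNat p 2 = 0 := padicValNat_primes hp
  rw [powIndex_units p E two_ne_zero, padicValNat_two, card_rootsOfUnity, zero_mul, pow_zero,
    mul_one]

variable {p : ℕ} [Fact p.Prime] {F Ω : Type*} [Field F] [Field Ω] [Algebra ℚ_[p] F]
  [FiniteDimensional ℚ_[p] F] [Algebra F Ω] [Algebra ℚ_[p] Ω] [IsScalarTower ℚ_[p] F Ω]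
  [IsGalois F Ω]

theorem powIndex_invariants_twist_unitsAction (hp : p ≠ 2) {χ : Gal(Ω/F) →* ℤˣ} (hχ : χ ≠ 1)
    (hχ' : IsOpen (χ.ker : Set Gal(Ω/F)))
    (hζ : ¬ ∃ ζ : IntermediateField.fixedField χ.ker, IsPrimitiveRoot ζ p) :
    powIndex (invariants (twist (unitsAction F Ω) χ)) p = p ^ Module.finrank ℚ_[p] F := by
  have p_prime : p.Prime := Fact.out
  have hζ' : ¬ ∃ ζ : F, IsPrimitiveRoot ζ p := fun ⟨ζ, h⟩ =>
    hζ ⟨_, h.map_of_injective (algebraMap F (IntermediateField.fixedField χ.ker)).injective⟩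
  obtain ⟨_, _⟩ := finiteDimensional_and_isGalois_fixedField hχ'
  have : FiniteDimensional ℚ_[p] (IntermediateField.fixedField χ.ker) := .trans ℚ_[p] F _
  have finrank_eq : Module.finrank ℚ_[p] (IntermediateField.fixedField χ.ker) =
      Module.finrank ℚ_[p] F * 2 := by
    rw [← Module.finrank_mul_finrank ℚ_[p] F, finrank_fixedField hχ', index_ker_of_ne_one hχ]
  have index_mul := powIndex_invariants_comp_ker (unitsAction F Ω) hχ (p_prime.odd_of_ne_two hp)
  rw [powIndex_invariants_unitsAction_comp_subtype, powIndex_invariants_unitsAction,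
    powIndex_units_of_forall_not_isPrimitiveRoot hζ,
    powIndex_units_of_forall_not_isPrimitiveRoot hζ', finrank_eq, mul_two, add_right_comm,
    pow_add] at index_mul
  exact (Nat.eq_of_mul_eq_mul_left (pow_pos p_prime.pos _) index_mul).symm

end PadicInvariants

section CyclotomicCharacter

variable {F Ω : Type*} [Field F] [Field Ω] [Algebra F Ω] {n : ℕ} {e : AddChar (ZMod n) Ωˣ}
  {ψ : Gal(Ω/F) →* ℤˣ}

theorem IsCyclotomic.exists_isPrimitiveRoot [IsGalois F Ω] (he : Function.Injective e)
    (h : IsCyclotomic e (1 : Gal(Ω/F) →* ℤˣ)) : ∃ ζ : F, IsPrimitiveRoot ζ n := by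
  obtain ⟨ζ, hζ⟩ : (e 1 : Ω) ∈ (algebraMap F Ω).range := by
    refine (InfiniteGalois.mem_range_algebraMap_iff_fixed _).2 fun g => ?_
    rw [← coe_unitsAction, h, MonoidHom.one_apply, one_smul]
  have e_one_primitive : IsPrimitiveRoot (e 1) n := by
    refine ⟨addChar_pow_eq_one e 1, fun k hk => (ZMod.natCast_eq_zero_iff k n).1 (he ?_)⟩
    rw [← nsmul_one, AddChar.map_nsmul_eq_pow, hk, AddChar.map_zero_eq_one]
  refine ⟨ζ, .of_map_of_injective (f := algebraMap F Ω) ?_ (algebraMap F Ω).injective⟩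
  rw [hζ]
  exact IsPrimitiveRoot.coe_units_iff.2 e_one_primitive

theorem eq_one_of_smul_eq_self (hn : Odd n) {z : ℤˣ} {i : ZMod n} (hi : i ≠ 0)
    (h : z • i = i) : z = 1 := by
  refine (Int.units_eq_one_or z).resolve_right ?_
  rintro rfl
  rw [Units.neg_smul, one_smul] at h
  exact ZMod.ne_neg_self hn hi h.symm

theorem IsCyclotomic.apply_eq_one (hψ : IsCyclotomic e ψ) (he : Function.Injective e)
    (he' : ∀ a : Ωˣ, a ^ n = 1 → ∃ i, e i = a) (hn : Odd n) (hn' : 1 < n)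
    {H : Subgroup Gal(Ω/F)} {ζ : IntermediateField.fixedField H} (hζ : IsPrimitiveRoot ζ n)
    {g : Gal(Ω/F)} (hg : g ∈ H) : ψ g = 1 := by
  have coe_ζ_primitive : IsPrimitiveRoot (ζ : Ω) n :=
    hζ.map_of_injective (algebraMap (IntermediateField.fixedField H) Ω).injective
  obtain ⟨u, u_eq⟩ := coe_ζ_primitive.isUnit (Nat.ne_zero_of_lt hn')
  have u_primitive : IsPrimitiveRoot u n := IsPrimitiveRoot.coe_units_iff.1 (u_eq ▸ coe_ζ_primitive)
  obtain ⟨i, rfl⟩ := he' u u_primitive.pow_eq_one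
  have i_ne_zero : i ≠ 0 := by
    rintro rfl
    exact u_primitive.ne_one hn' e.map_zero_eq_one
  refine eq_one_of_smul_eq_self hn i_ne_zero (he (Units.ext ?_))
  rw [← hψ, coe_unitsAction, u_eq]
  exact ζ.2 ⟨g, hg⟩

theorem IsCyclotomic.not_exists_isPrimitiveRoot_fixedField (hψ : IsCyclotomic e ψ)
    (he : Function.Injective e) (he' : ∀ a : Ωˣ, a ^ n = 1 → ∃ i, e i = a) (hn : Odd n)
    (hn' : 1 < n) {ε : Gal(Ω/F) →* ℤˣ} (hε : ε ≠ 1) (hψ_ne_one : ψ ≠ 1) :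
    ¬ ∃ ζ : IntermediateField.fixedField (ε * ψ).ker, IsPrimitiveRoot ζ n := by
  rintro ⟨ζ, hζ⟩
  obtain ⟨g, ε_g, ψ_g⟩ := exists_apply_eq_neg_one_and_apply_eq_neg_one hε hψ_ne_one
  have g_mem : g ∈ (ε * ψ).ker := by
    rw [MonoidHom.mem_ker, MonoidHom.mul_apply, ε_g, ψ_g, Int.units_mul_self]
  have ψ_g' : ψ g = 1 := hψ.apply_eq_one he he' hn hn' hζ g_mem
  exact absurd (ψ_g.symm.trans ψ_g') (by decide)

end CyclotomicCharacter

section Counting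

variable {F Ω : Type*} [Field F] [Field Ω] [Algebra ℚ_[3] F] [FiniteDimensional ℚ_[3] F]
  [Algebra F Ω] [IsGalois F Ω] [IsAlgClosed Ω]
  {e : AddChar (ZMod 3) Ωˣ} {ψ : Gal(Ω/F) →* ℤˣ}

theorem IsCyclotomic.card_surjectiveLifts_self_add_three (hF : ¬ ∃ ζ : F, IsPrimitiveRoot ζ 3)
    (hψ : IsCyclotomic e ψ) (hψ' : IsOpen (ψ.ker : Set Gal(Ω/F))) (hψ_ne_one : ψ ≠ 1)
    (he : Function.Injective e) (he' : ∀ a : Ωˣ, a ^ 3 = 1 → ∃ i, e i = a) :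
    Nat.card (surjectiveLifts ψ) + 3 = 3 * 3 ^ (Module.finrank ℚ_[3] F + 1) := by
  have ψ_mul_self : ψ * ψ = 1 := MonoidHom.ext fun g => Int.units_mul_self (ψ g)
  have index_eq : powIndex (invariants (twist (unitsAction F Ω) (ψ * ψ))) 3 =
      3 ^ (Module.finrank ℚ_[3] F + 1) := by
    rw [ψ_mul_self, twist_one, powIndex_invariants_unitsAction,
      powIndex_units_of_forall_not_isPrimitiveRoot hF]
  rw [card_surjectiveLifts_add_three hψ hψ' he he' hψ_ne_one hψ' (by rw [index_eq]; positivity),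
    index_eq]

variable [Algebra ℚ_[3] Ω] [IsScalarTower ℚ_[3] F Ω]

theorem IsCyclotomic.card_surjectiveLifts_add_three_of_ne (hψ : IsCyclotomic e ψ)
    (hψ' : IsOpen (ψ.ker : Set Gal(Ω/F))) (hψ_ne_one : ψ ≠ 1) (he : Function.Injective e)
    (he' : ∀ a : Ωˣ, a ^ 3 = 1 → ∃ i, e i = a) {ε : Gal(Ω/F) →* ℤˣ}
    (hε' : IsOpen (ε.ker : Set Gal(Ω/F))) (hε : ε ≠ 1) (ε_ne : ε ≠ ψ) :
    Nat.card (surjectiveLifts ε) + 3 = 3 * 3 ^ Module.finrank ℚ_[3] F := by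
  have mul_ne_one : ε * ψ ≠ 1 := fun h => ε_ne <| MonoidHom.ext fun g => by
    rw [← mul_one (ε g), ← Int.units_mul_self (ψ g), ← mul_assoc, ← MonoidHom.mul_apply, h,
      MonoidHom.one_apply, one_mul]
  have index_eq := powIndex_invariants_twist_unitsAction (Ω := Ω) (by decide) mul_ne_one
    (isOpen_ker_mul hε' hψ')
    (hψ.not_exists_isPrimitiveRoot_fixedField he he' (by decide) (by decide) hε hψ_ne_one)
  rw [card_surjectiveLifts_add_three hψ hψ' he he' hε hε' (by rw [index_eq]; positivity), index_eq]

theorem card_surjective_perm_zmod_three_add_nine (hF : ¬ ∃ ζ : F, IsPrimitiveRoot ζ 3) :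
    Nat.card {ρ : Gal(Ω/F) →* Equiv.Perm (ZMod 3) //
        Function.Surjective ρ ∧ IsOpen (ρ.ker : Set Gal(Ω/F))} + 9 =
      15 * 3 ^ Module.finrank ℚ_[3] F := by
  have : CharZero Ω := charZero_of_injective_algebraMap (algebraMap ℚ_[3] Ω).injective
  have : NeZero ((3 : ℕ) : Ω) := inferInstance
  obtain ⟨e, he, he'⟩ := exists_addChar_injective (Ω := Ω) (n := 3)
  obtain ⟨ψ, hψ', hψ⟩ := exists_isCyclotomic (F := F) he he'
  have ψ_ne_one : ψ ≠ 1 := by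
    rintro rfl
    exact hF (hψ.exists_isPrimitiveRoot he)
  have card_self := hψ.card_surjectiveLifts_self_add_three hF hψ' ψ_ne_one he he'
  have card_other (ε : Gal(Ω/F) →* ℤˣ) (hε' : IsOpen (ε.ker : Set Gal(Ω/F))) :=
    hψ.card_surjectiveLifts_add_three_of_ne hψ' ψ_ne_one he he' hε'
  have three_mul_le : 3 * 3 ^ 1 ≤ 3 * 3 ^ Module.finrank ℚ_[3] F :=
    Nat.mul_le_mul_left 3 (Nat.pow_le_pow_right three_pos Module.finrank_pos)
  have card_quadraticCharacters_eq : Nat.card (quadraticCharacters F Ω) = 4 :=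
    card_quadraticCharacters.trans (powIndex_units_two (p := 3) (by decide) F)
  rw [card_surjective_eq_add_two_mul card_quadraticCharacters_eq hψ' ψ_ne_one (by omega)
    (b := 3 * 3 ^ Module.finrank ℚ_[3] F - 3) (by omega)
    fun ε hε' hε hεψ => Nat.eq_sub_of_add_eq (card_other ε hε' hε hεψ)]
  omega

end Counting

theorem stmt3 (F : Type*) [Field F] [Algebra ℚ_[3] F] [FiniteDimensional ℚ_[3] F]
    (m : ℕ) (hm : Module.finrank ℚ_[3] F = m)
    (hμ3 : ¬ ∃ ζ : F, IsPrimitiveRoot ζ 3) :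
    nu F (Equiv.Perm (Fin 3)) = (5 * 3 ^ m - 3) / 2 ∧
    nu F (Equiv.Perm (Fin 3)) = 3 ^ m + (3 ^ (m + 1) - 3) / 2 := by
  have : CharZero F := charZero_of_injective_algebraMap (algebraMap ℚ_[3] F).injective
  have card_surjective_eq := card_surjective_isOpen_ker (F := F) (Ω := AlgebraicClosure F)
    (Equiv.Perm (ZMod 3))
  rw [card_mulAut_perm_zmod_three] at card_surjective_eq
  have card_surjective_add_nine :=
    card_surjective_perm_zmod_three_add_nine (Ω := AlgebraicClosure F) hμ3
  rw [card_surjective_eq, hm] at card_surjective_add_nine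
  -- `ZMod 3` unfolds to `Fin 3`.
  have nu_mul_six_add_nine : nu F (Equiv.Perm (Fin 3)) * 6 + 9 = 15 * 3 ^ m :=
    card_surjective_add_nine
  omega
end

section
/- Let p be a prime with p ≥ 3 and let F be a finite extension of ℚ_p. Then there is no Galois extension of F with Galois group isomorphic to the symmetric group S₄ and no Galois extension of F with Galois group isomorphic to the alternating group A₄; that is, ν(F,S₄) = ν(F,A₄) = 0. -/
/-!
A local field `L` of odd residue characteristic has exactly four square classes: `Lˣ` is the product
of the units of its valuation ring and an infinite cyclic group, and by Hensel's lemma a unit is a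
square if and only if its residue is.

Suppose `A₄` acts faithfully on a finite extension `K` of such a field. Let `M` and `E` be the fixed
fields of the Klein four-group and of `A₄`. Simultaneous eigenvectors of the Klein four-group are
square roots in `K` of two independent square classes of `M`. As `M` has only four square classes,
each of its elements becomes a square in `K`. In particular an element of `E` is a square `r²` in
`K`. An element `g` of `A₄` sends `r` to `±r`, and the sign is `+` when `g` has odd order. Since
`A₄` is generated by its `3`-cycles, `r` lies in `E`. Thus every element of `E` is a square in `E`,
although `E` has four square classes.
-/

open IsLocalRing IntermediateField
open scoped NormedField Valued

section SquareClasses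

theorem isSquare_units_val_iff {M : Type*} [CommMonoid M] {u : Mˣ} :
    IsSquare (u : M) ↔ IsSquare u := by
  refine ⟨fun ⟨r, hr⟩ ↦ ?_, fun h ↦ h.map (Units.coeHom M)⟩
  obtain ⟨v, rfl⟩ : IsUnit r := isUnit_of_mul_isUnit_left (hr ▸ u.isUnit)
  exact ⟨v, Units.ext hr⟩

theorem eq_top_of_index_eq_four {G : Type*} [Group G] {S P : Subgroup G} (hS : S.index = 4)
    (hSP : S ≤ P) {b c : G} (hb : b ∈ P) (hc : c ∈ P) (hbS : b ∉ S) (hcS : c ∉ S)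
    (hbcS : b * c ∉ S) : P = ⊤ := by
  have hmul : S.relIndex P * P.index = 4 := hS ▸ Subgroup.relIndex_mul_index hSP
  have hne_one : S.relIndex P ≠ 1 := fun h ↦ hbS (Subgroup.relIndex_eq_one.mp h hb)
  have hne_two : S.relIndex P ≠ 2 := fun h ↦ hbcS <| by
    have hmem := Subgroup.mul_mem_iff_of_index_two h (a := ⟨b, hb⟩) (b := ⟨c, hc⟩)
    simpa [Subgroup.mem_subgroupOf, hbS, hcS] using hmem
  have hle : S.relIndex P ≤ 4 := Nat.le_of_dvd (by decide) ⟨_, hmul.symm⟩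
  rw [← Subgroup.index_eq_one]
  interval_cases S.relIndex P <;> lia

theorem isSquare_algebraMap_of_index_square_units_eq_four {M K : Type*} [Field M] [CommRing K]
    [Algebra M K] (hindex : (Subgroup.square Mˣ).index = 4) {b c : M} (hb : ¬ IsSquare b)
    (hc : ¬ IsSquare c) (hbc : ¬ IsSquare (b * c)) (hbK : IsSquare (algebraMap M K b))
    (hcK : IsSquare (algebraMap M K c)) (a : M) : IsSquare (algebraMap M K a) := by
  have isUnit_of_not_isSquare {x : M} (hx : ¬ IsSquare x) : IsUnit x :=
    isUnit_iff_ne_zero.mpr fun h ↦ hx (h ▸ .zero)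
  lift b to Mˣ using isUnit_of_not_isSquare hb
  lift c to Mˣ using isUnit_of_not_isSquare hc
  rcases eq_or_ne a 0 with rfl | ha
  · simp
  lift a to Mˣ using ha.isUnit
  let P : Subgroup Mˣ := (Subgroup.square Kˣ).comap (Units.map (algebraMap M K : M →* K))
  have mem_P (u : Mˣ) : u ∈ P ↔ IsSquare (algebraMap M K u) := isSquare_units_val_iff.symm
  rw [← Units.val_mul] at hbc
  rw [isSquare_units_val_iff] at hb hc hbc
  have hP : P = ⊤ := eq_top_of_index_eq_four hindex (fun _ hu ↦ IsSquare.map _ hu)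
    ((mem_P b).mpr hbK) ((mem_P c).mpr hcK) hb hc hbc
  exact (mem_P a).mp (hP ▸ Subgroup.mem_top a)

variable {G H : Type*} [CommGroup G] [CommGroup H]

theorem index_square_eq_of_surjective {f : G →* H} (hf : Function.Surjective f)
    (hsq : ∀ g, IsSquare (f g) → IsSquare g) :
    (Subgroup.square G).index = (Subgroup.square H).index := by
  have hcomap : Subgroup.square G = (Subgroup.square H).comap f :=
    le_antisymm (fun _ hg ↦ IsSquare.map f hg) hsq
  rw [hcomap, Subgroup.index_comap_of_surjective _ hf]

theorem index_square_congr (e : G ≃* H) :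
    (Subgroup.square G).index = (Subgroup.square H).index :=
  index_square_eq_of_surjective (f := e.toMonoidHom) e.surjective fun g hg ↦ by
    simpa using hg.map e.symm

theorem index_square_prod :
    (Subgroup.square (G × H)).index = (Subgroup.square G).index * (Subgroup.square H).index := by
  rw [← Subgroup.index_prod]
  congr 1
  ext ⟨g, h⟩
  exact ⟨fun hgh ↦ ⟨hgh.map (MonoidHom.fst G H), hgh.map (MonoidHom.snd G H)⟩,
    fun ⟨⟨a, ha⟩, ⟨b, hb⟩⟩ ↦ ⟨(a, b), Prod.ext ha hb⟩⟩

theorem index_square_multiplicative_int : (Subgroup.square (Multiplicative ℤ)).index = 2 := by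
  refine Subgroup.index_eq_two_iff.mpr ⟨.ofAdd 1, fun n ↦ ?_⟩
  obtain ⟨m, rfl⟩ := Multiplicative.ofAdd.surjective n
  simp only [Subgroup.mem_square, ← ofAdd_add, isSquare_ofAdd_iff]
  grind

theorem index_square_units_finiteField {k : Type*} [Field k] [Finite k] (hk : ringChar k ≠ 2) :
    (Subgroup.square kˣ).index = 2 := by
  classical
  have := Fintype.ofFinite k
  obtain ⟨a, ha⟩ := FiniteField.exists_nonsquare hk
  have ha0 : a ≠ 0 := by rintro rfl; simp at ha
  refine Subgroup.index_eq_two_iff.mpr ⟨.mk0 a ha0, fun b ↦ ?_⟩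
  simp only [Subgroup.mem_square, ← isSquare_units_val_iff, Units.val_mul, Units.val_mk0,
    ← quadraticChar_one_iff_isSquare (mul_ne_zero b.ne_zero ha0),
    ← quadraticChar_one_iff_isSquare b.ne_zero, map_mul,
    quadraticChar_neg_one_iff_not_isSquare.mpr ha]
  rcases quadraticChar_dichotomy b.ne_zero with h | h <;> simp [h]

end SquareClasses

section Henselian

variable {R : Type*} [CommRing R]

open Polynomial in
theorem isSquare_of_isSquare_residue [IsLocalRing R] [HenselianRing R (maximalIdeal R)]
    (h2 : IsUnit (2 : R)) {x : R} (hx : IsUnit x) (hsq : IsSquare (residue R x)) :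
    IsSquare x := by
  obtain ⟨t, ht⟩ := hsq
  obtain ⟨s, rfl⟩ := residue_surjective t
  have hs : IsUnit s := by
    rw [← residue_ne_zero_iff_isUnit] at hx ⊢
    exact left_ne_zero_of_mul (ht ▸ hx)
  have hroot : (X ^ 2 - C x).eval s ∈ maximalIdeal R := by
    rw [← residue_eq_zero_iff]
    simp [ht, sq]
  have hderiv : IsUnit (Ideal.Quotient.mk (maximalIdeal R) ((X ^ 2 - C x).derivative.eval s)) := by
    simpa [one_add_one_eq_two] using (h2.mul hs).map (Ideal.Quotient.mk (maximalIdeal R))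
  obtain ⟨r, hr, -⟩ :=
    HenselianRing.is_henselian _ (monic_X_pow_sub_C x two_ne_zero) s hroot hderiv
  exact ⟨r, by simpa [sub_eq_zero, sq, eq_comm] using hr⟩

theorem index_square_units_of_henselianRing [IsLocalRing R] [HenselianRing R (maximalIdeal R)]
    (h2 : IsUnit (2 : R)) :
    (Subgroup.square Rˣ).index = (Subgroup.square (ResidueField R)ˣ).index := by
  refine index_square_eq_of_surjective (f := Units.map (residue R).toMonoidHom)
    (IsLocalRing.surjective_units_map_of_local_ringHom _ residue_surjective inferInstance)
    fun u hu ↦ ?_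
  rw [← isSquare_units_val_iff] at hu ⊢
  exact isSquare_of_isSquare_residue h2 u.isUnit hu

theorem eq_zero_of_unit_mul_zpow_eq_one [IsDomain R] {K : Type*} [Field K] [Algebra R K]
    [IsFractionRing R K] {ϖ : R} (hϖ : Irreducible ϖ) {u : Rˣ} {n : ℤ}
    (h : algebraMap R K u * algebraMap R K ϖ ^ n = 1) : n = 0 := by
  have hinj := IsFractionRing.injective R K
  have hpow (m : ℕ) (hm : IsUnit (ϖ ^ m)) : m = 0 := by
    by_contra hm0
    exact hϖ.not_isUnit ((isUnit_pow_iff hm0).mp hm)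
  have hϖ0 : algebraMap R K ϖ ≠ 0 := by simpa using hϖ.ne_zero
  obtain ⟨m, rfl | rfl⟩ := n.eq_nat_or_neg
  · have huϖ : u * ϖ ^ m = 1 := hinj (by simpa using h)
    simpa using hpow m (.of_mul_eq_one_right _ huϖ)
  · rw [zpow_neg, zpow_natCast, mul_inv_eq_one₀ (pow_ne_zero m hϖ0), ← map_pow] at h
    simpa using hpow m (hinj h ▸ u.isUnit)

/-- The decomposition `Kˣ ≅ Rˣ × ℤ` of the units of the fraction field `K` of a discrete valuation
ring `R`, given by the choice of a uniformizer `ϖ`: the pair `(u, n)` corresponds to `u * ϖ ^ n`.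
The additive group `ℤ` is written multiplicatively. -/
noncomputable def unitsProdIntEquiv [IsDomain R] [IsDiscreteValuationRing R] (K : Type*) [Field K]
    [Algebra R K] [IsFractionRing R K] {ϖ : R} (hϖ : Irreducible ϖ) :
    Rˣ × Multiplicative ℤ ≃* Kˣ := by
  have hϖ0 : algebraMap R K ϖ ≠ 0 := by simpa using hϖ.ne_zero
  let f : Rˣ × Multiplicative ℤ →* Kˣ :=
    (Units.map (algebraMap R K : R →* K)).coprod (zpowersHom Kˣ (.mk0 _ hϖ0))
  have hf (u : Rˣ) (n : ℤ) :
      (f (u, .ofAdd n) : K) = algebraMap R K u * algebraMap R K ϖ ^ n := by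
    simp [f]
  refine MulEquiv.ofBijective f ⟨?_, fun x ↦ ?_⟩
  · refine (injective_iff_map_eq_one _).mpr fun ⟨u, n⟩ h ↦ ?_
    have huϖ : algebraMap R K u * algebraMap R K ϖ ^ n.toAdd = 1 := by
      rw [← hf, ofAdd_toAdd, h, Units.val_one]
    obtain rfl : n = 1 := eq_zero_of_unit_mul_zpow_eq_one hϖ huϖ
    have hu : (u : R) = 1 := IsFractionRing.injective R K (by simpa using huϖ)
    exact Prod.ext (Units.ext hu) rfl
  · obtain ⟨n, u, h⟩ :=
      IsDiscreteValuationRing.exists_units_eq_smul_zpow_of_irreducible hϖ x.ne_zero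
    exact ⟨(u, .ofAdd n), Units.ext (by rw [hf, h, Units.smul_def, Algebra.smul_def])⟩

theorem index_square_units_of_isFractionRing [IsDomain R] [IsDiscreteValuationRing R]
    [HenselianRing R (maximalIdeal R)] [Finite (ResidueField R)] (h2 : IsUnit (2 : R))
    (K : Type*) [Field K] [Algebra R K] [IsFractionRing R K] :
    (Subgroup.square Kˣ).index = 4 := by
  obtain ⟨ϖ, hϖ⟩ := IsDiscreteValuationRing.exists_irreducible R
  have hchar : ringChar (ResidueField R) ≠ 2 := fun h ↦
    (h2.map (residue R)).ne_zero <| by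
      rw [map_ofNat, ← Nat.cast_ofNat, ← h, ringChar.Nat.cast_ringChar]
  rw [← index_square_congr (unitsProdIntEquiv K hϖ), index_square_prod,
    index_square_units_of_henselianRing h2, index_square_units_finiteField hchar,
    index_square_multiplicative_int]

end Henselian

section LocalField

open Valued.integer

theorem isAdic_maximalIdeal_integer_s4 (L : Type*) [NontriviallyNormedField L] [IsUltrametricDist L]
    [IsDiscreteValuationRing 𝒪[L]] : IsAdic 𝓂[L] := by
  obtain ⟨ϖ, hϖ⟩ := IsDiscreteValuationRing.exists_irreducible 𝒪[L]
  refine isAdic_iff.mpr ⟨fun n ↦ ?_, fun s hs ↦ ?_⟩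
  · rw [hϖ.maximalIdeal_pow_eq_closedBall_pow]
    have hpos := norm_irreducible_pos hϖ
    exact IsUltrametricDist.isOpen_closedBall _ (pow_pos hpos n).ne'
  · obtain ⟨ε, hε, hεs⟩ := Metric.nhds_basis_closedBall.mem_iff.mp hs
    obtain ⟨n, hn⟩ := exists_pow_lt_of_lt_one hε (norm_irreducible_lt_one hϖ)
    refine ⟨n, ?_⟩
    rw [hϖ.maximalIdeal_pow_eq_closedBall_pow]
    exact (Metric.closedBall_subset_closedBall hn.le).trans hεs

theorem compactSpace_integer_s4 (L : Type*) [NontriviallyNormedField L] [IsUltrametricDist L]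
    [ProperSpace L] : CompactSpace 𝒪[L] := by
  have hball : (𝒪[L] : Set L) = Metric.closedBall 0 1 := by
    ext x
    simp [mem_iff]
  exact isCompact_iff_compactSpace.mp (hball ▸ isCompact_closedBall 0 1)

theorem index_square_units_of_properSpace (L : Type*) [NontriviallyNormedField L]
    [IsUltrametricDist L] [ProperSpace L] (h2 : ‖(2 : L)‖ = 1) :
    (Subgroup.square Lˣ).index = 4 := by
  let : (Valued.v : Valuation L NNReal).RankOne :=
    inferInstanceAs (NormedField.valuation (K := L)).RankOne
  obtain ⟨hcomplete, hdvr, hfinite⟩ :=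
    compactSpace_iff_completeSpace_and_isDiscreteValuationRing_and_finite_residueField.mp
      (compactSpace_integer_s4 L)
  have : IsAdicComplete 𝓂[L] 𝒪[L] :=
    (isAdic_maximalIdeal_integer_s4 L).isAdicComplete_iff.mpr ⟨hcomplete, inferInstance⟩
  exact index_square_units_of_isFractionRing (isUnit_iff_norm_eq_one.mpr h2) L

theorem index_square_units_of_finiteDimensional {k : Type*} [NontriviallyNormedField k]
    [IsUltrametricDist k] [ProperSpace k] (h2 : ‖(2 : k)‖ = 1) (L : Type*) [Field L] [Algebra k L]
    [FiniteDimensional k L] : (Subgroup.square Lˣ).index = 4 := by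
  let := spectralNorm.nontriviallyNormedField k L
  let : NormedAlgebra k L := spectralNorm.normedAlgebra k L
  have : IsUltrametricDist L :=
    IsUltrametricDist.isUltrametricDist_of_isNonarchimedean_norm isNonarchimedean_spectralNorm
  have : ProperSpace L := FiniteDimensional.proper k L
  exact index_square_units_of_properSpace L
    (by rw [← map_ofNat (algebraMap k L) 2, norm_algebraMap', h2])

theorem padic_norm_two {p : ℕ} [Fact p.Prime] (hp : 3 ≤ p) : ‖(2 : ℚ_[p])‖ = 1 := by
  rw [← Nat.cast_ofNat, Padic.norm_natCast_eq_one_iff]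
  exact (Nat.coprime_primes Fact.out Nat.prime_two).mpr (by lia)

end LocalField

theorem notMem_zpowers_of_mul_self_eq_one {G : Type*} [Group G] {s t : G} (hs : s * s = 1)
    (ht : t ≠ 1) (hts : t ≠ s) : t ∉ Subgroup.zpowers s := by
  rintro ⟨n, rfl⟩
  have hs2 : s ^ (2 : ℤ) = 1 := by rw [zpow_two, hs]
  obtain ⟨m, rfl | rfl⟩ := n.even_or_odd'
  · exact ht (by simp only [zpow_mul, hs2, one_zpow])
  · exact hts (by simp only [zpow_add, zpow_mul, hs2, one_zpow, one_mul, zpow_one])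

section Galois

variable {F K : Type*} [Field F] [Field K] [Algebra F K]

theorem exists_fixed_and_map_eq_neg [FiniteDimensional F K] {σ τ : Gal(K/F)}
    (hcomm : Commute σ τ) (hτ : τ * τ = 1) (hτσ : τ ∉ Subgroup.zpowers σ) :
    ∃ β : K, β ≠ 0 ∧ σ β = β ∧ τ β = -β := by
  rw [← fixingSubgroup_fixedField (Subgroup.zpowers σ), IntermediateField.mem_fixingSubgroup_iff]
    at hτσ
  push Not at hτσ
  obtain ⟨z, hz, hτz⟩ := hτσ
  have hσz : σ z = z := (mem_fixedField_iff _ z).mp hz σ (Subgroup.mem_zpowers σ)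
  have hττ : τ (τ z) = z := DFunLike.congr_fun hτ z
  have hστ : σ (τ z) = τ z := (DFunLike.congr_fun hcomm.eq z).trans (congrArg τ hσz)
  exact ⟨z - τ z, sub_ne_zero.mpr (Ne.symm hτz), by simp [hσz, hστ], by simp [hττ]⟩

theorem not_isSquare_of_map_eq_neg (h2 : (2 : K) ≠ 0) {M : IntermediateField F K} {σ : Gal(K/F)}
    (hσ : σ ∈ M.fixingSubgroup) {y : K} (hy : y ≠ 0) (hσy : σ y = -y) {x : M}
    (hx : (x : K) = y * y) : ¬ IsSquare x := by
  rintro ⟨r, hr⟩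
  have hyr : y * y = r * r := by rw [← hx, hr]; rfl
  have hyM : y ∈ M := by
    rcases mul_self_eq_mul_self_iff.mp hyr with rfl | rfl
    exacts [r.2, neg_mem r.2]
  have hfix : σ y = y := (IntermediateField.mem_fixingSubgroup_iff _ _).mp hσ y hyM
  grind

theorem mem_fixedField_closure_pair {σ τ : Gal(K/F)} {x : K} (hσ : σ x = x) (hτ : τ x = x) :
    x ∈ fixedField (Subgroup.closure {σ, τ}) := by
  have hle : Subgroup.closure {σ, τ} ≤ MulAction.stabilizer Gal(K/F) x := by
    simp [Subgroup.closure_le, Set.insert_subset_iff, hσ, hτ]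
  exact (mem_fixedField_iff _ x).mpr fun g hg ↦ hle hg

theorem isSquare_of_mem_fixedField_closure_pair [FiniteDimensional F K] (h2 : (2 : K) ≠ 0)
    {σ τ : Gal(K/F)} (hσ : σ * σ = 1) (hτ : τ * τ = 1) (hcomm : Commute σ τ) (hσ1 : σ ≠ 1)
    (hτ1 : τ ≠ 1) (hστ : σ ≠ τ)
    (hindex : (Subgroup.square (fixedField (Subgroup.closure {σ, τ}))ˣ).index = 4)
    {a : K} (ha : a ∈ fixedField (Subgroup.closure {σ, τ})) : IsSquare a := by
  set M := fixedField (Subgroup.closure {σ, τ})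
  have hfix : M.fixingSubgroup = Subgroup.closure {σ, τ} := fixingSubgroup_fixedField _
  have hσM : σ ∈ M.fixingSubgroup := hfix ▸ Subgroup.subset_closure (by simp)
  have hτM : τ ∈ M.fixingSubgroup := hfix ▸ Subgroup.subset_closure (by simp)
  obtain ⟨β, hβ0, hσβ, hτβ⟩ :=
    exists_fixed_and_map_eq_neg hcomm hτ (notMem_zpowers_of_mul_self_eq_one hσ hτ1 hστ.symm)
  obtain ⟨γ, hγ0, hτγ, hσγ⟩ :=
    exists_fixed_and_map_eq_neg hcomm.symm hσ (notMem_zpowers_of_mul_self_eq_one hτ hσ1 hστ)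
  let b : M := ⟨β * β, mem_fixedField_closure_pair (by simp [hσβ]) (by simp [hτβ])⟩
  let c : M := ⟨γ * γ, mem_fixedField_closure_pair (by simp [hσγ]) (by simp [hτγ])⟩
  have hb : ¬ IsSquare b := not_isSquare_of_map_eq_neg h2 hτM hβ0 hτβ rfl
  have hc : ¬ IsSquare c := not_isSquare_of_map_eq_neg h2 hσM hγ0 hσγ rfl
  have hbc : ¬ IsSquare (b * c) :=
    not_isSquare_of_map_eq_neg h2 hσM (mul_ne_zero hβ0 hγ0) (by simp [hσβ, hσγ])
      (mul_mul_mul_comm β β γ γ)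
  exact isSquare_algebraMap_of_index_square_units_eq_four hindex hb hc hbc ⟨β, rfl⟩ ⟨γ, rfl⟩
    ⟨a, ha⟩

theorem apply_eq_self_of_odd_orderOf {σ : Gal(K/F)} (hσ : Odd (orderOf σ)) {r : K}
    (hr : σ (r * r) = r * r) : σ r = r := by
  rw [map_mul] at hr
  refine (mul_self_eq_mul_self_iff.mp hr).elim id fun hneg ↦ ?_
  have hpow (n : ℕ) : (σ ^ n) r = (-1) ^ n * r := by
    induction n with
    | zero => simp
    | succ n ih => rw [pow_succ', AlgEquiv.mul_apply, ih]; simp [hneg, pow_succ]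
  have hr_neg : r = -r := by simpa [hσ.neg_one_pow, pow_orderOf_eq_one] using hpow (orderOf σ)
  rw [hneg, ← hr_neg]

theorem isSquare_of_isSquare_coe_fixedField {G : Type*} [Group G]
    (hG : Subgroup.closure {g : G | Odd (orderOf g)} = ⊤) (f : G →* Gal(K/F))
    {a : fixedField f.range} (ha : IsSquare (a : K)) : IsSquare a := by
  obtain ⟨r, hr⟩ := ha
  have hle : Subgroup.closure {g : G | Odd (orderOf g)} ≤
      (MulAction.stabilizer Gal(K/F) r).comap f := by
    refine (Subgroup.closure_le _).mpr fun g hg ↦ apply_eq_self_of_odd_orderOf ?_ ?_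
    · exact Odd.of_dvd_nat hg (orderOf_map_dvd f g)
    · rw [← hr]
      exact (mem_fixedField_iff _ _).mp a.2 _ ⟨g, rfl⟩
  have hrF : r ∈ fixedField f.range := by
    rw [mem_fixedField_iff]
    rintro _ ⟨g, rfl⟩
    exact hle (hG ▸ Subgroup.mem_top g)
  exact ⟨⟨r, hrF⟩, Subtype.ext hr⟩

theorem not_injective_of_index_square_units_eq_four [FiniteDimensional F K] (h2 : (2 : K) ≠ 0)
    (hindex : ∀ M : IntermediateField F K, (Subgroup.square Mˣ).index = 4)
    {G : Type*} [Group G] (hG : Subgroup.closure {g : G | Odd (orderOf g)} = ⊤) {s t : G}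
    (hs : s * s = 1) (ht : t * t = 1) (hst : Commute s t) (hs1 : s ≠ 1) (ht1 : t ≠ 1)
    (hne : s ≠ t) (f : G →* Gal(K/F)) : ¬ Function.Injective f := by
  intro hf
  have hle : fixedField f.range ≤ fixedField (Subgroup.closure {f s, f t}) :=
    fixedField_antitone ((Subgroup.closure_le _).mpr (by simp [Set.insert_subset_iff]))
  have hsquareK (a : fixedField f.range) : IsSquare (a : K) :=
    isSquare_of_mem_fixedField_closure_pair h2 (by simp [← map_mul, hs]) (by simp [← map_mul, ht])
      (hst.map f) ((map_ne_one_iff f hf).mpr hs1) ((map_ne_one_iff f hf).mpr ht1) (hf.ne hne)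
      (hindex _) (hle a.2)
  have htop : Subgroup.square (fixedField f.range)ˣ = ⊤ :=
    eq_top_iff.mpr fun u _ ↦ isSquare_units_val_iff.mp
      (isSquare_of_isSquare_coe_fixedField hG f (hsquareK u))
  have hfour := hindex (fixedField f.range)
  rw [htop, Subgroup.index_top] at hfour
  contradiction

end Galois

section AlternatingGroup

theorem closure_odd_orderOf_alternatingGroup (α : Type*) [Fintype α] [DecidableEq α] :
    Subgroup.closure {g : alternatingGroup α | Odd (orderOf g)} = ⊤ := by
  set T := Subgroup.closure {g : alternatingGroup α | Odd (orderOf g)}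
  have hle : alternatingGroup α ≤ T.map (alternatingGroup α).subtype := by
    refine Equiv.Perm.closure_three_cycles_eq_alternating.symm.le.trans
      ((Subgroup.closure_le _).mpr fun σ hσ ↦
        ⟨⟨σ, hσ.mem_alternatingGroup⟩, Subgroup.subset_closure ?_, rfl⟩)
    rw [Set.mem_ofPred_eq, Subgroup.orderOf_mk, hσ.orderOf]
    decide
  refine eq_top_iff.mpr fun g _ ↦ ?_
  obtain ⟨g', hg', h⟩ := hle g.2
  rwa [← Subtype.ext h]

variable {k : Type*} [NontriviallyNormedField k] [IsUltrametricDist k] [ProperSpace k]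

theorem not_injective_alternatingGroup_four_gal (h2 : ‖(2 : k)‖ = 1) (F K : Type*) [Field F]
    [Algebra k F] [FiniteDimensional k F] [Field K] [Algebra F K] [FiniteDimensional F K]
    (f : alternatingGroup (Fin 4) →* Gal(K/F)) : ¬ Function.Injective f := by
  let : Algebra k K := Algebra.compHom K (algebraMap k F)
  have : IsScalarTower k F K := .of_algebraMap_eq fun _ ↦ rfl
  have hindex (M : IntermediateField F K) : (Subgroup.square Mˣ).index = 4 :=
    have : FiniteDimensional k M := .trans k F M
    index_square_units_of_finiteDimensional h2 M
  have h2k : (2 : k) ≠ 0 := norm_ne_zero_iff.mp (h2 ▸ one_ne_zero)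
  have h2K : (2 : K) ≠ 0 := by
    rw [← map_ofNat (algebraMap k K) 2]
    exact (map_ne_zero _).mpr h2k
  obtain ⟨s, t, hs, ht, hst, hs1, ht1, hne⟩ : ∃ s t : alternatingGroup (Fin 4),
      s * s = 1 ∧ t * t = 1 ∧ s * t = t * s ∧ s ≠ 1 ∧ t ≠ 1 ∧ s ≠ t := by decide
  exact not_injective_of_index_square_units_eq_four h2K hindex
    (closure_odd_orderOf_alternatingGroup _) hs ht hst hs1 ht1 hne f

theorem stmt4_general (h2 : ‖(2 : k)‖ = 1) (F : Type*) [Field F] [Algebra k F]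
    [FiniteDimensional k F] {G : Type*} [Group G] (i : alternatingGroup (Fin 4) →* G)
    (hi : Function.Injective i) : nu F G = 0 := by
  refine Nat.card_eq_zero.mpr (.inl ⟨?_⟩)
  rintro ⟨K, hfinite, -, ⟨e⟩⟩
  exact not_injective_alternatingGroup_four_gal h2 F K (e.symm.toMonoidHom.comp i)
    (e.symm.injective.comp hi)

end AlternatingGroup

theorem stmt4 (p : ℕ) [Fact p.Prime] (hp : 3 ≤ p)
    (F : Type*) [Field F] [Algebra ℚ_[p] F] [FiniteDimensional ℚ_[p] F] :
    nu F (Equiv.Perm (Fin 4)) = 0 ∧ nu F (alternatingGroup (Fin 4)) = 0 :=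
  ⟨stmt4_general (padic_norm_two hp) F (alternatingGroup (Fin 4)).subtype Subtype.val_injective,
    stmt4_general (padic_norm_two hp) F (.id _) Function.injective_id⟩
end
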